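/- There exists a universal constant c such that for every real r ≥ 1 and every n-node simple bidirected plane graph G in which every face contains at most three nodes, G admits a division into at most c·(n/r + 1) pieces such that each piece has at most c·r nodes, at most c·√r boundary nodes, and at most c holes. -/

import Mathlib

open scoped ENNReal

/-- A simple directed graph on node type `V`, with nonnegative (extended-real)
edge weights: there are no self-loops, and between any ordered pair of nodes
there is at most one edge (so no parallel edges). -/
structure WDigraph (V : Type) where
  Edge : V → V → Prop
  w : V → V → ℝ≥0∞
  irrefl : ∀ v, ¬ Edge v v

namespace WDigraph

variable {V : Type}

/-- The consecutive steps (directed edges) of a walk given as its list of nodes. -/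
def steps (l : List V) : List (V × V) := l.zip l.tail

/-- `l` is a walk of `G` (nodes may repeat). -/
def IsWalk (G : WDigraph V) (l : List V) : Prop := l ≠ [] ∧ l.Chain' G.Edge

/-- `l` is an `s`-`t`-path of `G` (nodes may repeat). -/
def IsPath (G : WDigraph V) (s t : V) (l : List V) : Prop :=
  G.IsWalk l ∧ l.head? = some s ∧ l.getLast? = some t

/-- The weight of a walk: the sum of the weights of its edges. -/
noncomputable def wWalk (G : WDigraph V) (l : List V) : ℝ≥0∞ :=
  ((steps l).map fun e => G.w e.1 e.2).sum

/-- A cycle of `G` is an `s`-`s`-path for some node `s`. -/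
def IsCycle (G : WDigraph V) (l : List V) : Prop := ∃ s, G.IsPath s s l

/-- The walk `l` traverses the directed edge `(s,t)`. -/
def Traverses (l : List V) (s t : V) : Prop := (s, t) ∈ steps l

/-- A cycle is degenerate if it is a single node or traverses both `st` and `ts`. -/
def Degenerate (l : List V) : Prop :=
  l.length = 1 ∨ ∃ s t, Traverses l s t ∧ Traverses l t s

/-- A simple cycle passes each node at most once. -/
def IsSimpleCycle (G : WDigraph V) (l : List V) : Prop :=
  G.IsCycle l ∧ l.dropLast.Nodup

/-- `G` is bidirected: `st` is an edge iff `ts` is an edge. -/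
def Bidirected (G : WDigraph V) : Prop := ∀ u v, G.Edge u v → G.Edge v u

/-- `d_G(u,v)`: the minimum weight of a `u`-`v`-path, `∞` if there is none. -/
noncomputable def dist (G : WDigraph V) (s t : V) : ℝ≥0∞ :=
  sInf {x | ∃ l, G.IsPath s t l ∧ G.wWalk l = x}

end WDigraph

/-- A plane embedding of the (bidirected) graph with adjacency `A` on node
type `V`: nodes are drawn as distinct points, each bundled pair of oppositely
directed edges is drawn as a single simple arc joining its endpoints, and two
arcs meet only at common endpoints and avoid all other nodes. -/
structure PlaneEmbedding {V : Type} (A : V → V → Prop) where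
  pos : V → ℝ × ℝ
  arc : V → V → ℝ → ℝ × ℝ
  pos_inj : Function.Injective pos
  arc_cont : ∀ u v, A u v → ContinuousOn (arc u v) (Set.Icc 0 1)
  arc_start : ∀ u v, A u v → arc u v 0 = pos u
  arc_end : ∀ u v, A u v → arc u v 1 = pos v
  arc_inj : ∀ u v, A u v → Set.InjOn (arc u v) (Set.Icc 0 1)
  arc_symm : ∀ u v, A u v → ∀ t, arc v u t = arc u v (1 - t)
  arc_avoid : ∀ u v, A u v → ∀ x : V, pos x ∈ arc u v '' Set.Icc 0 1 → x = u ∨ x = v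
  arc_meet : ∀ u v x y, A u v → A x y → ({u, v} : Set V) ≠ {x, y} →
    arc u v '' Set.Icc 0 1 ∩ arc x y '' Set.Icc 0 1 ⊆ ({pos u, pos v} : Set (ℝ × ℝ)) ∩ {pos x, pos y}

/-- The drawing (point set in the plane) of a set of directed edges. -/
def PlaneEmbedding.drawing {V : Type} {A : V → V → Prop} (emb : PlaneEmbedding A)
    (E : Set (V × V)) : Set (ℝ × ℝ) :=
  ⋃ e ∈ E, emb.arc e.1 e.2 '' Set.Icc 0 1

/-- The drawing of the whole graph. -/
def PlaneEmbedding.fullDrawing {V : Type} {A : V → V → Prop} (emb : PlaneEmbedding A) :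
    Set (ℝ × ℝ) :=
  emb.drawing {e | A e.1 e.2}

/-- A face of the embedded graph: a connected component of the complement of
the drawing. -/
def PlaneEmbedding.IsFace {V : Type} {A : V → V → Prop} (emb : PlaneEmbedding A)
    (F : Set (ℝ × ℝ)) : Prop :=
  ∃ x, x ∉ emb.fullDrawing ∧ F = connectedComponentIn (emb.fullDrawing)ᶜ x

variable {V : Type}

/-- The nodes of a piece (a set of directed edges). -/
def nodesOf [DecidableEq V] (p : Finset (V × V)) : Finset V :=
  p.image Prod.fst ∪ p.image Prod.snd

/-- The boundary nodes of the piece `p` of the division `P`: nodes of `p`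
belonging to at least one other piece. -/
def boundaryOf [DecidableEq V] (P : Finset (Finset (V × V))) (p : Finset (V × V)) :
    Finset V :=
  (nodesOf p).filter fun v => ∃ q ∈ P, q ≠ p ∧ v ∈ nodesOf q

/-- The faces of the drawing of an edge set `E`: connected components of the
complement of its drawing. -/
def facesOfEdges {A : V → V → Prop} (emb : PlaneEmbedding A) (E : Set (V × V)) :
    Set (Set (ℝ × ℝ)) :=
  {F | ∃ x, x ∉ emb.drawing E ∧ F = connectedComponentIn (emb.drawing E)ᶜ x}

/-- The holes of a piece `p`: faces of the piece that are not faces of the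
whole graph. -/
def holesOf {A : V → V → Prop} (emb : PlaneEmbedding A) (p : Finset (V × V)) :
    Set (Set (ℝ × ℝ)) :=
  facesOfEdges emb (↑p : Set (V × V)) \ facesOfEdges emb {e | A e.1 e.2}

/-!
Whether a compact set separates two points of the plane is decided by a continuous logarithm of
`(z - a) / (z - b)`. This yields the only two facts about plane drawings that are needed: an edge
closes a cycle with an edge set `A` exactly if its two sides are separated by `A` together with
that edge, and the dual graph is connected. So trees and dual trees are complementary.

In a triangulation, contracting the edges inside a sparse residue class modulo `k` of breadth-first
levels separates the graph into bands of `k` levels. The edges outside a breadth-first tree of the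
contracted graph form a dual forest, which extends to a spanning dual tree whose fundamental cuts
have length `O(k)`. Since the dual graph has maximum degree three, for `k ≈ √m` one of these cuts
splits a weighted region of `m` faces in a balanced way, with `O(√m)` boundary edges and both parts
connected in the dual. A region is first split by the number of its faces down to size `k²` with
`k ≈ √r`, and then by its boundary edges and holes, a hole counting as `k` edges, until both of
these are bounded too. Potential functions in `√m / k` bound the number of regions. Each edge is
assigned to the region on its left side.
-/

/-! ### Continuous logarithms -/

section ContinuousLog

open Complex Set Metric

variable {X : Type*} [TopologicalSpace X] {S T : Set X} {f f₁ f₂ : X → ℂ}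

/-- `f` has a continuous logarithm on `S`. Logarithms detect components of plane sets: two points
`x`, `y` off a compact `K ⊆ ℂ` lie in the same component of `Kᶜ` exactly when
`(z - y) / (z - x)` has a continuous logarithm on `K`. -/
def HasLogOn (f : X → ℂ) (S : Set X) : Prop :=
  ∃ g : X → ℂ, ContinuousOn g S ∧ ∀ z ∈ S, exp (g z) = f z

namespace HasLogOn

theorem mono (h : HasLogOn f T) (hST : S ⊆ T) : HasLogOn f S :=
  let ⟨g, hg, hgf⟩ := h
  ⟨g, hg.mono hST, fun z hz => hgf z (hST hz)⟩

theorem congr (h : HasLogOn f₁ S) (hf : ∀ z ∈ S, f₁ z = f₂ z) : HasLogOn f₂ S :=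
  let ⟨g, hg, hgf⟩ := h
  ⟨g, hg, fun z hz => (hgf z hz).trans (hf z hz)⟩

theorem mul (h₁ : HasLogOn f₁ S) (h₂ : HasLogOn f₂ S) : HasLogOn (fun z => f₁ z * f₂ z) S := by
  obtain ⟨g₁, hg₁, hgf₁⟩ := h₁
  obtain ⟨g₂, hg₂, hgf₂⟩ := h₂
  exact ⟨fun z => g₁ z + g₂ z, hg₁.add hg₂, fun z hz => by rw [exp_add, hgf₁ z hz, hgf₂ z hz]⟩

theorem inv (h : HasLogOn f S) : HasLogOn (fun z => (f z)⁻¹) S := by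
  obtain ⟨g, hg, hgf⟩ := h
  exact ⟨fun z => -g z, hg.neg, fun z hz => by rw [exp_neg, hgf z hz]⟩

end HasLogOn

theorem hasLogOn_const {c : ℂ} (hc : c ≠ 0) (S : Set X) : HasLogOn (fun _ => c) S :=
  ⟨fun _ => log c, continuousOn_const, fun _ _ => exp_log hc⟩

theorem exists_continuous_exp_eq_of_homotopy {H : unitInterval × X → ℂ} (hH : Continuous H)
    (hH₀ : ∀ p, H p ≠ 0) {g₀ : X → ℂ} (hg₀ : Continuous g₀) (hgH : ∀ x, exp (g₀ x) = H (0, x)) :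
    ∃ g : X → ℂ, Continuous g ∧ ∀ x, exp (g x) = H (1, x) := by
  let H' : C(unitInterval × X, {z : ℂ // z ≠ 0}) := ⟨fun p => ⟨H p, hH₀ p⟩, by fun_prop⟩
  have hgH' : ∀ x, H' (0, x) = ⟨exp ((⟨g₀, hg₀⟩ : C(X, ℂ)) x), exp_ne_zero _⟩ :=
    fun x => Subtype.ext (hgH x).symm
  exact ⟨fun x => isCoveringMap_exp.liftHomotopy H' ⟨g₀, hg₀⟩ hgH' (1, x), by fun_prop, fun x =>
    congrArg Subtype.val (congrFun (isCoveringMap_exp.liftHomotopy_lifts H' ⟨g₀, hg₀⟩ hgH') (1, x))⟩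

theorem hasLogOn_univ_of_ne_zero {E : Type*} [TopologicalSpace E] [AddCommGroup E] [Module ℝ E]
    [ContinuousSMul ℝ E] {f : E → ℂ} (hf : Continuous f) (hf₀ : ∀ z, f z ≠ 0) :
    HasLogOn f univ := by
  obtain ⟨g, hg, hgf⟩ := exists_continuous_exp_eq_of_homotopy
    (H := fun p : unitInterval × E => f ((p.1 : ℝ) • p.2)) (by fun_prop) (fun p => hf₀ _)
    (g₀ := fun _ => log (f 0)) (by fun_prop) (fun x => by simp [exp_log (hf₀ 0)])
  exact ⟨g, hg.continuousOn, fun z _ => by simpa using hgf z⟩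

theorem sub_eq_sub_of_exp_eq_exp {g₁ g₂ : X → ℂ} (hS : IsPreconnected S)
    (hg₁ : ContinuousOn g₁ S) (hg₂ : ContinuousOn g₂ S) (h : ∀ z ∈ S, exp (g₁ z) = exp (g₂ z))
    {x y : X} (hx : x ∈ S) (hy : y ∈ S) : g₁ x - g₂ x = g₁ y - g₂ y := by
  have hlift : g₁ y = g₂ y + (g₁ x - g₂ x) := by
    refine isCoveringMap_exp.eqOn_of_comp_eqOn hS hg₁ (g₂ := fun y => g₂ y + (g₁ x - g₂ x))
      (hg₂.add continuousOn_const) (fun z hz => Subtype.ext ?_) hx (by simp) hy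
    simp [exp_add, exp_sub, h z hz, h x hx]
  linear_combination -hlift

theorem hasLogOn_union {g h : X → ℂ} {c : ℂ}
    (hglue : ∀ k : X → ℂ, ContinuousOn k S → ContinuousOn k T → ContinuousOn k (S ∪ T))
    (hg : ContinuousOn g S) (hgf : ∀ z ∈ S, exp (g z) = f z)
    (hh : ContinuousOn h T) (hhf : ∀ z ∈ T, exp (h z) = f z)
    (hc : ∀ z ∈ S ∩ T, h z - g z = c) : HasLogOn f (S ∪ T) := by
  classical
  rcases (S ∩ T).eq_empty_or_nonempty with hST | ⟨p, hpS, hpT⟩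
  · have hT : EqOn (S.piecewise g h) h T :=
      fun z hz => piecewise_eq_of_notMem _ _ _ fun hzS => (hST ▸ ⟨hzS, hz⟩ : z ∈ (∅ : Set X))
    refine ⟨S.piecewise g h, hglue _ (hg.congr (piecewise_eqOn _ _ _)) (hh.congr hT), ?_⟩
    rintro z (hz | hz)
    · rw [piecewise_eq_of_mem _ _ _ hz, hgf z hz]
    · rw [hT hz, hhf z hz]
  have hexp : exp c = 1 := by
    rw [← hc p ⟨hpS, hpT⟩, exp_sub, hgf p hpS, hhf p hpT, ← hgf p hpS, div_self (exp_ne_zero _)]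
  have hT : EqOn (S.piecewise g (h · - c)) (h · - c) T := by
    intro z hz
    by_cases hzS : z ∈ S
    · rw [piecewise_eq_of_mem _ _ _ hzS, ← hc z ⟨hzS, hz⟩]
      ring
    · exact piecewise_eq_of_notMem _ _ _ hzS
  refine ⟨S.piecewise g (h · - c), hglue _ (hg.congr (piecewise_eqOn _ _ _))
    ((hh.sub continuousOn_const).congr hT), ?_⟩
  rintro z (hz | hz)
  · rw [piecewise_eq_of_mem _ _ _ hz, hgf z hz]
  · rw [hT hz, exp_sub, hexp, div_one, hhf z hz]

theorem HasLogOn.union_of_inter_subset_singleton (hS : IsClosed S) (hT : IsClosed T)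
    (hfS : HasLogOn f S) (hfT : HasLogOn f T) {p : X} (hp : S ∩ T ⊆ {p}) :
    HasLogOn f (S ∪ T) := by
  obtain ⟨g, hg, hgf⟩ := hfS
  obtain ⟨h, hh, hhf⟩ := hfT
  exact hasLogOn_union (c := h p - g p) (fun k hkS hkT => hkS.union_of_isClosed hkT hS hT)
    hg hgf hh hhf fun z hz => by rw [hp hz]

/-- The obstruction to gluing across two contact points is a single integer per function, so two
functions admit a nontrivial combination for which it vanishes. -/
theorem exists_hasLogOn_union_zpow_mul_zpow (hS : IsClosed S) (hT : IsClosed T)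
    (hfS₁ : HasLogOn f₁ S) (hfT₁ : HasLogOn f₁ T) (hfS₂ : HasLogOn f₂ S) (hfT₂ : HasLogOn f₂ T)
    {u v : X} (huv : S ∩ T ⊆ {u, v}) :
    ∃ m₁ m₂ : ℤ, (m₁ ≠ 0 ∨ m₂ ≠ 0) ∧ HasLogOn (fun z => f₁ z ^ m₁ * f₂ z ^ m₂) (S ∪ T) := by
  obtain ⟨g₁, hg₁, hgf₁⟩ := hfS₁
  obtain ⟨g₂, hg₂, hgf₂⟩ := hfS₂
  obtain ⟨k₁, hk₁, hkf₁⟩ := hfT₁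
  obtain ⟨k₂, hk₂, hkf₂⟩ := hfT₂
  have hjump : ∀ z, ∃ N : ℤ × ℤ, z ∈ S ∩ T → k₁ z = g₁ z + N.1 * (2 * Real.pi * I) ∧
      k₂ z = g₂ z + N.2 * (2 * Real.pi * I) := by
    intro z
    by_cases hz : z ∈ S ∩ T
    · obtain ⟨a, ha⟩ := exp_eq_exp_iff_exists_int.1 ((hkf₁ z hz.2).trans (hgf₁ z hz.1).symm)
      obtain ⟨b, hb⟩ := exp_eq_exp_iff_exists_int.1 ((hkf₂ z hz.2).trans (hgf₂ z hz.1).symm)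
      exact ⟨(a, b), fun _ => ⟨ha, hb⟩⟩
    · exact ⟨0, fun h => (hz h).elim⟩
  choose N hN using hjump
  obtain ⟨m₁, m₂, hm, hNuv⟩ : ∃ m₁ m₂ : ℤ, (m₁ ≠ 0 ∨ m₂ ≠ 0) ∧
      m₁ * (N u).1 + m₂ * (N u).2 = m₁ * (N v).1 + m₂ * (N v).2 := by
    by_cases h : (N u).1 = (N v).1
    · exact ⟨1, 0, by simp, by simp [h]⟩
    · exact ⟨(N u).2 - (N v).2, (N v).1 - (N u).1, Or.inr fun h' => h (by omega), by ring⟩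
  refine ⟨m₁, m₂, hm, hasLogOn_union (g := fun z => m₁ * g₁ z + m₂ * g₂ z)
    (h := fun z => m₁ * k₁ z + m₂ * k₂ z)
    (c := ((m₁ * (N u).1 + m₂ * (N u).2 : ℤ) : ℂ) * (2 * Real.pi * I))
    (fun k hkS hkT => hkS.union_of_isClosed hkT hS hT) (by fun_prop) (fun z hz => ?_) (by fun_prop)
    (fun z hz => ?_) fun z hz => ?_⟩
  · rw [exp_add, exp_int_mul, exp_int_mul, hgf₁ z hz, hgf₂ z hz]
  · rw [exp_add, exp_int_mul, exp_int_mul, hkf₁ z hz, hkf₂ z hz]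
  · have hNz : m₁ * (N u).1 + m₂ * (N u).2 = m₁ * (N z).1 + m₂ * (N z).2 := by
      rcases huv hz with rfl | rfl
      exacts [rfl, hNuv]
    rw [hNz, (hN z hz).1, (hN z hz).2]
    push_cast
    ring

theorem hasLogOn_of_domRestrict {g : S → ℂ} (hg : Continuous g)
    (hgf : ∀ z : S, exp (g z) = f z) : HasLogOn f S := by
  classical
  refine ⟨fun z => if hz : z ∈ S then g ⟨z, hz⟩ else 0, ?_, fun z hz => ?_⟩
  · rw [continuousOn_iff_continuous_domRestrict]
    refine hg.congr fun z => ?_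
    simp
  · simp only [dif_pos hz, hgf]

/-- Slide `y` back to `x` along the path: the quotient stays nonzero and becomes constant. -/
theorem HasLogOn.of_joinedIn_compl {K : Set ℂ} {x y : ℂ} (h : JoinedIn Kᶜ x y) :
    HasLogOn (fun z => (z - y) / (z - x)) K := by
  obtain ⟨γ, hγK⟩ := h
  have hγ : ∀ (z : K) (t : unitInterval), (z : ℂ) - γ t ≠ 0 :=
    fun z t => sub_ne_zero.2 fun hz => hγK t (hz ▸ z.2)
  have hx : ∀ z : K, (z : ℂ) - x ≠ 0 := fun z => by simpa using hγ z 0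
  obtain ⟨g, hg, hgH⟩ := exists_continuous_exp_eq_of_homotopy
    (H := fun p : unitInterval × K => ((p.2 : ℂ) - γ p.1) / ((p.2 : ℂ) - x))
    (Continuous.div (by fun_prop) (by fun_prop) fun p => hx p.2)
    (fun p => div_ne_zero (hγ _ _) (hx _)) (continuous_const (y := 0))
    (fun z => by simp [div_self (hx z)])
  exact hasLogOn_of_domRestrict hg fun z => by simpa using hgH z

theorem eq_zero_of_hasLogOn_sphere {u : ℂ} {ρ : ℝ} (hρ : 0 < ρ) {n : ℤ}
    (h : HasLogOn (fun z => (z - u) ^ n) (sphere u ρ)) : n = 0 := by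
  obtain ⟨g, hg, hgf⟩ := h
  have hmem := fun θ => circleMap_mem_sphere u hρ.le θ
  have hconst := sub_eq_sub_of_exp_eq_exp (g₁ := fun θ => g (circleMap u ρ θ))
    (g₂ := fun θ : ℝ => log ((ρ : ℂ) ^ n) + n * (θ * I)) isPreconnected_univ
    (hg.comp (continuous_circleMap u ρ).continuousOn fun θ _ => hmem θ) (by fun_prop)
    (fun θ _ => by
      simp only [hgf _ (hmem θ)]
      rw [circleMap_sub_center, circleMap_zero, mul_zpow, exp_add, exp_int_mul,
        exp_log (zpow_ne_zero _ (by exact_mod_cast hρ.ne'))])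
    (mem_univ 0) (mem_univ (2 * Real.pi))
  have hperiod : circleMap u ρ (2 * Real.pi) = circleMap u ρ 0 := by simp [circleMap]
  have hturns : (n : ℂ) * (2 * Real.pi * I) = 0 := by
    simp only [hperiod] at hconst
    push_cast at hconst
    linear_combination hconst
  simpa [two_pi_I_ne_zero] using hturns

theorem not_hasLogOn_sphere_sub_div_sub {a b : ℂ} {ρ : ℝ} (hρ : 0 < ρ) (hρb : ρ < dist a b) :
    ¬ HasLogOn (fun z => (z - b) / (z - a)) (sphere a ρ) := by
  intro hlog
  have hab : a - b ≠ 0 := sub_ne_zero.2 (dist_pos.1 (hρ.trans hρb))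
  have hslit : ∀ z ∈ sphere a ρ, (z - b) / (a - b) ∈ slitPlane := by
    intro z hz
    have hz' : (z - b) / (a - b) = 1 + (z - a) / (a - b) := by field_simp; ring
    rw [hz']
    refine mem_slitPlane_of_norm_lt_one ?_
    rwa [norm_div, ← dist_eq z, mem_sphere.1 hz, div_lt_one (norm_pos_iff.2 hab), ← dist_eq]
  have hnum : HasLogOn (fun z => (z - b) / (a - b)) (sphere a ρ) :=
    ⟨fun z => log ((z - b) / (a - b)), ContinuousOn.clog (by fun_prop) hslit,
      fun z hz => exp_log (slitPlane_ne_zero (hslit z hz))⟩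
  have hden : HasLogOn (fun z => (z - a) ^ (1 : ℤ)) (sphere a ρ) := by
    refine ((hlog.inv.mul hnum).mul (hasLogOn_const hab _)).congr fun z hz => ?_
    have hzb : z - b ≠ 0 := fun h => slitPlane_ne_zero (hslit z hz) (by simp [h])
    rw [zpow_one, inv_div]
    field_simp
  exact one_ne_zero (eq_zero_of_hasLogOn_sphere hρ hden)

end ContinuousLog

/-! ### Separation of the plane by compact sets -/

section Separation

open Complex Set Metric Bornology

theorem isClosed_pathComponentIn_compl_union {K : Set ℂ} (hK : IsClosed K) (a : ℂ) :
    IsClosed (pathComponentIn Kᶜ a ∪ K) := by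
  rw [← isOpen_compl_iff, isOpen_iff_mem_nhds]
  intro y hy
  have hyK : y ∈ Kᶜ := fun h => hy (Or.inr h)
  filter_upwards [(hK.isOpen_compl.pathComponentIn y).mem_nhds (JoinedIn.refl hyK)] with z hz h
  rcases h with h | h
  · exact hy (Or.inl (JoinedIn.trans h hz.symm))
  · exact hz.mem.2 h

theorem exists_continuous_ne_zero_eqOn_zpow {K : Set ℂ} (hK : IsClosed K) {a : ℂ} (ha : a ∉ K)
    {q : ℂ → ℂ} (hq : ContinuousOn q (pathComponentIn Kᶜ a ∪ K))
    (hq₀ : ∀ z ∈ pathComponentIn Kᶜ a ∪ K, q z ≠ 0) {n : ℤ}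
    (h : HasLogOn (fun z => (z - a) ^ n * q z) K) :
    ∃ F : ℂ → ℂ, Continuous F ∧ (∀ z, F z ≠ 0) ∧
      EqOn F (fun z => (z - a) ^ n) (pathComponentIn Kᶜ a)ᶜ := by
  classical
  obtain ⟨g, hg, hgf⟩ := h
  set U := pathComponentIn Kᶜ a
  have haU : a ∈ U := JoinedIn.refl ha
  obtain ⟨G, hG⟩ := ContinuousMap.exists_restrict_eq hK
    ⟨K.domRestrict g, continuousOn_iff_continuous_domRestrict.1 hg⟩
  have hGg : ∀ z ∈ K, G z = g z := fun z hz => congrArg (fun f => f ⟨z, hz⟩) hG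
  let F : ℂ → ℂ := U.piecewise (fun z => exp (G z) / q z) fun z => (z - a) ^ n
  have hFU : EqOn F (fun z => exp (G z) / q z) (U ∪ K) := by
    intro z hz
    by_cases hzU : z ∈ U
    · exact piecewise_eq_of_mem _ _ _ hzU
    · have hzK : z ∈ K := hz.resolve_left hzU
      simp only [F, piecewise_eq_of_notMem _ _ _ hzU, hGg z hzK, hgf z hzK]
      rw [mul_div_cancel_right₀ _ (hq₀ z hz)]
  have hFUc : EqOn F (fun z => (z - a) ^ n) Uᶜ := fun z hz => piecewise_eq_of_notMem _ _ _ hz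
  have hne : ∀ z ∈ Uᶜ, z - a ≠ 0 := fun z hz => sub_ne_zero.2 fun h => hz (h ▸ haU)
  refine ⟨F, ?_, fun z => ?_, hFUc⟩
  · have hcover : (U ∪ K) ∪ Uᶜ = univ :=
      eq_univ_of_subset (union_subset_union_left _ subset_union_left) (union_compl_self U)
    rw [← continuousOn_univ, ← hcover]
    refine ContinuousOn.union_of_isClosed (ContinuousOn.congr ?_ hFU) (ContinuousOn.congr ?_ hFUc)
      (isClosed_pathComponentIn_compl_union hK a) (hK.isOpen_compl.pathComponentIn a).isClosed_compl
    · exact (by fun_prop : Continuous fun z => exp (G z)).continuousOn.div hq hq₀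
    · exact ContinuousOn.zpow₀ (by fun_prop) n fun z hz => Or.inl (hne z hz)
  · by_cases hz : z ∈ U
    · rw [hFU (Or.inl hz)]
      exact div_ne_zero (exp_ne_zero _) (hq₀ z (Or.inl hz))
    · rw [hFUc hz]
      exact zpow_ne_zero _ (hne z hz)

theorem eq_zero_of_hasLogOn_zpow_mul {K : Set ℂ} (hK : IsClosed K) {a : ℂ} (ha : a ∉ K)
    (hbdd : IsBounded (pathComponentIn Kᶜ a)) {q : ℂ → ℂ}
    (hq : ContinuousOn q (pathComponentIn Kᶜ a ∪ K))
    (hq₀ : ∀ z ∈ pathComponentIn Kᶜ a ∪ K, q z ≠ 0) {n : ℤ}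
    (h : HasLogOn (fun z => (z - a) ^ n * q z) K) : n = 0 := by
  obtain ⟨F, hF, hF₀, hFa⟩ := exists_continuous_ne_zero_eqOn_zpow hK ha hq hq₀ h
  obtain ⟨R, hR, hUR⟩ := hbdd.subset_ball_lt 0 a
  refine eq_zero_of_hasLogOn_sphere hR (((hasLogOn_univ_of_ne_zero hF hF₀).mono
    (subset_univ _)).congr fun z hz => hFa fun hzU => ?_)
  exact (mem_ball.1 (hUR hzU)).ne (mem_sphere.1 hz)

theorem eq_zero_of_hasLogOn_prod_zpow {ι : Type*} [Fintype ι] {K : Set ℂ} (hK : IsClosed K)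
    {x : ι → ℂ} (hx : ∀ i, x i ∉ K) {n : ι → ℤ} (h : HasLogOn (fun z => ∏ i, (z - x i) ^ n i) K)
    {i : ι} (hi : ∀ j ≠ i, ¬ JoinedIn Kᶜ (x i) (x j))
    (hbdd : IsBounded (pathComponentIn Kᶜ (x i))) : n i = 0 := by
  classical
  have hne : ∀ j ∈ Finset.univ.erase i, ∀ z ∈ pathComponentIn Kᶜ (x i) ∪ K, z - x j ≠ 0 := by
    rintro j hj z hz hzj
    obtain rfl := sub_eq_zero.1 hzj
    exact hz.elim (hi j (Finset.ne_of_mem_erase hj)) (hx j)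
  refine eq_zero_of_hasLogOn_zpow_mul hK (hx i) hbdd
    (q := fun z => ∏ j ∈ Finset.univ.erase i, (z - x j) ^ n j) ?_ ?_ (h.congr fun z _ =>
      (Finset.mul_prod_erase _ (fun j => (z - x j) ^ n j) (Finset.mem_univ i)).symm)
  · exact continuousOn_finsetProd _ fun j hj =>
      ContinuousOn.zpow₀ (by fun_prop) _ fun z hz => Or.inl (hne j hj z hz)
  · exact fun z hz => Finset.prod_ne_zero_iff.2 fun j hj => zpow_ne_zero _ (hne j hj z hz)

theorem isPathConnected_compl_closedBall_zero {R : ℝ} (hR : 0 < R) :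
    IsPathConnected (closedBall (0 : ℂ) R)ᶜ := by
  have himage : exp '' {w | Real.log R < w.re} = (closedBall (0 : ℂ) R)ᶜ := by
    ext z
    constructor
    · rintro ⟨w, hw, rfl⟩
      simpa [norm_exp] using (Real.log_lt_iff_lt_exp hR).1 hw
    · intro hz
      have hRz : R < ‖z‖ := by simpa using hz
      exact ⟨log z, by simpa [log_re] using Real.log_lt_log hR hRz,
        exp_log (norm_pos_iff.1 (hR.trans hRz))⟩
  rw [← himage]
  exact ((convex_halfSpace_re_gt _).isPathConnected
    ⟨((Real.log R + 1 : ℝ) : ℂ), by simp⟩).image continuous_exp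

theorem isBounded_pathComponentIn_or {K : Set ℂ} (hK : IsBounded K) {x y : ℂ}
    (h : ¬ JoinedIn Kᶜ x y) :
    IsBounded (pathComponentIn Kᶜ x) ∨ IsBounded (pathComponentIn Kᶜ y) := by
  obtain ⟨R, hR, hKR⟩ := hK.subset_closedBall_lt 0 0
  have hfar : ∀ S : Set ℂ, ¬ IsBounded S → ∃ z ∈ S, z ∈ (closedBall (0 : ℂ) R)ᶜ :=
    fun S hS => not_subset.1 fun hsub => hS (isBounded_closedBall.subset hsub)
  by_contra! hunbdd
  obtain ⟨x', hxx', hx'⟩ := hfar _ hunbdd.1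
  obtain ⟨y', hyy', hy'⟩ := hfar _ hunbdd.2
  exact h ((hxx'.trans (((isPathConnected_compl_closedBall_zero hR).joinedIn x' hx' y' hy').mono
    (compl_subset_compl.2 hKR))).trans hyy'.symm)

theorem eq_zero_of_hasLogOn_prod_zpow_of_sum_eq_zero {ι : Type*} [Fintype ι] {K : Set ℂ}
    (hK : IsCompact K) {x : ι → ℂ} (hx : ∀ i, x i ∉ K)
    (hjoin : Pairwise fun i j => ¬ JoinedIn Kᶜ (x i) (x j)) {n : ι → ℤ} (hsum : ∑ i, n i = 0)
    (h : HasLogOn (fun z => ∏ i, (z - x i) ^ n i) K) (i : ι) : n i = 0 := by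
  have hzero : ∀ j, IsBounded (pathComponentIn Kᶜ (x j)) → n j = 0 := fun j =>
    eq_zero_of_hasLogOn_prod_zpow hK.isClosed hx h fun k hk => hjoin hk.symm
  by_cases hi : IsBounded (pathComponentIn Kᶜ (x i))
  · exact hzero i hi
  · rw [← hsum, Fintype.sum_eq_single i fun j hj => hzero j ?_]
    exact (isBounded_pathComponentIn_or hK.isBounded (hjoin hj)).resolve_right hi

theorem joinedIn_compl_of_hasLogOn {K : Set ℂ} (hK : IsCompact K) {x y : ℂ} (hx : x ∉ K)
    (hy : y ∉ K) (h : HasLogOn (fun z => (z - y) / (z - x)) K) : JoinedIn Kᶜ x y := by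
  by_contra hxy
  have hyx : ¬ JoinedIn Kᶜ y x := fun h => hxy h.symm
  have := eq_zero_of_hasLogOn_prod_zpow_of_sum_eq_zero hK (x := ![x, y]) (n := ![-1, 1])
    (by simp [Fin.forall_fin_two, hx, hy]) (by simp [Pairwise, Fin.forall_fin_two, hxy, hyx])
    (by simp) (h.congr fun z _ => by simp [Fin.prod_univ_two, div_eq_inv_mul]) 1
  simp at this

/-- Every nonvanishing continuous function on `T` has a continuous logarithm, as is the case for
arcs. -/
def HasAllLogs {X : Type*} [TopologicalSpace X] (T : Set X) : Prop :=
  ∀ f : X → ℂ, ContinuousOn f T → (∀ z ∈ T, f z ≠ 0) → HasLogOn f T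

theorem HasAllLogs.sub_div_sub {T : Set ℂ} (hT : HasAllLogs T) {x y : ℂ} (hx : x ∉ T)
    (hy : y ∉ T) : HasLogOn (fun z => (z - y) / (z - x)) T := by
  have hne : ∀ w, w ∉ T → ∀ z ∈ T, z - w ≠ 0 := fun w hw z hz => sub_ne_zero.2 fun h => hw (h ▸ hz)
  exact hT _ (ContinuousOn.div (by fun_prop) (by fun_prop) (hne x hx))
    fun z hz => div_ne_zero (hne y hy z hz) (hne x hx z hz)

theorem continuousOn_invFunOn_image {X Y : Type*} [TopologicalSpace X] [TopologicalSpace Y]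
    [T2Space Y] [Nonempty X] {γ : X → Y} {s : Set X} (hs : IsCompact s) (hγ : ContinuousOn γ s)
    (hinj : InjOn γ s) : ContinuousOn (Function.invFunOn γ s) (γ '' s) := by
  rw [continuousOn_iff_isClosed]
  intro C hC
  refine ⟨γ '' (s ∩ C), ((hs.inter_right hC).image_of_continuousOn
    (hγ.mono inter_subset_left)).isClosed, ?_⟩
  ext y
  constructor
  · rintro ⟨hyC, x, hx, rfl⟩
    rw [mem_preimage, hinj.leftInvOn_invFunOn hx] at hyC
    exact ⟨⟨x, ⟨hx, hyC⟩, rfl⟩, x, hx, rfl⟩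
  · rintro ⟨⟨x, hx, rfl⟩, hy⟩
    refine ⟨?_, hy⟩
    rw [mem_preimage, hinj.leftInvOn_invFunOn hx.1]
    exact hx.2

theorem hasAllLogs_image_Icc {X : Type*} [TopologicalSpace X] [T2Space X] {γ : ℝ → X} {a b : ℝ}
    (hγ : ContinuousOn γ (Icc a b)) (hinj : InjOn γ (Icc a b)) : HasAllLogs (γ '' Icc a b) := by
  intro f hf hf₀
  rcases lt_or_ge b a with hab | hab
  · simp [Icc_eq_empty (not_le.2 hab), HasLogOn]
  have hfγ : ContinuousOn (f ∘ γ) (Icc a b) := hf.comp hγ (mapsTo_image _ _)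
  obtain ⟨g, hg, hgf⟩ := hasLogOn_univ_of_ne_zero
    (f := IccExtend hab ((Icc a b).domRestrict (f ∘ γ)))
    (continuousOn_iff_continuous_domRestrict.1 hfγ).Icc_extend'
    fun t => hf₀ _ (mem_image_of_mem _ (projIcc a b hab t).2)
  refine ⟨g ∘ Function.invFunOn γ (Icc a b),
    hg.comp (continuousOn_invFunOn_image isCompact_Icc hγ hinj) fun _ _ => mem_univ _, ?_⟩
  rintro _ ⟨t, ht, rfl⟩
  rw [Function.comp_apply, hinj.leftInvOn_invFunOn ht, hgf t (mem_univ t), IccExtend_of_mem _ _ ht]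
  rfl

/-- A case of Janiszewski's theorem. -/
theorem joinedIn_compl_union_of_subsingleton_contacts {K₁ K₂ T : Set ℂ} (hK₁ : IsCompact K₁)
    (hK₂ : IsCompact K₂) (hK : Disjoint K₁ K₂) (hT : IsCompact T) (hTlog : HasAllLogs T) {u v : ℂ}
    (hu : K₁ ∩ T ⊆ {u}) (hv : K₂ ∩ T ⊆ {v}) {x y : ℂ} (hx : x ∉ T) (hy : y ∉ T)
    (h : JoinedIn (K₁ ∪ K₂)ᶜ x y) : JoinedIn (K₁ ∪ T ∪ K₂)ᶜ x y := by
  have hlog := HasLogOn.of_joinedIn_compl h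
  obtain ⟨hxK, hyK⟩ := h.mem
  simp only [mem_compl_iff, mem_union, not_or] at hxK hyK
  have hcontact : (K₁ ∪ T) ∩ K₂ ⊆ {v} := by
    rintro z ⟨hz | hz, hz'⟩
    · exact (disjoint_left.1 hK hz hz').elim
    · exact hv ⟨hz', hz⟩
  refine joinedIn_compl_of_hasLogOn ((hK₁.union hT).union hK₂) (by simp [hxK, hx])
    (by simp [hyK, hy]) ?_
  exact .union_of_inter_subset_singleton (hK₁.union hT).isClosed hK₂.isClosed
    (.union_of_inter_subset_singleton hK₁.isClosed hT.isClosed (hlog.mono subset_union_left)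
      (hTlog.sub_div_sub hx hy) hu)
    (hlog.mono subset_union_right) hcontact

theorem joinedIn_compl_union_of_two_contacts {K T : Set ℂ} (hK : IsCompact K) (hT : IsCompact T)
    (hTlog : HasAllLogs T) {u v : ℂ} (huv : K ∩ T ⊆ {u, v}) {x y w : ℂ} (hx : x ∉ T) (hy : y ∉ T)
    (hw : w ∉ T) (hxy : JoinedIn Kᶜ x y) (hxw : JoinedIn Kᶜ x w) :
    JoinedIn (K ∪ T)ᶜ x y ∨ JoinedIn (K ∪ T)ᶜ x w ∨ JoinedIn (K ∪ T)ᶜ y w := by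
  by_contra! ⟨hxy', hxw', hyw'⟩
  obtain ⟨m₁, m₂, hm, hlog⟩ := exists_hasLogOn_union_zpow_mul_zpow hK.isClosed hT.isClosed
    (.of_joinedIn_compl hxy) (hTlog.sub_div_sub hx hy) (.of_joinedIn_compl hxw)
    (hTlog.sub_div_sub hx hw) huv
  have hxKT : x ∉ K ∪ T := fun h => h.elim hxy.mem.1 hx
  have hyKT : y ∉ K ∪ T := fun h => h.elim hxy.mem.2 hy
  have hwKT : w ∉ K ∪ T := fun h => h.elim hxw.mem.2 hw
  have hsymm : ∀ {a b}, ¬ JoinedIn (K ∪ T)ᶜ a b → ¬ JoinedIn (K ∪ T)ᶜ b a :=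
    fun h h' => h h'.symm
  have hzero := eq_zero_of_hasLogOn_prod_zpow_of_sum_eq_zero (hK.union hT) (x := ![x, y, w])
    (n := ![-m₁ - m₂, m₁, m₂]) (by simp [Fin.forall_fin_succ, -mem_union, hxKT, hyKT, hwKT])
    (by simp [Pairwise, Fin.forall_fin_succ, -compl_union, hxy', hxw', hyw', hsymm hxy', hsymm hxw',
      hsymm hyw'])
    (by simp only [Fin.sum_univ_three, Matrix.cons_val]; ring) (hlog.congr fun z hz => by
      have hzx : z - x ≠ 0 := sub_ne_zero.2 fun h => hxKT (h ▸ hz)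
      simp only [Fin.prod_univ_three, Matrix.cons_val, div_zpow, sub_eq_add_neg (-m₁),
        zpow_add₀ hzx, zpow_neg]
      ring)
  exact hm.elim (· (hzero 1)) (· (hzero 2))

/-- The Jordan separation theorem for a cross-cut `γ` of a component of `Kᶜ` whose two ends are
joined inside `K`. -/
theorem not_isPreconnected_pathComponentIn_sdiff_arc {K : Set ℂ} (hK : IsClosed K) {γ : ℝ → ℂ}
    (hγ : ContinuousOn γ (Icc 0 1)) (hinj : InjOn γ (Icc 0 1)) (hends : JoinedIn K (γ 0) (γ 1))
    {w : ℂ} (hw : ∀ t ∈ Ioo (0 : ℝ) 1, JoinedIn Kᶜ w (γ t)) :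
    ¬ IsPreconnected (pathComponentIn Kᶜ w \ γ '' Icc 0 1) := by
  intro hpre
  set W := pathComponentIn Kᶜ w
  set T := γ '' Icc 0 1
  have hT : IsClosed T := (isCompact_Icc.image_of_continuousOn hγ).isClosed
  have hne : γ 0 ≠ γ 1 := fun h => zero_ne_one (hinj (by simp) (by simp) h)
  have hTjoin : JoinedIn T (γ 0) (γ 1) :=
    (((convex_Icc 0 1).isPathConnected ⟨0, by simp⟩).image' hγ).joinedIn
      _ ⟨0, by simp, rfl⟩ _ ⟨1, by simp, rfl⟩
  obtain ⟨g, hg, hgf⟩ := HasLogOn.of_joinedIn_compl (K := Tᶜ) (by rwa [compl_compl])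
  obtain ⟨h, hh, hhf⟩ := (HasLogOn.of_joinedIn_compl (K := Kᶜ) (by rwa [compl_compl])).mono
    (pathComponentIn_subset : W ⊆ Kᶜ)
  obtain ⟨c, hc⟩ : ∃ c, ∀ z ∈ Tᶜ ∩ W, h z - g z = c := by
    rcases (Tᶜ ∩ W).eq_empty_or_nonempty with hempty | ⟨p, hp⟩
    · exact ⟨0, by simp [hempty]⟩
    · exact ⟨h p - g p, fun z hz => sub_eq_sub_of_exp_eq_exp (by rwa [inter_comm])
        (hh.mono inter_subset_right) (hg.mono inter_subset_left)
        (fun y hy => by rw [hhf y hy.2, hgf y hy.1]) hz hp⟩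
  have hlog := hasLogOn_union (fun k hkT hkW => hkT.union_of_isOpen hkW hT.isOpen_compl
    (hK.isOpen_compl.pathComponentIn w)) hg hgf hh hhf hc
  have hρ : 0 < dist (γ 0) (γ 1) / 2 := half_pos (dist_pos.2 hne)
  refine not_hasLogOn_sphere_sub_div_sub hρ (half_lt_self (dist_pos.2 hne)) (hlog.mono ?_)
  intro z hz
  rw [mem_union, mem_compl_iff, ← imp_iff_not_or]
  rintro ⟨t, ht, rfl⟩
  have hz' := mem_sphere.1 hz
  refine hw t ⟨lt_of_le_of_ne ht.1 ?_, lt_of_le_of_ne ht.2 ?_⟩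
  · rintro rfl
    rw [dist_self] at hz'
    linarith
  · rintro rfl
    rw [dist_comm] at hz'
    linarith

end Separation

/-! ### Paths in the plane -/

section PlanarPaths

open Set Metric Filter Topology

theorem rel_of_joinedIn_of_dense {X : Type*} [TopologicalSpace X] {O D : Set X} (hD : Dense D)
    {R : X → X → Prop} (symm : ∀ a ∈ D, ∀ b ∈ D, R a b → R b a)
    (trans : ∀ a ∈ D, ∀ b ∈ D, ∀ c ∈ D, R a b → R b c → R a c)
    (local_rel : ∀ z ∈ O, ∃ N ∈ 𝓝 z, ∀ a ∈ N ∩ D, ∀ b ∈ N ∩ D, R a b) {x y : X}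
    (h : JoinedIn O x y) (hx : x ∈ D) (hy : y ∈ D) : R x y := by
  have hrange : ∀ z ∈ range h.somePath, z ∈ O := by
    rintro _ ⟨t, rfl⟩
    exact h.somePath_mem t
  obtain ⟨N, hN, N', hN', hR⟩ := (isPreconnected_range h.somePath.continuous).induction₂
    (fun z z' => ∃ N ∈ 𝓝 z, ∃ N' ∈ 𝓝 z', ∀ a ∈ N ∩ D, ∀ b ∈ N' ∩ D, R a b)
    (fun z hz => by
      obtain ⟨N, hN, hR⟩ := local_rel z (hrange z hz)
      filter_upwards [mem_nhdsWithin_of_mem_nhds (eventually_mem_nhds_iff.2 hN)] with z' hz'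
      exact ⟨N, hN, N, hz', hR⟩)
    (by
      rintro z₁ z₂ z₃ - - - ⟨N₁, hN₁, N₂, hN₂, hR⟩ ⟨N₂', hN₂', N₃, hN₃, hR'⟩
      obtain ⟨c, hcN, hcD⟩ := hD.inter_nhds_nonempty (inter_mem hN₂ hN₂')
      exact ⟨N₁, hN₁, N₃, hN₃, fun a ha b hb => trans a ha.2 c hcN b hb.2
        (hR a ha c ⟨hcD.1, hcN⟩) (hR' c ⟨hcD.2, hcN⟩ b hb)⟩)
    (by
      rintro z₁ z₂ - - ⟨N₁, hN₁, N₂, hN₂, hR⟩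
      exact ⟨N₂, hN₂, N₁, hN₁, fun a ha b hb => symm b hb.2 a ha.2 (hR b hb a ha)⟩)
    (x := x) (y := y) ⟨0, h.somePath.source⟩ ⟨1, h.somePath.target⟩
  exact hR x ⟨mem_of_mem_nhds hN, hx⟩ y ⟨mem_of_mem_nhds hN', hy⟩

theorem isPathConnected_ball_sdiff_singleton (p : ℂ) {R : ℝ} (hR : 0 < R) :
    IsPathConnected (ball p R \ {p}) := by
  have himage : ball p R \ {p} = (fun w => p + Complex.exp w) '' {w | w.re < Real.log R} := by
    ext z
    simp only [Set.mem_sdiff, mem_ball, Complex.dist_eq, mem_singleton_iff, mem_image,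
      mem_ofPred_eq]
    constructor
    · rintro ⟨hz, hzp⟩
      have hzp' : z - p ≠ 0 := sub_ne_zero.2 hzp
      refine ⟨Complex.log (z - p), ?_, by rw [Complex.exp_log hzp', add_sub_cancel]⟩
      rw [Complex.log_re]
      exact Real.log_lt_log (norm_pos_iff.2 hzp') hz
    · rintro ⟨w, hw, rfl⟩
      rw [add_sub_cancel_left, Complex.norm_exp]
      exact ⟨(Real.lt_log_iff_exp_lt hR).1 hw, by simp [Complex.exp_ne_zero]⟩
  rw [himage]
  refine ((convex_halfSpace_re_lt _).isPathConnected ⟨((Real.log R - 1 : ℝ) : ℂ), ?_⟩).image'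
    (by fun_prop)
  simp

theorem joinedIn_sdiff_finite {O S : Set ℂ} (hO : IsOpen O) (hS : S.Finite) {x y : ℂ}
    (h : JoinedIn O x y) (hx : x ∉ S) (hy : y ∉ S) : JoinedIn (O \ S) x y := by
  refine rel_of_joinedIn_of_dense (D := Sᶜ) (hS.countable.dense_compl ℝ)
    (fun _ _ _ _ hab => hab.symm) (fun _ _ _ _ _ _ hab hbc => hab.trans hbc) (fun z hz => ?_)
    h hx hy
  have hN : O \ (S \ {z}) ∈ 𝓝 z :=
    (hO.sdiff hS.sdiff.isClosed).mem_nhds ⟨hz, fun h => h.2 rfl⟩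
  obtain ⟨R, hR, hball⟩ := Metric.mem_nhds_iff.1 hN
  refine ⟨ball z R, ball_mem_nhds z hR, fun a ha b hb => ?_⟩
  by_cases hzS : z ∈ S
  · have hsub : ball z R \ {z} ⊆ O \ S := fun w hw =>
      ⟨(hball hw.1).1, fun hwS => (hball hw.1).2 ⟨hwS, hw.2⟩⟩
    exact ((isPathConnected_ball_sdiff_singleton z hR).joinedIn a
      ⟨ha.1, fun h => ha.2 (h ▸ hzS)⟩ b ⟨hb.1, fun h => hb.2 (h ▸ hzS)⟩).mono hsub
  · rw [sdiff_singleton_eq_self hzS] at hball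
    exact ((isPathConnected_ball hR).joinedIn a ha.1 b hb.1).mono hball

theorem mem_pathComponentIn_of_mem_closure {X : Type*} [TopologicalSpace X]
    [LocallyPathConnectedSpace X] {O : Set X} (hO : IsOpen O) {x z : X} (hz : z ∈ O)
    (h : z ∈ closure (pathComponentIn O x)) : z ∈ pathComponentIn O x := by
  obtain ⟨w, hzw, hxw⟩ :=
    mem_closure_iff.1 h _ (hO.pathComponentIn z) (mem_pathComponentIn_self hz)
  exact JoinedIn.trans hxw (JoinedIn.symm hzw)

theorem exists_mem_closure_pathComponentIn_sdiff {X : Type*} [TopologicalSpace X]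
    [LocallyPathConnectedSpace X] {O T : Set X} (hO : IsOpen O) (hT : IsClosed T) {x p : X}
    (h : JoinedIn O x p) (hx : x ∉ T) (hp : p ∈ T) :
    ∃ q ∈ O ∩ T, q ∈ closure (pathComponentIn (O \ T) x) := by
  by_contra! hmiss
  have hOT : IsOpen (O \ T) := hO.sdiff hT
  have hsub : range h.somePath ⊆ pathComponentIn (O \ T) x := by
    refine (isPreconnected_range h.somePath.continuous).subset_of_closure_inter_subset
      (hOT.pathComponentIn x)
      ⟨x, ⟨0, h.somePath.source⟩, mem_pathComponentIn_self ⟨h.source_mem, hx⟩⟩ ?_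
    rintro _ ⟨hz, t, rfl⟩
    exact mem_pathComponentIn_of_mem_closure hOT
      ⟨h.somePath_mem t, fun hT => hmiss _ ⟨h.somePath_mem t, hT⟩ hz⟩ hz
  exact (pathComponentIn_subset (hsub ⟨1, h.somePath.target⟩)).2 hp

/-- A disc remains connected when an inner point is deleted, an interval does not. -/
theorem interior_image_eq_empty_of_injOn {γ : ℝ → ℂ} {s : Set ℝ} (hs : IsCompact s)
    (hγ : ContinuousOn γ s) (hinj : InjOn γ s) : interior (γ '' s) = ∅ := by
  by_contra hne
  obtain ⟨u, hu⟩ := nonempty_iff_ne_empty.2 hne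
  obtain ⟨R, hR, hball⟩ := Metric.isOpen_iff.1 isOpen_interior u hu
  replace hball : ball u R ⊆ γ '' s := hball.trans interior_subset
  set ψ := Function.invFunOn γ s
  have hψ : ContinuousOn ψ (ball u R) := (continuousOn_invFunOn_image hs hγ hinj).mono hball
  have hψinj : InjOn ψ (ball u R) := (Function.invFunOn_injOn_image γ s).mono hball
  have hu' : u + (R / 2 : ℝ) ∈ ball u R := by simp [abs_of_pos, hR]
  have hne' : ψ u ≠ ψ (u + (R / 2 : ℝ)) := fun h => by
    simpa [hR.ne'] using hψinj (mem_ball_self hR) hu' h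
  obtain ⟨a, ha, c, hc, hac⟩ : ∃ a ∈ ball u R, ∃ c ∈ ball u R, ψ a < ψ c :=
    hne'.lt_or_gt.elim (fun h => ⟨_, mem_ball_self hR, _, hu', h⟩)
      (fun h => ⟨_, hu', _, mem_ball_self hR, h⟩)
  obtain ⟨m, ham, hmc⟩ := exists_between hac
  obtain ⟨b, hb, rfl⟩ := (isPreconnected_ball.image ψ hψ).ordConnected.out
    (mem_image_of_mem ψ ha) (mem_image_of_mem ψ hc) ⟨ham.le, hmc.le⟩
  have hpunct : IsPreconnected (ball u R \ {b}) := isPreconnected_of_forall_pair fun x hx y hy => by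
    have hxy := joinedIn_sdiff_finite isOpen_ball (finite_singleton b)
      ((isPathConnected_ball hR).joinedIn x hx.1 y hy.1) hx.2 hy.2
    exact ⟨_, pathComponentIn_subset, mem_pathComponentIn_self hxy.source_mem, hxy,
      (isPathConnected_pathComponentIn hxy.source_mem).isConnected.isPreconnected⟩
  obtain ⟨b', ⟨hb', hbb'⟩, hψb⟩ := (hpunct.image ψ (hψ.mono sdiff_subset)).ordConnected.out
    (mem_image_of_mem ψ ⟨ha, fun h => ham.ne (congrArg ψ h)⟩)
    (mem_image_of_mem ψ ⟨hc, fun h => hmc.ne' (congrArg ψ h)⟩) ⟨ham.le, hmc.le⟩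
  exact hbb' (hψinj hb' hb hψb)

/-- Cutting the arc off near `γ 0` leaves `x` and the remaining end piece together, so a path from
`x` first meets the arc near `γ 0`. -/
theorem arc_zero_mem_closure_pathComponentIn {K : Set ℂ} (hK : IsCompact K) {γ : ℝ → ℂ}
    (hγ : ContinuousOn γ (Icc 0 1)) (hinj : InjOn γ (Icc 0 1))
    (hKγ : K ∩ γ '' Icc 0 1 ⊆ {γ 0, γ 1}) {x : ℂ} (hx : x ∉ γ '' Icc 0 1)
    (hjoin : ∀ t ∈ Ioo (0 : ℝ) 1, JoinedIn Kᶜ x (γ t)) :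
    γ 0 ∈ closure (pathComponentIn (K ∪ γ '' Icc 0 1)ᶜ x) := by
  by_contra hcl
  obtain ⟨b, hb₀, hb⟩ : ∃ b > 0, ∀ t ∈ Icc 0 b, t ∈ Icc (0 : ℝ) 1 →
      γ t ∉ closure (pathComponentIn (K ∪ γ '' Icc 0 1)ᶜ x) := by
    have hev := (hγ 0 (by simp)).eventually (isClosed_closure.isOpen_compl.mem_nhds hcl)
    rw [eventually_nhdsWithin_iff] at hev
    obtain ⟨b, hb₀, hb⟩ := mem_nhdsGE_iff_exists_Icc_subset.1 (mem_nhdsWithin_of_mem_nhds hev)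
    exact ⟨b, hb₀, fun t ht => hb ht⟩
  obtain ⟨c, hc₀, hc⟩ := exists_between (lt_min hb₀ one_pos)
  rw [lt_min_iff] at hc
  have hsub : Icc c 1 ⊆ Icc (0 : ℝ) 1 := Icc_subset_Icc_left hc₀.le
  have hTcompact : IsCompact (γ '' Icc c 1) := isCompact_Icc.image_of_continuousOn (hγ.mono hsub)
  obtain ⟨d, hd₀, hdc⟩ := exists_between hc₀
  have hd : d ∈ Ioo (0 : ℝ) 1 := ⟨hd₀, hdc.trans hc.2⟩
  have hcontact : K ∩ γ '' Icc c 1 ⊆ {γ 1} := by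
    rintro _ ⟨hzK, t, ht, rfl⟩
    refine (hKγ ⟨hzK, t, hsub ht, rfl⟩).resolve_left fun h => ?_
    exact (hc₀.trans_le ht.1).ne' (hinj (hsub ht) (by simp) h)
  have hxd : JoinedIn (K ∪ γ '' Icc c 1)ᶜ x (γ d) := by
    have := joinedIn_compl_union_of_subsingleton_contacts hK isCompact_empty (disjoint_empty K)
      hTcompact (hasAllLogs_image_Icc (hγ.mono hsub) (hinj.mono hsub)) (v := 0) hcontact (by simp)
      (fun h => hx (image_mono hsub h))
      (by
        rintro ⟨t, ht, h⟩
        exact (hdc.trans_le ht.1).ne' (hinj (hsub ht) (Ioo_subset_Icc_self hd) h))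
      (by simpa using hjoin d hd)
    simpa using this
  obtain ⟨_, ⟨hzO, t, ht, rfl⟩, hz⟩ := exists_mem_closure_pathComponentIn_sdiff
    (hK.union hTcompact).isClosed.isOpen_compl (isCompact_Icc.image_of_continuousOn hγ).isClosed
    hxd hx ⟨d, Ioo_subset_Icc_self hd, rfl⟩
  have htc : t < c := not_le.1 fun h => hzO (.inr ⟨t, ⟨h, ht.2⟩, rfl⟩)
  refine hb t ⟨ht.1, (htc.trans hc.1).le⟩ ht (closure_mono (pathComponentIn_mono ?_) hz)
  exact fun z hz h => h.elim (fun h => hz.1 (.inl h)) hz.2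

theorem arc_one_mem_closure_pathComponentIn {K : Set ℂ} (hK : IsCompact K) {γ : ℝ → ℂ}
    (hγ : ContinuousOn γ (Icc 0 1)) (hinj : InjOn γ (Icc 0 1))
    (hKγ : K ∩ γ '' Icc 0 1 ⊆ {γ 0, γ 1}) {x : ℂ} (hx : x ∉ γ '' Icc 0 1)
    (hjoin : ∀ t ∈ Ioo (0 : ℝ) 1, JoinedIn Kᶜ x (γ t)) :
    γ 1 ∈ closure (pathComponentIn (K ∪ γ '' Icc 0 1)ᶜ x) := by
  have hrev : (fun t => 1 - t) '' Icc (0 : ℝ) 1 = Icc 0 1 := by simp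
  have hmaps : MapsTo (fun t => 1 - t) (Icc (0 : ℝ) 1) (Icc 0 1) :=
    mapsTo_iff_image_subset.2 hrev.le
  have himage : (fun t => γ (1 - t)) '' Icc 0 1 = γ '' Icc 0 1 := by
    rw [← image_image γ, hrev]
  have := arc_zero_mem_closure_pathComponentIn (γ := fun t => γ (1 - t)) hK
    (hγ.comp (by fun_prop) hmaps) (hinj.comp (sub_right_injective.injOn) hmaps)
    (by simpa [himage, pair_comm] using hKγ) (by rwa [himage])
    fun t ht => hjoin (1 - t) ⟨by linarith [ht.2], by linarith [ht.1]⟩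
  simpa [himage] using this

end PlanarPaths

/-! ### Connectivity through a set of edges -/

section EdgeConnectivity

open Set

variable {E X : Type*} {s t : E → X} {A B : Set E} {e : E} {x y z : X}

/-- `x` and `y` lie in the same component of the multigraph with ends `s e`, `t e` for the edges
`e ∈ A`. Used both for the vertices of a plane graph (ends of an edge) and for its faces (sides of
an edge). -/
def EdgeConn (s t : E → X) (A : Set E) : X → X → Prop :=
  Relation.EqvGen fun x y => ∃ e ∈ A, s e = x ∧ t e = y

/-- The edges in `S` form a forest. -/
def EdgeAcyclic (s t : E → X) (S : Set E) : Prop :=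
  ∀ e ∈ S, ¬ EdgeConn s t (S \ {e}) (s e) (t e)

namespace EdgeConn

theorem equivalence (s t : E → X) (A : Set E) : Equivalence (EdgeConn s t A) :=
  Relation.EqvGen.is_equivalence _

@[refl] theorem refl (x : X) : EdgeConn s t A x x := (equivalence s t A).refl x

@[symm] theorem symm (h : EdgeConn s t A x y) : EdgeConn s t A y x := (equivalence s t A).symm h

@[trans] theorem trans (h : EdgeConn s t A x y) (h' : EdgeConn s t A y z) : EdgeConn s t A x z :=
  (equivalence s t A).trans h h'

theorem congr_right (h : EdgeConn s t A x y) : EdgeConn s t A z x ↔ EdgeConn s t A z y :=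
  ⟨fun hzx => hzx.trans h, fun hzy => hzy.trans h.symm⟩

theorem edge (h : e ∈ A) : EdgeConn s t A (s e) (t e) := .rel _ _ ⟨e, h, rfl, rfl⟩

theorem lift {r : X → X → Prop} (hr : Equivalence r) (h : ∀ e ∈ A, r (s e) (t e))
    (hxy : EdgeConn s t A x y) : r x y :=
  hr.eqvGen_iff.1 (hxy.mono (by rintro _ _ ⟨e, he, rfl, rfl⟩; exact h e he))

theorem of_edges (h : ∀ e ∈ A, EdgeConn s t B (s e) (t e)) (hxy : EdgeConn s t A x y) :
    EdgeConn s t B x y :=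
  hxy.lift (equivalence s t B) h

theorem mono (hAB : A ⊆ B) (hxy : EdgeConn s t A x y) : EdgeConn s t B x y :=
  hxy.of_edges fun _ he => edge (hAB he)

theorem iff_of_forall_edge {P : X → Prop} (h : ∀ e ∈ A, P (s e) ↔ P (t e))
    (hxy : EdgeConn s t A x y) : P x ↔ P y :=
  hxy.lift (r := fun x y => P x ↔ P y) ⟨fun _ => Iff.rfl, Iff.symm, Iff.trans⟩ h

theorem of_insert (h : EdgeConn s t (insert e A) x y) : EdgeConn s t A x y ∨
    (EdgeConn s t A x (s e) ∧ EdgeConn s t A (t e) y) ∨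
      (EdgeConn s t A x (t e) ∧ EdgeConn s t A (s e) y) := by
  refine (h.iff_of_forall_edge (P := fun y => EdgeConn s t A x y ∨
    (EdgeConn s t A x (s e) ∧ EdgeConn s t A (t e) y) ∨
      (EdgeConn s t A x (t e) ∧ EdgeConn s t A (s e) y)) ?_).1 (.inl (.refl x))
  rintro f (rfl | hf)
  · have hs := EdgeConn.refl (s := s) (t := t) (A := A) (s f)
    have ht := EdgeConn.refl (s := s) (t := t) (A := A) (t f)
    tauto
  · simp only [(edge hf : EdgeConn s t A (s f) (t f)).congr_right]

theorem eq_of_empty (h : EdgeConn s t ∅ x y) : x = y :=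
  h.lift eq_equivalence fun _ he => he.elim

theorem mk_eq_of_subset_singleton (hA : A ⊆ {e}) (h : EdgeConn s t A x y) (hne : x ≠ y) :
    s(x, y) = s(s e, t e) := by
  rcases (h.mono (hA.trans (by simp)) : EdgeConn s t (insert e ∅) x y).of_insert with
    h | ⟨h, h'⟩ | ⟨h, h'⟩
  · exact (hne h.eq_of_empty).elim
  · rw [h.eq_of_empty, h'.eq_of_empty]
  · rw [h.eq_of_empty, ← h'.eq_of_empty, Sym2.eq_swap]

end EdgeConn

namespace EdgeAcyclic

theorem mono (h : EdgeAcyclic s t B) (hAB : A ⊆ B) : EdgeAcyclic s t A := fun e he hc =>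
  h e (hAB he) (hc.mono (sdiff_subset_sdiff_left hAB))

theorem insert (h : EdgeAcyclic s t A) (he : ¬ EdgeConn s t A (s e) (t e)) :
    EdgeAcyclic s t (insert e A) := by
  rintro f (rfl | hf) hc
  · exact he (hc.mono (by simp))
  · have hne : e ≠ f := by
      rintro rfl
      exact he (.edge hf)
    rw [insert_sdiff_of_notMem _ (by simpa using hne)] at hc
    have hsub : A \ {f} ⊆ A := sdiff_subset
    rcases hc.of_insert with hc | ⟨hs, ht⟩ | ⟨ht, hs⟩
    · exact h f hf hc
    · exact he (((hs.mono hsub).symm.trans (.edge hf)).trans (ht.mono hsub).symm)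
    · exact he (((hs.mono hsub).trans (EdgeConn.edge hf).symm).trans (ht.mono hsub))

theorem exists_spanning [Finite E] (h : EdgeAcyclic s t A) (hAB : A ⊆ B) :
    ∃ S, A ⊆ S ∧ S ⊆ B ∧ EdgeAcyclic s t S ∧ ∀ e ∈ B, EdgeConn s t S (s e) (t e) := by
  obtain ⟨S, hAS, hS⟩ := (toFinite {S | A ⊆ S ∧ S ⊆ B ∧ EdgeAcyclic s t S}).exists_le_maximal
    (a := A) ⟨le_rfl, hAB, h⟩
  obtain ⟨-, hSB, hSacyc⟩ := hS.prop
  refine ⟨S, hAS, hSB, hSacyc, fun e he => by_contra fun hc => ?_⟩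
  have hsub : Insert.insert e S ⊆ S := hS.le_of_ge
    ⟨hAS.trans (subset_insert e S), insert_subset he hSB, hSacyc.insert hc⟩ (subset_insert e S)
  exact hc (.edge (hsub (mem_insert e S)))

theorem card_quot_add_ncard_le [Finite X] (hfin : A.Finite) (h : EdgeAcyclic s t A) :
    Nat.card (Quot (EdgeConn s t A)) + A.ncard ≤ Nat.card X := by
  induction A, hfin using Set.Finite.induction_on with
  | empty =>
    rw [ncard_empty, add_zero]
    exact Nat.card_le_card_of_surjective (Quot.mk _) Quot.mk_surjective
  | @insert e A he hfin ih =>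
    let φ : Quot (EdgeConn s t A) → Quot (EdgeConn s t (Insert.insert e A)) :=
      Quot.map id fun _ _ hxy => hxy.mono (subset_insert e A)
    have hsurj : φ.Surjective := by
      rintro ⟨x⟩
      exact ⟨Quot.mk _ x, rfl⟩
    have hninj : ¬ φ.Injective := fun hinj => by
      have hmerge : φ (Quot.mk _ (s e)) = φ (Quot.mk _ (t e)) :=
        Quot.sound (EdgeConn.edge (mem_insert e A))
      refine h e (mem_insert e A) ?_
      rw [insert_sdiff_self_of_notMem he]
      exact (EdgeConn.equivalence s t A).eqvGen_iff.1 (Quot.eqvGen_exact (hinj hmerge))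
    have hlt : Nat.card (Quot (EdgeConn s t (Insert.insert e A))) <
        Nat.card (Quot (EdgeConn s t A)) :=
      (Nat.card_le_card_of_surjective φ hsurj).lt_of_ne fun heq =>
        hninj ((Nat.bijective_iff_surjective_and_card φ).2 ⟨hsurj, heq.symm⟩).1
    have := ih (h.mono (subset_insert e A))
    rw [ncard_insert_of_notMem he hfin]
    lia

theorem ncard_le [Finite X] [Finite E] (h : EdgeAcyclic s t A) : A.ncard ≤ Nat.card X :=
  le_of_add_le_right (h.card_quot_add_ncard_le A.toFinite)

end EdgeAcyclic

end EdgeConnectivity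

/-! ### Plane multigraphs and their duals -/

section PlaneMultigraph

open Set Topology

/-- A multigraph drawn in the plane `ℂ`: distinct points for the vertices and simple arcs for the
edges, two arcs meeting only in common ends and avoiding all other vertices. -/
structure PlaneMultigraph (V E : Type*) where
  pos : V → ℂ
  src : E → V
  tgt : E → V
  arc : E → ℝ → ℂ
  pos_injective : Function.Injective pos
  continuousOn_arc : ∀ e, ContinuousOn (arc e) (Icc 0 1)
  injOn_arc : ∀ e, InjOn (arc e) (Icc 0 1)
  arc_zero : ∀ e, arc e 0 = pos (src e)
  arc_one : ∀ e, arc e 1 = pos (tgt e)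
  eq_of_pos_mem : ∀ e v, pos v ∈ arc e '' Icc 0 1 → v = src e ∨ v = tgt e
  exists_eq_pos : ∀ e e', e ≠ e' → ∀ z ∈ arc e '' Icc 0 1, z ∈ arc e' '' Icc 0 1 →
    ∃ v, z = pos v ∧ (v = src e ∨ v = tgt e) ∧ (v = src e' ∨ v = tgt e')

namespace PlaneMultigraph

variable {V E : Type*} (g : PlaneMultigraph V E) {A B : Set E} {t : E}

/-- The point set of the edge `e`, ends included. -/
def curve (e : E) : Set ℂ := g.arc e '' Icc 0 1

/-- The point set of the edges in `A`. -/
def drawing (A : Set E) : Set ℂ := ⋃ e ∈ A, g.curve e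

/-- The components of the complement of the drawing of `A`. -/
def components (A : Set E) : Set (Set ℂ) :=
  {Z | ∃ x ∉ g.drawing A, Z = pathComponentIn (g.drawing A)ᶜ x}

/-- The faces of the drawing of all edges. -/
def Face : Type := g.components univ

instance : SetLike g.Face ℂ := ⟨Subtype.val, Subtype.val_injective⟩

/-- The edges with an end at `v`. -/
def star (v : V) : Set E := {e | g.src e = v ∨ g.tgt e = v}

variable {g}

theorem mem_drawing {z : ℂ} : z ∈ g.drawing A ↔ ∃ e ∈ A, z ∈ g.curve e := by
  simp [drawing]

theorem drawing_mono (h : A ⊆ B) : g.drawing A ⊆ g.drawing B := biUnion_subset_biUnion_left h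

theorem compl_drawing_subset (h : A ⊆ B) : (g.drawing B)ᶜ ⊆ (g.drawing A)ᶜ :=
  compl_subset_compl.2 (drawing_mono h)

theorem drawing_insert (t : E) (A : Set E) : g.drawing (insert t A) = g.drawing A ∪ g.curve t := by
  rw [drawing, biUnion_insert, union_comm, drawing]

theorem drawing_union (A B : Set E) : g.drawing (A ∪ B) = g.drawing A ∪ g.drawing B :=
  biUnion_union A B _

theorem drawing_univ (t : E) : g.drawing univ = g.drawing {t}ᶜ ∪ g.curve t := by
  rw [← drawing_insert, insert_eq, union_compl_self]

theorem isCompact_curve (e : E) : IsCompact (g.curve e) :=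
  isCompact_Icc.image_of_continuousOn (g.continuousOn_arc e)

theorem hasAllLogs_curve (e : E) : HasAllLogs (g.curve e) :=
  hasAllLogs_image_Icc (g.continuousOn_arc e) (g.injOn_arc e)

theorem src_ne_tgt (e : E) : g.src e ≠ g.tgt e := fun h =>
  zero_ne_one (g.injOn_arc e (by simp) (by simp) (by rw [g.arc_zero, g.arc_one, h]))

theorem drawing_inter_curve_subset (ht : t ∉ A) :
    g.drawing A ∩ g.curve t ⊆ {g.arc t 0, g.arc t 1} := by
  rintro z ⟨hzA, hzt⟩
  obtain ⟨e, he, hze⟩ := mem_drawing.1 hzA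
  obtain ⟨v, rfl, rfl | rfl, -⟩ := g.exists_eq_pos t e (fun h => ht (h ▸ he)) z hzt hze
  · exact .inl (g.arc_zero t).symm
  · exact .inr (g.arc_one t).symm

theorem arc_notMem_drawing (ht : t ∉ A) {s : ℝ} (hs : s ∈ Ioo (0 : ℝ) 1) :
    g.arc t s ∉ g.drawing A := fun h => by
  have hs' := Ioo_subset_Icc_self hs
  rcases drawing_inter_curve_subset ht ⟨h, s, hs', rfl⟩ with h | h
  · exact hs.1.ne' (g.injOn_arc t hs' (by simp) h)
  · exact hs.2.ne (g.injOn_arc t hs' (by simp) h)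

theorem joinedIn_arc_of_convex {I : Set ℝ} (hI : Convex ℝ I) (hI01 : I ⊆ Icc 0 1) {s s' : ℝ}
    (hs : s ∈ I) (hs' : s' ∈ I) : JoinedIn (g.arc t '' I) (g.arc t s) (g.arc t s') :=
  ((hI.isPathConnected ⟨s, hs⟩).image' ((g.continuousOn_arc t).mono hI01)).joinedIn
    _ ⟨s, hs, rfl⟩ _ ⟨s', hs', rfl⟩

theorem joinedIn_compl_drawing_arc (ht : t ∉ A) {s s' : ℝ} (hs : s ∈ Ioo (0 : ℝ) 1)
    (hs' : s' ∈ Ioo (0 : ℝ) 1) : JoinedIn (g.drawing A)ᶜ (g.arc t s) (g.arc t s') :=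
  (joinedIn_arc_of_convex (convex_Ioo 0 1) Ioo_subset_Icc_self hs hs').mono <|
    image_subset_iff.2 fun _ h => arc_notMem_drawing ht h

theorem joinedIn_drawing {u v : V} (h : EdgeConn g.src g.tgt A u v) :
    u = v ∨ JoinedIn (g.drawing A) (g.pos u) (g.pos v) := by
  refine h.lift (r := fun u v => u = v ∨ JoinedIn (g.drawing A) (g.pos u) (g.pos v))
    ⟨fun _ => .inl rfl, .imp Eq.symm JoinedIn.symm, ?_⟩ fun e he => .inr ?_
  · rintro u v w (rfl | h) (rfl | h')
    exacts [.inl rfl, .inr h', .inr h, .inr (h.trans h')]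
  · rw [← g.arc_zero, ← g.arc_one]
    exact (joinedIn_arc_of_convex (convex_Icc 0 1) le_rfl (by simp) (by simp)).mono
      (subset_biUnion_of_mem (u := g.curve) he)

theorem pos_notMem_drawing_compl_star (v : V) : g.pos v ∉ g.drawing (g.star v)ᶜ := fun h => by
  obtain ⟨e, he, hv⟩ := mem_drawing.1 h
  exact he ((g.eq_of_pos_mem e v hv).imp Eq.symm Eq.symm)

theorem eq_pathComponentIn_of_mem_components {Z : Set ℂ} {x : ℂ} (hZ : Z ∈ g.components A)
    (hx : x ∈ Z) : Z = pathComponentIn (g.drawing A)ᶜ x := by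
  obtain ⟨z, -, rfl⟩ := hZ
  exact (pathComponentIn_congr hx).symm

namespace Face

variable {F F' : g.Face} {x y : ℂ}

theorem eq_pathComponentIn (hx : x ∈ F) : (F : Set ℂ) = pathComponentIn (g.drawing univ)ᶜ x :=
  eq_pathComponentIn_of_mem_components F.2 hx

theorem nonempty (F : g.Face) : (F : Set ℂ).Nonempty := by
  obtain ⟨_, z, hz, rfl⟩ := F
  exact ⟨z, mem_pathComponentIn_self hz⟩

theorem joinedIn (hx : x ∈ F) (hy : y ∈ F) : JoinedIn (g.drawing univ)ᶜ x y := by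
  rwa [← SetLike.mem_coe, eq_pathComponentIn hx] at hy

theorem mem_of_joinedIn (hx : x ∈ F) (h : JoinedIn (g.drawing univ)ᶜ x y) : y ∈ F := by
  rwa [← SetLike.mem_coe, eq_pathComponentIn hx]

theorem eq_of_mem (hx : x ∈ F) (hx' : x ∈ F') : F = F' :=
  SetLike.coe_injective (by rw [eq_pathComponentIn hx, eq_pathComponentIn hx'])

theorem notMem_drawing (hx : x ∈ F) : x ∉ g.drawing univ := (joinedIn hx hx).mem.1

theorem notMem_curve (hx : x ∈ F) : x ∉ g.curve t := fun h =>
  notMem_drawing hx (mem_drawing.2 ⟨t, mem_univ t, h⟩)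

end Face

theorem exists_mem_face {x : ℂ} (hx : x ∉ g.drawing univ) : ∃ F : g.Face, x ∈ F :=
  ⟨⟨_, x, hx, rfl⟩, mem_pathComponentIn_self hx⟩

variable (g) in
/-- The component containing the interior of `t` once `t` is deleted from the drawing. -/
def edgeRegion (t : E) : Set ℂ := pathComponentIn (g.drawing {t}ᶜ)ᶜ (g.arc t (1 / 2))

/-- The face `F` touches the edge `t`. -/
def IsSide (t : E) (F : g.Face) : Prop := ∃ x ∈ F, x ∈ g.edgeRegion t

theorem half_mem_Ioo : (1 / 2 : ℝ) ∈ Ioo (0 : ℝ) 1 := by norm_num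

theorem arc_mem_edgeRegion {s : ℝ} (hs : s ∈ Ioo (0 : ℝ) 1) : g.arc t s ∈ g.edgeRegion t :=
  joinedIn_compl_drawing_arc (by simp) half_mem_Ioo hs

theorem joinedIn_of_mem_edgeRegion {x y : ℂ} (hx : x ∈ g.edgeRegion t) (hy : y ∈ g.edgeRegion t) :
    JoinedIn (g.drawing {t}ᶜ)ᶜ x y :=
  JoinedIn.trans (JoinedIn.symm hx) hy

theorem pathComponentIn_eq_face {F : g.Face} {x : ℂ} (hx : x ∈ F) (t : E) :
    pathComponentIn (g.drawing {t}ᶜ ∪ g.arc t '' Icc 0 1)ᶜ x = F := by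
  rw [Face.eq_pathComponentIn hx, drawing_univ t, curve]

variable [Finite E]

theorem isCompact_drawing (A : Set E) : IsCompact (g.drawing A) :=
  A.toFinite.isCompact_biUnion fun e _ => isCompact_curve e

theorem isOpen_compl_drawing (A : Set E) : IsOpen (g.drawing A)ᶜ :=
  (isCompact_drawing A).isClosed.isOpen_compl

theorem dense_compl_drawing (A : Set E) : Dense (g.drawing A)ᶜ := by
  simp only [drawing, compl_iUnion]
  refine dense_biInter_of_isOpen (fun e _ => (isCompact_curve e).isClosed.isOpen_compl)
    A.to_countable fun e _ => ?_
  rw [← interior_eq_empty_iff_dense_compl]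
  exact interior_image_eq_empty_of_injOn isCompact_Icc (g.continuousOn_arc e) (g.injOn_arc e)

theorem isOpen_face (F : g.Face) : IsOpen (F : Set ℂ) := by
  obtain ⟨x, hx⟩ := F.nonempty
  rw [Face.eq_pathComponentIn hx]
  exact (isOpen_compl_drawing univ).pathComponentIn x

theorem exists_face_inter {O : Set ℂ} (hO : IsOpen O) (hne : O.Nonempty) :
    ∃ F : g.Face, ∃ x ∈ F, x ∈ O := by
  obtain ⟨x, hxO, hx⟩ := (dense_compl_drawing (g := g) univ).inter_open_nonempty O hO hne
  obtain ⟨F, hF⟩ := exists_mem_face hx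
  exact ⟨F, x, hF, hxO⟩

instance : Nonempty g.Face :=
  let ⟨F, _⟩ := exists_face_inter (g := g) isOpen_univ univ_nonempty
  ⟨F⟩

theorem isOpen_edgeRegion (t : E) : IsOpen (g.edgeRegion t) :=
  (isOpen_compl_drawing _).pathComponentIn _

theorem exists_sides (t : E) :
    ∃ F F' : g.Face, IsSide t F ∧ IsSide t F' ∧ ∀ G, IsSide t G → G = F ∨ G = F' := by
  obtain ⟨F, x, hxF, hx⟩ := exists_face_inter (g := g) (isOpen_edgeRegion t)
    ⟨_, arc_mem_edgeRegion half_mem_Ioo⟩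
  by_cases hF : ∀ G, IsSide t G → G = F
  · exact ⟨F, F, ⟨x, hxF, hx⟩, ⟨x, hxF, hx⟩, fun G hG => .inl (hF G hG)⟩
  push Not at hF
  obtain ⟨F', ⟨y, hyF, hy⟩, hne⟩ := hF
  refine ⟨F, F', ⟨x, hxF, hx⟩, ⟨y, hyF, hy⟩, ?_⟩
  rintro G ⟨z, hzG, hz⟩
  have hsplit := joinedIn_compl_union_of_two_contacts (isCompact_drawing {t}ᶜ) (isCompact_curve t)
    (hasAllLogs_curve t) (drawing_inter_curve_subset (by simp)) (Face.notMem_curve hxF)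
    (Face.notMem_curve hyF) (Face.notMem_curve hzG) (joinedIn_of_mem_edgeRegion hx hy)
    (joinedIn_of_mem_edgeRegion hx hz)
  rw [← drawing_univ] at hsplit
  rcases hsplit with h | h | h
  · exact (hne (Face.eq_of_mem hyF (Face.mem_of_joinedIn hxF h))).elim
  · exact .inl (Face.eq_of_mem hzG (Face.mem_of_joinedIn hxF h))
  · exact .inr (Face.eq_of_mem hzG (Face.mem_of_joinedIn hyF h))

variable (g) in
/-- One of the two (possibly equal) faces at the edge `t`, chosen arbitrarily. -/
noncomputable def left (t : E) : g.Face := (exists_sides t).choose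

variable (g) in
/-- The other face at the edge `t`. -/
noncomputable def right (t : E) : g.Face := (exists_sides t).choose_spec.choose

theorem isSide_left (t : E) : IsSide t (g.left t) := (exists_sides t).choose_spec.choose_spec.1

theorem isSide_right (t : E) : IsSide t (g.right t) :=
  (exists_sides t).choose_spec.choose_spec.2.1

theorem IsSide.eq_left_or_eq_right {F : g.Face} (h : IsSide t F) : F = g.left t ∨ F = g.right t :=
  (exists_sides t).choose_spec.choose_spec.2.2 F h

variable (g) in
/-- Connectivity in the dual graph, through the dual edges of `B`. -/
abbrev DualConn (B : Set E) : g.Face → g.Face → Prop := EdgeConn g.left g.right B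

theorem DualConn.joinedIn {F F' : g.Face} (h : g.DualConn Aᶜ F F') {x y : ℂ} (hx : x ∈ F)
    (hy : y ∈ F') : JoinedIn (g.drawing A)ᶜ x y := by
  refine h.lift (r := fun F F' => ∀ x ∈ F, ∀ y ∈ F', JoinedIn (g.drawing A)ᶜ x y)
    ⟨fun F x hx y hy => ?_, fun h x hx y hy => (h y hy x hx).symm, fun {F G H} h h' x hx y hy => ?_⟩
    (fun e he x hx y hy => ?_) x hx y hy
  · exact (Face.joinedIn hx hy).mono (compl_drawing_subset (subset_univ A))
  · obtain ⟨z, hz⟩ := G.nonempty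
    exact (h x hx z hz).trans (h' z hz y hy)
  · obtain ⟨x', hx', hxe⟩ := isSide_left (g := g) e
    obtain ⟨y', hy', hye⟩ := isSide_right (g := g) e
    refine JoinedIn.trans ((Face.joinedIn hx hx').mono (compl_drawing_subset (subset_univ A)))
      (JoinedIn.trans ((joinedIn_of_mem_edgeRegion hxe hye).mono (compl_drawing_subset ?_))
        ((Face.joinedIn hy' hy).mono (compl_drawing_subset (subset_univ A))))
    exact subset_compl_singleton_iff.2 he

theorem exists_nhds_dualConn {z : ℂ} (hzB : z ∉ g.drawing Bᶜ)
    (hz : z ∉ range g.pos ∩ g.drawing univ) :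
    ∃ N ∈ 𝓝 z, ∀ x ∈ N, ∀ y ∈ N, ∀ F F' : g.Face, x ∈ F → y ∈ F' → g.DualConn B F F' := by
  by_cases hzD : z ∈ g.drawing univ
  · obtain ⟨t, -, s, hs, rfl⟩ := mem_drawing.1 hzD
    have htB : t ∈ B := by_contra fun htB => hzB (mem_drawing.2 ⟨t, htB, s, hs, rfl⟩)
    have hs0 : s ≠ 0 := by
      rintro rfl
      exact hz ⟨⟨_, (g.arc_zero t).symm⟩, hzD⟩
    have hs1 : s ≠ 1 := by
      rintro rfl
      exact hz ⟨⟨_, (g.arc_one t).symm⟩, hzD⟩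
    refine ⟨_, (isOpen_edgeRegion t).mem_nhds
      (arc_mem_edgeRegion ⟨hs.1.lt_of_ne' hs0, hs.2.lt_of_ne hs1⟩),
      fun x hx y hy F F' hxF hyF => ?_⟩
    rcases IsSide.eq_left_or_eq_right ⟨x, hxF, hx⟩ with rfl | rfl <;>
      rcases IsSide.eq_left_or_eq_right ⟨y, hyF, hy⟩ with rfl | rfl
    exacts [.refl _, .edge htB, (EdgeConn.edge htB).symm, .refl _]
  · obtain ⟨G, hG⟩ := exists_mem_face hzD
    refine ⟨G, (isOpen_face G).mem_nhds hG, fun x hx y hy F F' hxF hyF => ?_⟩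
    rw [Face.eq_of_mem hxF hx, Face.eq_of_mem hyF hy]

theorem dualConn_compl_of_joinedIn [Finite V] {F F' : g.Face} {x y : ℂ} (hx : x ∈ F) (hy : y ∈ F')
    (h : JoinedIn (g.drawing A)ᶜ x y) : g.DualConn Aᶜ F F' := by
  have hpunctured := joinedIn_sdiff_finite (isOpen_compl_drawing A)
    ((finite_range g.pos).inter_of_left (g.drawing univ)) h
    (fun hx' => Face.notMem_drawing hx hx'.2) (fun hy' => Face.notMem_drawing hy hy'.2)
  refine rel_of_joinedIn_of_dense (dense_compl_drawing (g := g) univ)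
    (R := fun x y => ∀ F F' : g.Face, x ∈ F → y ∈ F' → g.DualConn Aᶜ F F')
    (fun x _ y _ hxy F F' hx hy => (hxy F' F hy hx).symm)
    (fun x _ y hy' z _ hxy hyz F F' hx hz => ?_) (fun z hz => ?_) hpunctured
    (Face.notMem_drawing hx) (Face.notMem_drawing hy) F F' hx hy
  · obtain ⟨G, hG⟩ := exists_mem_face hy'
    exact (hxy F G hx hG).trans (hyz G F' hG hz)
  · obtain ⟨N, hN, hconn⟩ := exists_nhds_dualConn (B := Aᶜ) (by simpa using hz.1) hz.2
    exact ⟨N, hN, fun a ha b hb => hconn a ha.1 b hb.1⟩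

theorem joinedIn_compl_drawing_insert (ht : t ∉ A)
    (h : ¬ EdgeConn g.src g.tgt A (g.src t) (g.tgt t)) {x y : ℂ} (hx : x ∉ g.curve t)
    (hy : y ∉ g.curve t) (hxy : JoinedIn (g.drawing A)ᶜ x y) :
    JoinedIn (g.drawing (insert t A))ᶜ x y := by
  set P : V → Prop := EdgeConn g.src g.tgt A (g.src t)
  set A₁ : Set E := {e ∈ A | P (g.src e)}
  set A₂ : Set E := {e ∈ A | ¬ P (g.src e)}
  have hA : A₁ ∪ A₂ = A := by
    ext e
    simp only [A₁, A₂, mem_union, mem_ofPred_eq]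
    tauto
  have hends : ∀ e ∈ A, ∀ v, v = g.src e ∨ v = g.tgt e → (P v ↔ P (g.src e)) := by
    rintro e he v (rfl | rfl)
    exacts [Iff.rfl, (EdgeConn.edge he).congr_right.symm]
  have hdisj : Disjoint (g.drawing A₁) (g.drawing A₂) := disjoint_left.2 fun z hz₁ hz₂ => by
    obtain ⟨e₁, ⟨he₁, hP₁⟩, hze₁⟩ := mem_drawing.1 hz₁
    obtain ⟨e₂, ⟨he₂, hP₂⟩, hze₂⟩ := mem_drawing.1 hz₂
    obtain ⟨v, -, hv₁, hv₂⟩ := g.exists_eq_pos e₁ e₂ (by rintro rfl; exact hP₂ hP₁) z hze₁ hze₂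
    exact hP₂ ((hends e₂ he₂ v hv₂).1 ((hends e₁ he₁ v hv₁).2 hP₁))
  have hcontact₁ : g.drawing A₁ ∩ g.curve t ⊆ {g.pos (g.src t)} := by
    rintro z ⟨hz, hzt⟩
    obtain ⟨e, ⟨he, hP⟩, hze⟩ := mem_drawing.1 hz
    obtain ⟨v, rfl, rfl | rfl, hv⟩ := g.exists_eq_pos t e (by rintro rfl; exact ht he) z hzt hze
    exacts [rfl, (h ((hends e he _ hv).2 hP)).elim]
  have hcontact₂ : g.drawing A₂ ∩ g.curve t ⊆ {g.pos (g.tgt t)} := by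
    rintro z ⟨hz, hzt⟩
    obtain ⟨e, ⟨he, hP⟩, hze⟩ := mem_drawing.1 hz
    obtain ⟨v, rfl, rfl | rfl, hv⟩ := g.exists_eq_pos t e (by rintro rfl; exact ht he) z hzt hze
    exacts [(hP ((hends e he _ hv).1 (.refl _))).elim, rfl]
  rw [drawing_insert, ← hA, drawing_union, union_right_comm]
  exact joinedIn_compl_union_of_subsingleton_contacts (isCompact_drawing A₁) (isCompact_drawing A₂)
    hdisj (isCompact_curve t) (hasAllLogs_curve t) hcontact₁ hcontact₂ hx hy
    (by rwa [← drawing_union, hA])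

theorem IsSide.pos_src_mem_closure {F : g.Face} (h : IsSide t F) :
    g.pos (g.src t) ∈ closure (F : Set ℂ) := by
  obtain ⟨x, hx, hxt⟩ := h
  rw [← pathComponentIn_eq_face hx t, ← g.arc_zero]
  exact arc_zero_mem_closure_pathComponentIn (isCompact_drawing _) (g.continuousOn_arc t)
    (g.injOn_arc t) (drawing_inter_curve_subset (by simp)) (Face.notMem_curve hx)
    fun s hs => joinedIn_of_mem_edgeRegion hxt (arc_mem_edgeRegion hs)

theorem IsSide.pos_tgt_mem_closure {F : g.Face} (h : IsSide t F) :
    g.pos (g.tgt t) ∈ closure (F : Set ℂ) := by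
  obtain ⟨x, hx, hxt⟩ := h
  rw [← pathComponentIn_eq_face hx t, ← g.arc_one]
  exact arc_one_mem_closure_pathComponentIn (isCompact_drawing _) (g.continuousOn_arc t)
    (g.injOn_arc t) (drawing_inter_curve_subset (by simp)) (Face.notMem_curve hx)
    fun s hs => joinedIn_of_mem_edgeRegion hxt (arc_mem_edgeRegion hs)

theorem isOpen_of_mem_components {Z : Set ℂ} (hZ : Z ∈ g.components A) : IsOpen Z := by
  obtain ⟨x, -, rfl⟩ := hZ
  exact (isOpen_compl_drawing A).pathComponentIn x

theorem exists_face_subset_of_mem_components {Z : Set ℂ} (hZ : Z ∈ g.components A) :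
    ∃ F : g.Face, (F : Set ℂ) ⊆ Z := by
  have hne : Z.Nonempty := by
    obtain ⟨x, hx, rfl⟩ := hZ
    exact ⟨x, mem_pathComponentIn_self hx⟩
  obtain ⟨F, x, hxF, hxZ⟩ := exists_face_inter (g := g) (isOpen_of_mem_components hZ) hne
  refine ⟨F, fun y hy => ?_⟩
  rw [eq_pathComponentIn_of_mem_components hZ hxZ]
  exact (Face.joinedIn hxF hy).mono (compl_drawing_subset (subset_univ A))

theorem subset_of_mem_components_of_dualConn {Z : Set ℂ} (hZ : Z ∈ g.components A) {F F' : g.Face}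
    (hF : (F : Set ℂ) ⊆ Z) (h : g.DualConn Aᶜ F F') : (F' : Set ℂ) ⊆ Z := by
  obtain ⟨x, hx⟩ := F.nonempty
  rw [eq_pathComponentIn_of_mem_components hZ (hF hx)]
  exact fun y hy => h.joinedIn hx hy

variable [Finite V]

theorem dualConn_univ (F F' : g.Face) : g.DualConn univ F F' := by
  obtain ⟨x, hx⟩ := F.nonempty
  obtain ⟨y, hy⟩ := F'.nonempty
  rw [← compl_empty]
  refine dualConn_compl_of_joinedIn hx hy ?_
  simpa [drawing] using isPathConnected_univ.joinedIn x trivial y trivial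

instance : Finite g.Face := by
  obtain ⟨F₀⟩ := (inferInstance : Nonempty g.Face)
  refine finite_univ_iff.1 (((finite_range g.left).union (finite_range g.right)).insert F₀ |>.subset
    fun F _ => or_iff_not_imp_right.2 fun hF => ?_)
  refine ((dualConn_univ F₀ F).iff_of_forall_edge (P := fun G => G = F) fun e _ => ?_).2 rfl |>.symm
  exact ⟨fun h => (hF (.inl ⟨e, h⟩)).elim, fun h => (hF (.inr ⟨e, h⟩)).elim⟩

theorem dualConn_of_not_edgeConn (ht : t ∉ A)
    (h : ¬ EdgeConn g.src g.tgt A (g.src t) (g.tgt t)) :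
    g.DualConn (insert t A)ᶜ (g.left t) (g.right t) := by
  obtain ⟨x, hx, hxt⟩ := isSide_left (g := g) t
  obtain ⟨y, hy, hyt⟩ := isSide_right (g := g) t
  exact dualConn_compl_of_joinedIn hx hy <| joinedIn_compl_drawing_insert ht h
    (Face.notMem_curve hx) (Face.notMem_curve hy) <| (joinedIn_of_mem_edgeRegion hxt hyt).mono
      (compl_drawing_subset (subset_compl_singleton_iff.2 ht))

theorem pathComponentIn_sdiff_curve (ht : t ∉ A)
    (h : g.DualConn (insert t A)ᶜ (g.left t) (g.right t)) {x : ℂ} (hx : x ∈ g.left t)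
    (hxt : x ∈ g.edgeRegion t) :
    pathComponentIn (g.drawing A)ᶜ (g.arc t (1 / 2)) \ g.curve t =
      pathComponentIn (g.drawing (insert t A))ᶜ x := by
  have hxA : JoinedIn (g.drawing A)ᶜ (g.arc t (1 / 2)) x :=
    JoinedIn.mono hxt (compl_drawing_subset (subset_compl_singleton_iff.2 ht))
  have hle : (g.drawing (insert t A))ᶜ ⊆ (g.drawing A)ᶜ := compl_drawing_subset (subset_insert t A)
  have hinsert : ∀ {F}, g.DualConn Aᶜ (g.left t) F → g.DualConn (insert t A)ᶜ (g.left t) F :=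
    EdgeConn.of_edges fun e he => by
      rcases eq_or_ne e t with rfl | het
      exacts [h, .edge fun h' => h'.elim het he]
  ext z
  refine ⟨fun ⟨hz, hzt⟩ => ?_, fun hz => ⟨hxA.trans (JoinedIn.mono hz hle), fun hzt => ?_⟩⟩
  · have hzA : z ∈ (g.drawing (insert t A))ᶜ := by
      rw [drawing_insert]
      exact fun h => h.elim (JoinedIn.mem hz).2 hzt
    obtain ⟨F, w, hwF, hzw⟩ := exists_face_inter (g := g)
      ((isOpen_compl_drawing (insert t A)).pathComponentIn z) ⟨z, mem_pathComponentIn_self hzA⟩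
    have hF : g.DualConn Aᶜ (g.left t) F := dualConn_compl_of_joinedIn hx hwF <|
      (hxA.symm.trans hz).trans (JoinedIn.mono hzw hle)
    exact ((hinsert hF).joinedIn hx hwF).trans (JoinedIn.symm hzw)
  · exact (JoinedIn.mem hz).2 (mem_drawing.2 ⟨t, mem_insert t A, hzt⟩)

theorem not_dualConn_of_edgeConn (ht : t ∉ A) (h : EdgeConn g.src g.tgt A (g.src t) (g.tgt t)) :
    ¬ g.DualConn (insert t A)ᶜ (g.left t) (g.right t) := by
  intro hdual
  obtain ⟨x, hx, hxt⟩ := isSide_left (g := g) t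
  refine not_isPreconnected_pathComponentIn_sdiff_arc (isCompact_drawing A).isClosed
    (g.continuousOn_arc t) (g.injOn_arc t) ?_
    (fun s hs => joinedIn_compl_drawing_arc ht half_mem_Ioo hs) ?_
  · rw [g.arc_zero, g.arc_one]
    exact (joinedIn_drawing h).resolve_left (src_ne_tgt t)
  · change IsPreconnected (_ \ g.curve t)
    rw [pathComponentIn_sdiff_curve ht hdual hx hxt]
    refine (isPathConnected_pathComponentIn fun h' => ?_).isConnected.isPreconnected
    exact Face.notMem_drawing hx (drawing_mono (subset_univ _) h')

theorem dualConn_compl_insert_iff (ht : t ∉ A) :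
    g.DualConn (insert t A)ᶜ (g.left t) (g.right t) ↔
      ¬ EdgeConn g.src g.tgt A (g.src t) (g.tgt t) :=
  ⟨fun h h' => not_dualConn_of_edgeConn ht h' h, dualConn_of_not_edgeConn ht⟩

theorem dualConn_star {v : V} {F F' : g.Face} (hF : g.pos v ∈ closure (F : Set ℂ))
    (hF' : g.pos v ∈ closure (F' : Set ℂ)) : g.DualConn (g.star v) F F' := by
  have hO : IsOpen (pathComponentIn (g.drawing (g.star v)ᶜ)ᶜ (g.pos v)) :=
    (isOpen_compl_drawing _).pathComponentIn _
  have hv : g.pos v ∈ pathComponentIn (g.drawing (g.star v)ᶜ)ᶜ (g.pos v) :=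
    mem_pathComponentIn_self (pos_notMem_drawing_compl_star v)
  obtain ⟨x, hxv, hx⟩ := mem_closure_iff.1 hF _ hO hv
  obtain ⟨y, hyv, hy⟩ := mem_closure_iff.1 hF' _ hO hv
  rw [← compl_compl (g.star v)]
  exact dualConn_compl_of_joinedIn hx hy (JoinedIn.trans (JoinedIn.symm hxv) hyv)

theorem dualConn_left_of_mem_components {Z : Set ℂ} (hZ : Z ∈ g.components A) {F : g.Face}
    (hF : (F : Set ℂ) ⊆ Z) {z : ℂ} (hzZ : z ∈ Z) {e : E} (he : e ∉ A) (hze : z ∈ g.curve e) :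
    g.DualConn Aᶜ F (g.left e) := by
  have hz : z ∈ closure (g.arc e '' Ioo 0 1) := by
    have hcont := g.continuousOn_arc e
    rw [← closure_Ioo zero_ne_one] at hcont
    refine hcont.image_closure ?_
    rwa [closure_Ioo zero_ne_one]
  obtain ⟨_, hsZ, s, hs, rfl⟩ := mem_closure_iff.1 hz Z (isOpen_of_mem_components hZ) hzZ
  obtain ⟨x, hx⟩ := F.nonempty
  obtain ⟨y, hy, hye⟩ := isSide_left (g := g) e
  refine dualConn_compl_of_joinedIn hx hy (JoinedIn.trans (y := g.arc e s) ?_ ?_)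
  · rwa [eq_pathComponentIn_of_mem_components hZ (hF hx)] at hsZ
  · exact (joinedIn_of_mem_edgeRegion (arc_mem_edgeRegion hs) hye).mono
      (compl_drawing_subset (subset_compl_singleton_iff.2 he))

theorem mem_components_univ_of_forall_ne {Z : Set ℂ} (hZ : Z ∈ g.components A) {F : g.Face}
    (hF : (F : Set ℂ) ⊆ Z) (hne : ∀ e ∉ A, g.left e ≠ F ∧ g.right e ≠ F) :
    Z ∈ g.components univ := by
  have hZuniv : Z ⊆ (g.drawing univ)ᶜ := fun z hz hzD => by
    obtain ⟨e, -, hze⟩ := mem_drawing.1 hzD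
    have he : e ∉ A := fun he => by
      rw [eq_pathComponentIn_of_mem_components hZ hz] at hz
      exact (JoinedIn.mem hz).1 (mem_drawing.2 ⟨e, he, hze⟩)
    exact (hne e he).1 <| ((dualConn_left_of_mem_components hZ hF hz he hze).iff_of_forall_edge
      (P := fun G => G = F) fun f hf => iff_of_false (hne f hf).1 (hne f hf).2).1 rfl
  obtain ⟨x, hx⟩ := F.nonempty
  suffices Z = F from this ▸ F.2
  refine (hF.antisymm ?_).symm
  have hZx := eq_pathComponentIn_of_mem_components hZ (hF hx)
  have hpath : IsPathConnected Z :=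
    hZx ▸ isPathConnected_pathComponentIn fun h => hZuniv (hF hx) (drawing_mono (subset_univ A) h)
  exact fun y hy => Face.mem_of_joinedIn hx ((hpath.joinedIn x (hF hx) y hy).mono hZuniv)

theorem ncard_components_sdiff_le {C : Set g.Face} {Q : Finset g.Face}
    (hQ : ∀ F ∉ C, ∃ q ∈ Q, g.DualConn {e | g.left e ∉ C ∧ g.right e ∉ C} F q) :
    (g.components {e | g.left e ∈ C} \ g.components univ).ncard ≤ Q.card := by
  set A : Set E := {e | g.left e ∈ C}
  have hsub : {e | g.left e ∉ C ∧ g.right e ∉ C} ⊆ Aᶜ := fun e he => he.1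
  have hcover : ∀ Z ∈ g.components A \ g.components univ, ∃ q ∈ Q, (q : Set ℂ) ⊆ Z := by
    rintro Z ⟨hZ, hZuniv⟩
    obtain ⟨F, hF⟩ := exists_face_subset_of_mem_components hZ
    obtain ⟨F', hF'C, hFF'⟩ : ∃ F' ∉ C, g.DualConn Aᶜ F F' := by
      by_contra! hC
      have hFC : F ∈ C := by_contra fun hFC => hC F hFC (.refl F)
      refine hZuniv (mem_components_univ_of_forall_ne hZ hF fun e he => ⟨?_, ?_⟩)
      · exact fun h => he (h ▸ hFC : g.left e ∈ C)
      · exact fun h => hC (g.left e) he (h ▸ (EdgeConn.edge he).symm)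
    obtain ⟨q, hq, hF'q⟩ := hQ F' hF'C
    exact ⟨q, hq, subset_of_mem_components_of_dualConn hZ hF (hFF'.trans (hF'q.mono hsub))⟩
  choose! f hfQ hfZ using hcover
  rw [← ncard_coe_finset]
  refine ncard_le_ncard_of_injOn f hfQ (fun Z hZ Z' hZ' hf => ?_) Q.finite_toSet
  obtain ⟨x, hx⟩ := (f Z).nonempty
  rw [eq_pathComponentIn_of_mem_components hZ.1 (hfZ Z hZ hx),
    eq_pathComponentIn_of_mem_components hZ'.1 (hfZ Z' hZ' (hf ▸ hx))]

end PlaneMultigraph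

end PlaneMultigraph

/-! ### Triangulations -/

/-- The combinatorial data of a simple plane graph with vertices `V`, edges `E` and faces `Φ` in
which each face has at most three vertices on its boundary: the ends and the sides of the edges and
the vertices of the faces. Of the plane topology only two facts are kept: an edge closes a cycle
with `A` exactly if its sides are separated by `insert t A`, and the dual graph is connected. -/
structure PlaneTriangulation (V E Φ : Type*) where
  src : E → V
  tgt : E → V
  left : E → Φ
  right : E → Φ
  src_ne_tgt : ∀ e, src e ≠ tgt e
  eq_of_ends_eq : ∀ e e', s(src e, tgt e) = s(src e', tgt e') → e = e'
  vert : Φ → Finset V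
  card_vert_le : ∀ F, (vert F).card ≤ 3
  src_mem_vert_left : ∀ e, src e ∈ vert (left e)
  src_mem_vert_right : ∀ e, src e ∈ vert (right e)
  tgt_mem_vert_left : ∀ e, tgt e ∈ vert (left e)
  tgt_mem_vert_right : ∀ e, tgt e ∈ vert (right e)
  dualConn_compl_insert_iff : ∀ (A : Set E) (t : E), t ∉ A →
    (EdgeConn left right (insert t A)ᶜ (left t) (right t) ↔ ¬ EdgeConn src tgt A (src t) (tgt t))
  dualConn_univ : ∀ F F', EdgeConn left right Set.univ F F'

namespace PlaneTriangulation

open scoped Classical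

section Edges

variable {V E Φ : Type*} (g : PlaneTriangulation V E Φ)

/-- Connectivity of vertices through the edges in `A`. -/
abbrev Conn (A : Set E) : V → V → Prop := EdgeConn g.src g.tgt A

/-- Connectivity of faces through the sides of the edges in `A`. -/
abbrev DualConn (A : Set E) : Φ → Φ → Prop := EdgeConn g.left g.right A

theorem dualConn_compl_iff {A : Set E} {t : E} (ht : t ∈ A) :
    g.DualConn Aᶜ (g.left t) (g.right t) ↔ ¬ g.Conn (A \ {t}) (g.src t) (g.tgt t) := by
  simpa [Set.insert_eq_of_mem ht] using g.dualConn_compl_insert_iff (A \ {t}) t (by simp)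

theorem card_offDiag_vert_le (F : Φ) : ((g.vert F).offDiag.image Sym2.mk.uncurry).card ≤ 3 := by
  have h := Sym2.card_image_offDiag (g.vert F)
  have h3 : ((g.vert F).card).choose 2 ≤ 3 := Nat.choose_le_choose 2 (g.card_vert_le F)
  refine le_trans (le_of_eq ?_) h3
  convert h

variable [Fintype E]

/-- The edges on the boundary of the face `F`. -/
noncomputable def edgesAt (F : Φ) : Finset E := {e | g.left e = F ∨ g.right e = F}

variable {g} {F : Φ} {e : E}

theorem mem_edgesAt : e ∈ g.edgesAt F ↔ g.left e = F ∨ g.right e = F := by simp [edgesAt]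

theorem ends_mem_vert (h : e ∈ g.edgesAt F) : g.src e ∈ g.vert F ∧ g.tgt e ∈ g.vert F := by
  rcases mem_edgesAt.1 h with rfl | rfl
  · exact ⟨g.src_mem_vert_left e, g.tgt_mem_vert_left e⟩
  · exact ⟨g.src_mem_vert_right e, g.tgt_mem_vert_right e⟩

variable (g) (F)

theorem image_edgesAt_subset : (g.edgesAt F).image (fun e => s(g.src e, g.tgt e)) ⊆
    (g.vert F).offDiag.image Sym2.mk.uncurry := by
  intro z hz
  obtain ⟨e, he, rfl⟩ := Finset.mem_image.1 hz
  obtain ⟨hs, ht⟩ := ends_mem_vert he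
  exact Finset.mem_image.2
    ⟨(g.src e, g.tgt e), Finset.mem_offDiag.2 ⟨hs, ht, g.src_ne_tgt e⟩, rfl⟩

theorem card_image_edgesAt :
    ((g.edgesAt F).image fun e => s(g.src e, g.tgt e)).card = (g.edgesAt F).card :=
  Finset.card_image_of_injective _ fun _ _ => g.eq_of_ends_eq _ _

theorem card_edgesAt_le : (g.edgesAt F).card ≤ 3 := by
  rw [← g.card_image_edgesAt F]
  exact (Finset.card_le_card (g.image_edgesAt_subset F)).trans (g.card_offDiag_vert_le F)

theorem sum_card_inter_edgesAt_le (R : Finset Φ) (T : Finset E) :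
    ∑ F ∈ R, (T ∩ g.edgesAt F).card ≤ 2 * T.card := by
  have hsplit : ∀ F ∈ R, (T ∩ g.edgesAt F).card ≤
      (T.filter (g.left · = F)).card + (T.filter (g.right · = F)).card := by
    intro F _
    refine le_trans (Finset.card_le_card fun e he => ?_) (Finset.card_union_le _ _)
    simp only [Finset.mem_inter, mem_edgesAt, Finset.mem_union, Finset.mem_filter] at *
    tauto
  have hfiber (f : E → Φ) : ∑ F ∈ R, (T.filter (f · = F)).card ≤ T.card := by
    convert (Finset.sum_card_fiberwise_eq_card_filter T R f).trans_le (Finset.card_filter_le _ _)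
  refine (Finset.sum_le_sum hsplit).trans ?_
  rw [Finset.sum_add_distrib, two_mul]
  exact Nat.add_le_add (hfiber g.left) (hfiber g.right)

variable [Nontrivial Φ]

-- Otherwise crossing edges away from `F` would connect the sides of every edge at `F`.
theorem exists_mem_edgesAt_conn : ∃ t ∈ g.edgesAt F,
    g.Conn ((g.edgesAt F : Set E) \ {t}) (g.src t) (g.tgt t) := by
  by_contra! hcon
  have hsides : ∀ e, g.DualConn (g.edgesAt F : Set E)ᶜ (g.left e) (g.right e) := by
    intro e
    by_cases he : e ∈ g.edgesAt F
    · exact (g.dualConn_compl_iff he).2 (hcon e he)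
    · exact .edge (by simpa using he)
  obtain ⟨F', hF'⟩ := exists_ne F
  have hconn : g.DualConn (g.edgesAt F : Set E)ᶜ F F' :=
    (g.dualConn_univ F F').of_edges fun e _ => hsides e
  refine hF' ((hconn.iff_of_forall_edge (P := (· = F)) fun e he => ?_).1 rfl)
  simp only [Set.mem_compl_iff, Finset.mem_coe, mem_edgesAt, not_or] at he
  simp only [he]

theorem card_edgesAt : (g.edgesAt F).card = 3 := by
  obtain ⟨t, ht, hconn⟩ := g.exists_mem_edgesAt_conn F
  by_contra hne
  have hle := g.card_edgesAt_le F
  rw [← Finset.coe_erase] at hconn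
  have hcard : ((g.edgesAt F).erase t).card ≤ 1 := by rw [Finset.card_erase_of_mem ht]; lia
  have : Nonempty E := ⟨t⟩
  obtain ⟨f, hf⟩ := Finset.card_le_one_iff_subset_singleton.1 hcard
  obtain rfl := g.eq_of_ends_eq t f
    (hconn.mk_eq_of_subset_singleton (mod_cast hf) (g.src_ne_tgt t))
  have hempty : (g.edgesAt F).erase t = ∅ :=
    Finset.eq_empty_of_forall_notMem fun x hx =>
      Finset.ne_of_mem_erase hx (Finset.mem_singleton.1 (hf hx))
  rw [hempty, Finset.coe_empty] at hconn
  exact g.src_ne_tgt t hconn.eq_of_empty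

variable {F} in
theorem exists_mem_edgesAt {a b : V} (ha : a ∈ g.vert F) (hb : b ∈ g.vert F) (hab : a ≠ b) :
    ∃ e ∈ g.edgesAt F, s(g.src e, g.tgt e) = s(a, b) := by
  have himage := Finset.eq_of_subset_of_card_le (g.image_edgesAt_subset F)
    (by rw [card_image_edgesAt, g.card_edgesAt]; exact g.card_offDiag_vert_le F)
  have : s(a, b) ∈ (g.vert F).offDiag.image Sym2.mk.uncurry :=
    Finset.mem_image.2 ⟨(a, b), Finset.mem_offDiag.2 ⟨ha, hb, hab⟩, rfl⟩
  simpa [← himage] using this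

end Edges

-- A spanning forest and the complementary dual forest together contain all edges.
theorem card_faces_le {V E Φ : Type*} [Fintype V] [Finite E] [Fintype Φ] [Nontrivial Φ]
    (g : PlaneTriangulation V E Φ) : Fintype.card Φ ≤ 2 * Fintype.card V := by
  have := Fintype.ofFinite E
  obtain ⟨T, -, -, hT, hspan⟩ := EdgeAcyclic.exists_spanning (s := g.src) (t := g.tgt) (A := ∅)
    (B := Set.univ) (fun e he => he.elim) (Set.empty_subset _)
  have hTdual : EdgeAcyclic g.left g.right Tᶜ := by
    intro e he hconn
    refine (g.dualConn_compl_insert_iff T e he).1 ?_ (hspan e trivial)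
    rwa [Set.insert_eq, Set.union_comm, Set.compl_union]
  have hle := hT.ncard_le
  have hdual_le := hTdual.ncard_le
  have hsum := g.sum_card_inter_edgesAt_le Finset.univ Finset.univ
  have hT_compl := Set.ncard_add_ncard_compl T
  simp only [Finset.univ_inter, card_edgesAt, Finset.sum_const, Finset.card_univ,
    smul_eq_mul, Nat.card_eq_fintype_card] at *
  lia

end PlaneTriangulation

/-! ### Breadth-first levels with contracted edges -/

section Levels

variable {E V : Type*} {s t : E → V} {X A : Set E} {u v w : V} {e : E}

namespace EdgeConn

theorem of_ends_eq (he : e ∈ A) (h : s(s e, t e) = s(u, v)) : EdgeConn s t A u v := by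
  rcases Sym2.eq_iff.1 h with ⟨rfl, rfl⟩ | ⟨rfl, rfl⟩
  · exact .edge he
  · exact (EdgeConn.edge he).symm

/-- A representative of the component of `v` in the graph with edges `A`. -/
noncomputable def rep (s t : E → V) (A : Set E) (v : V) : V :=
  (Quotient.mk ⟨EdgeConn s t A, equivalence s t A⟩ v).out

theorem rep_eq (h : EdgeConn s t A u v) : rep s t A u = rep s t A v :=
  congrArg Quotient.out (Quotient.sound h)

theorem rep_conn (v : V) : EdgeConn s t A (rep s t A v) v := Quotient.mk_out (s := ⟨_, _⟩) v

end EdgeConn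

/-- `level` is a breadth-first levelling, with one root in each component, of the graph obtained by
contracting the edges in `X`. -/
structure IsLevelling (s t : E → V) (X : Set E) (level : V → ℕ) : Prop where
  eq_of_conn : ∀ {u v}, EdgeConn s t X u v → level u = level v
  le_add_one : ∀ {e u v}, s(s e, t e) = s(u, v) → level u ≤ level v + 1
  exists_lower : ∀ {v}, 0 < level v →
    ∃ w u e, EdgeConn s t X v w ∧ e ∉ X ∧ s(s e, t e) = s(w, u) ∧ level u + 1 = level v
  conn_of_eq_zero : ∀ {u v}, level u = 0 → level v = 0 → EdgeConn s t Set.univ u v →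
    EdgeConn s t X u v

/-- `v` is reached from the root of its component by a walk with `k` edges outside `X`. -/
def ReachIn (s t : E → V) (X : Set E) : ℕ → V → Prop
  | 0, v => EdgeConn s t X (EdgeConn.rep s t Set.univ v) v
  | k + 1, v => ∃ u w e, e ∉ X ∧ ReachIn s t X k u ∧ s(s e, t e) = s(u, w) ∧ EdgeConn s t X w v

namespace ReachIn

variable {k : ℕ}

theorem trans_conn (h : ReachIn s t X k u) (huv : EdgeConn s t X u v) : ReachIn s t X k v := by
  cases k with
  | zero =>
    have hrep := EdgeConn.rep_eq (huv.mono (Set.subset_univ _))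
    simp only [ReachIn] at h ⊢
    exact hrep ▸ h.trans huv
  | succ k =>
    obtain ⟨a, b, e, he, ha, hab, hbu⟩ := h
    exact ⟨a, b, e, he, ha, hab, hbu.trans huv⟩

theorem exists_of_edge (h : ReachIn s t X k u) (he : s(s e, t e) = s(u, v)) :
    ∃ k' ≤ k + 1, ReachIn s t X k' v := by
  by_cases heX : e ∈ X
  · exact ⟨k, k.le_succ, h.trans_conn (.of_ends_eq heX he)⟩
  · exact ⟨k + 1, le_rfl, u, v, e, heX, h, he, .refl _⟩

variable (s t X) in
theorem exists_reachIn (v : V) : ∃ k, ReachIn s t X k v := by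
  have hroot : EdgeConn s t Set.univ (EdgeConn.rep s t Set.univ v) v := EdgeConn.rep_conn v
  refine (hroot.iff_of_forall_edge (P := fun v => ∃ k, ReachIn s t X k v) fun e _ => ?_).1 ⟨0, ?_⟩
  · constructor <;> rintro ⟨k, hk⟩
    · exact (hk.exists_of_edge rfl).imp fun _ => And.right
    · exact (hk.exists_of_edge Sym2.eq_swap).imp fun _ => And.right
  · simp only [ReachIn]
    rw [EdgeConn.rep_eq hroot]

end ReachIn

theorem exists_isLevelling (s t : E → V) (X : Set E) : ∃ level, IsLevelling s t X level := by
  classical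
  let level v := Nat.find (ReachIn.exists_reachIn s t X v)
  have hlevel v : ReachIn s t X (level v) v := Nat.find_spec (ReachIn.exists_reachIn s t X v)
  have hmin {v k} (h : ReachIn s t X k v) : level v ≤ k := Nat.find_min' _ h
  have heq {u v} (h : EdgeConn s t X u v) : level u = level v :=
    le_antisymm (hmin ((hlevel v).trans_conn h.symm)) (hmin ((hlevel u).trans_conn h))
  have hstep {e u v} (he : s(s e, t e) = s(u, v)) : level u ≤ level v + 1 := by
    obtain ⟨k', hk', h⟩ := (hlevel v).exists_of_edge (he.trans Sym2.eq_swap)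
    exact (hmin h).trans hk'
  refine ⟨level, heq, hstep, fun {v} hv => ?_, fun {u v} hu hv huv => ?_⟩
  · obtain ⟨j, hj⟩ := Nat.exists_eq_add_one.2 hv
    obtain ⟨u, w, e, he, hu, huw, hwv⟩ := hj ▸ hlevel v
    have hwu := huw.trans Sym2.eq_swap
    refine ⟨w, u, e, hwv.symm, he, hwu, le_antisymm ?_ ?_⟩
    · exact hj ▸ Nat.succ_le_succ (hmin hu)
    · exact (heq hwv).symm.trans_le (hstep hwu)
  · have hru := hu ▸ hlevel u
    have hrv := hv ▸ hlevel v
    simp only [ReachIn] at hru hrv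
    exact (EdgeConn.rep_eq huv ▸ hru).symm.trans hrv

theorem IsLevelling.union {level : V → ℕ} (h : IsLevelling s t X level)
    (hA : ∀ e ∈ A, level (s e) = level (t e)) : IsLevelling s t (X ∪ A) level where
  eq_of_conn huv := by
    refine huv.lift (r := fun a b => level a = level b) ⟨fun _ => rfl, Eq.symm, Eq.trans⟩ ?_
    rintro e (he | he)
    exacts [h.eq_of_conn (.edge he), hA e he]
  le_add_one := h.le_add_one
  exists_lower {v} hv := by
    obtain ⟨w, u, e, hvw, he, hwu, hlt⟩ := h.exists_lower hv
    refine ⟨w, u, e, hvw.mono Set.subset_union_left, ?_, hwu, hlt⟩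
    rintro (heX | heA)
    · exact he heX
    · have hends := hA e heA
      have hw := h.eq_of_conn hvw
      rcases Sym2.eq_iff.1 hwu with ⟨rfl, rfl⟩ | ⟨rfl, rfl⟩ <;> lia
  conn_of_eq_zero hu hv huv := (h.conn_of_eq_zero hu hv huv).mono Set.subset_union_left

/-- A breadth-first tree of the graph obtained by contracting the edges in `X`: the component of `v`
in `X` hangs by the edge `parentEdge v`, leading from its vertex `attach v` to `parent v`. At level
`0` the values of these three functions are irrelevant. -/
structure LevelTree (s t : E → V) (X : Set E) where
  level : V → ℕ
  isLevelling : IsLevelling s t X level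
  parentEdge : V → E
  parent : V → V
  attach : V → V
  conn_attach : ∀ {v}, 0 < level v → EdgeConn s t X v (attach v)
  parentEdge_notMem : ∀ {v}, 0 < level v → parentEdge v ∉ X
  ends_parentEdge : ∀ {v}, 0 < level v →
    s(s (parentEdge v), t (parentEdge v)) = s(attach v, parent v)
  level_parent_add_one : ∀ {v}, 0 < level v → level (parent v) + 1 = level v
  parentEdge_congr : ∀ {u v}, EdgeConn s t X u v → parentEdge u = parentEdge v
  parent_congr : ∀ {u v}, EdgeConn s t X u v → parent u = parent v

theorem IsLevelling.exists_levelTree [Nonempty E] {level : V → ℕ} (h : IsLevelling s t X level) :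
    ∃ T : LevelTree s t X, T.level = level := by
  have hlower v : ∃ w u e, 0 < level v →
      EdgeConn s t X v w ∧ e ∉ X ∧ s(s e, t e) = s(w, u) ∧ level u + 1 = level v := by
    by_cases hv : 0 < level v
    · obtain ⟨w, u, e, hwue⟩ := h.exists_lower hv
      exact ⟨w, u, e, fun _ => hwue⟩
    · exact ⟨v, v, Classical.arbitrary E, fun hv' => (hv hv').elim⟩
  choose w u e hwue using hlower
  have hrep v : level (EdgeConn.rep s t X v) = level v := h.eq_of_conn (EdgeConn.rep_conn v)
  refine ⟨⟨level, h, fun v => e (EdgeConn.rep s t X v), fun v => u (EdgeConn.rep s t X v),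
    fun v => w (EdgeConn.rep s t X v), fun {v} hv => ?_, fun {v} hv => ?_, fun {v} hv => ?_,
    fun {v} hv => ?_, fun huv => ?_, fun huv => ?_⟩, rfl⟩
  · exact (EdgeConn.rep_conn v).symm.trans (hwue _ ((hrep v).symm ▸ hv)).1
  · exact (hwue _ ((hrep v).symm ▸ hv)).2.1
  · exact (hwue _ ((hrep v).symm ▸ hv)).2.2.1
  · exact (hwue _ ((hrep v).symm ▸ hv)).2.2.2.trans (hrep v)
  · simp only [EdgeConn.rep_eq huv]
  · simp only [EdgeConn.rep_eq huv]

namespace LevelTree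

variable (T : LevelTree s t X) {c c' : V}

/-- `c` is an ancestor of `v` in the tree `T`, up to moving within components of `X`. -/
inductive IsAncestor (T : LevelTree s t X) (c : V) : V → Prop
  | base {v : V} : EdgeConn s t X c v → IsAncestor T c v
  | step {v : V} : 0 < T.level v → IsAncestor T c (T.parent v) → IsAncestor T c v

/-- The edges of the tree `T`. -/
def edges : Set E := {e | ∃ v, 0 < T.level v ∧ T.parentEdge v = e}

/-- The edges that belong neither to the contracted edges `X` nor to the tree `T`. -/
def coedges : Set E := (X ∪ T.edges)ᶜ

variable {T}

namespace IsAncestor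

theorem level_le (h : T.IsAncestor c v) : T.level c ≤ T.level v := by
  induction h with
  | base h => exact (T.isLevelling.eq_of_conn h).le
  | step hv _ ih => exact ih.trans ((T.level_parent_add_one hv).symm ▸ Nat.le_succ _)

theorem trans_conn (h : T.IsAncestor c u) (huv : EdgeConn s t X u v) : T.IsAncestor c v := by
  cases h with
  | base h => exact .base (h.trans huv)
  | step hu h => exact .step (T.isLevelling.eq_of_conn huv ▸ hu) (T.parent_congr huv ▸ h)

theorem iff_of_conn (huv : EdgeConn s t X u v) : T.IsAncestor c u ↔ T.IsAncestor c v :=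
  ⟨fun h => h.trans_conn huv, fun h => h.trans_conn huv.symm⟩

theorem iff_parent (hv : 0 < T.level v) (hc : ¬ EdgeConn s t X c v) :
    T.IsAncestor c v ↔ T.IsAncestor c (T.parent v) := by
  refine ⟨fun h => ?_, .step hv⟩
  cases h with
  | base h => exact (hc h).elim
  | step _ h => exact h

theorem level_lt (h : T.IsAncestor c (T.parent v)) (hv : 0 < T.level v) :
    T.level c < T.level v :=
  T.level_parent_add_one hv ▸ Nat.lt_succ_of_le h.level_le

theorem conn_of_level_eq (h : T.IsAncestor c v) (h' : T.IsAncestor c' v)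
    (hlevel : T.level c = T.level c') : EdgeConn s t X c c' := by
  induction h with
  | base h =>
    cases h' with
    | base h' => exact h.trans h'.symm
    | step hv h' =>
      have := T.isLevelling.eq_of_conn h
      exact absurd (h'.level_lt hv) (by lia)
  | step hv h ih =>
    cases h' with
    | base h' =>
      have := T.isLevelling.eq_of_conn h'
      exact absurd (h.level_lt hv) (by lia)
    | step _ h' => exact ih h'

theorem iff_of_ends_eq (h : s(s e, t e) = s(u, v)) :
    (T.IsAncestor c (s e) ↔ T.IsAncestor c (t e)) ↔ (T.IsAncestor c u ↔ T.IsAncestor c v) := by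
  rcases Sym2.eq_iff.1 h with ⟨rfl, rfl⟩ | ⟨rfl, rfl⟩
  · rfl
  · exact iff_comm

end IsAncestor

variable (T) in
theorem conn_union_edges (h : EdgeConn s t Set.univ u v) : EdgeConn s t (X ∪ T.edges) u v := by
  have hroot : ∀ n v, T.level v = n → ∃ z, T.level z = 0 ∧ EdgeConn s t (X ∪ T.edges) v z := by
    intro n
    induction n with
    | zero => exact fun v hv => ⟨v, hv, .refl _⟩
    | succ n ih =>
      intro v hv
      have hpos : 0 < T.level v := hv ▸ n.succ_pos
      obtain ⟨z, hz, hvz⟩ := ih (T.parent v) (by have := T.level_parent_add_one hpos; lia)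
      refine ⟨z, hz, (((T.conn_attach hpos).mono Set.subset_union_left).trans ?_).trans hvz⟩
      exact .of_ends_eq (Or.inr ⟨v, hpos, rfl⟩) (T.ends_parentEdge hpos)
  obtain ⟨z, hz, huz⟩ := hroot _ u rfl
  obtain ⟨z', hz', hvz⟩ := hroot _ v rfl
  have hzz : EdgeConn s t X z z' := T.isLevelling.conn_of_eq_zero hz hz'
    (((huz.mono (Set.subset_univ _)).symm.trans h).trans (hvz.mono (Set.subset_univ _)))
  exact (huz.trans (hzz.mono Set.subset_union_left)).trans hvz.symm

-- The set of descendants of `c` is a union of components of `B`, and `parentEdge c` leaves it.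
theorem not_conn_parentEdge (hc : 0 < T.level c) {B : Set E}
    (hB : ∀ e ∈ B, e ∈ X ∨ e ∈ T.edges \ {T.parentEdge c} ∨
      (T.IsAncestor c (s e) ↔ T.IsAncestor c (t e))) :
    ¬ EdgeConn s t B (s (T.parentEdge c)) (t (T.parentEdge c)) := by
  have hinv : ∀ e ∈ B, T.IsAncestor c (s e) ↔ T.IsAncestor c (t e) := by
    intro e he
    rcases hB e he with h | ⟨⟨v, hv, rfl⟩, hne⟩ | h
    · exact IsAncestor.iff_of_conn (.edge h)
    · have hcv : ¬ EdgeConn s t X c v := fun h => hne (T.parentEdge_congr h).symm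
      rw [IsAncestor.iff_of_ends_eq (T.ends_parentEdge hv),
        ← IsAncestor.iff_of_conn (T.conn_attach hv)]
      exact IsAncestor.iff_parent hv hcv
    · exact h
  intro hconn
  have hiff := (IsAncestor.iff_of_ends_eq (T.ends_parentEdge hc)).1
    (hconn.iff_of_forall_edge hinv)
  exact ((hiff.1 (.base (T.conn_attach hc))).level_lt hc).false

end LevelTree

end Levels

/-! ### Dual trees with short fundamental cuts -/

namespace PlaneTriangulation

open scoped Classical

section Coedges

variable {V E Φ : Type*} {g : PlaneTriangulation V E Φ} {X : Set E}
  {T : LevelTree g.src g.tgt X} {c : V}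

variable (T) in
theorem acyclic_coedges : EdgeAcyclic g.left g.right T.coedges := by
  intro e he hconn
  refine (g.dualConn_compl_insert_iff _ e he).1 ?_ (T.conn_union_edges (.edge trivial))
  rwa [Set.insert_eq, Set.union_comm, Set.compl_union]

theorem dualConn_coedges_sdiff (hc : 0 < T.level c) {D : Set E} (hcD : T.parentEdge c ∉ D)
    (hD : ∀ e ∈ D, T.IsAncestor c (g.src e) ↔ T.IsAncestor c (g.tgt e)) :
    g.DualConn (T.coedges \ D) (g.left (T.parentEdge c)) (g.right (T.parentEdge c)) := by
  have hnot : T.parentEdge c ∉ X ∪ (T.edges \ {T.parentEdge c}) ∪ D := by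
    simp [T.parentEdge_notMem hc, hcD]
  refine ((g.dualConn_compl_insert_iff _ _ hnot).2 (T.not_conn_parentEdge hc ?_)).mono ?_
  · rintro e ((he | he) | he)
    exacts [.inl he, .inr (.inl he), .inr (.inr (hD e he))]
  · intro e he
    simp only [LevelTree.coedges, Set.mem_compl_iff, Set.mem_insert_iff, Set.mem_union,
      Set.mem_sdiff, Set.mem_singleton_iff] at he ⊢
    tauto

theorem dualConn_coedges {t : E} (ht : t ∈ T.edges) :
    g.DualConn T.coedges (g.left t) (g.right t) := by
  obtain ⟨c, hc, rfl⟩ := ht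
  simpa using dualConn_coedges_sdiff hc (Set.notMem_empty _) (by simp)

/-- The tree edges on the path from `x` to the root whose left side is joined to the face `F` by
edges outside the tree. -/
def rootPathEdges (T : LevelTree g.src g.tgt X) (x : V) (F : Φ) : Set E :=
  {t | ∃ c, 0 < T.level c ∧ T.parentEdge c = t ∧ T.IsAncestor c x ∧
    g.DualConn T.coedges (g.left t) F}

theorem mem_rootPathEdges_of_not_dualConn {e t : E} (he : e ∈ T.coedges) (ht : t ∈ T.edges)
    (h : ¬ g.DualConn (T.coedges \ {e}) (g.left t) (g.right t)) :
    t ∈ rootPathEdges T (g.src e) (g.left e) ∪ rootPathEdges T (g.tgt e) (g.left e) := by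
  have hleft : g.DualConn T.coedges (g.left t) (g.left e) := by
    have hconn := dualConn_coedges ht
    rw [← Set.insert_sdiff_self_of_mem he] at hconn
    rcases hconn.of_insert with h' | ⟨h', -⟩ | ⟨h', -⟩
    · exact (h h').elim
    · exact h'.mono Set.sdiff_subset
    · exact (h'.mono Set.sdiff_subset).trans (EdgeConn.edge he).symm
  have hte : t ≠ e := by rintro rfl; exact he (.inr ht)
  obtain ⟨c, hc, rfl⟩ := ht
  by_contra hnot
  rw [Set.mem_union, not_or] at hnot
  refine h (dualConn_coedges_sdiff hc hte fun f hf => ?_)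
  rw [Set.mem_singleton_iff.1 hf]
  exact iff_of_false (fun ha => hnot.1 ⟨c, hc, rfl, ha, hleft⟩)
    (fun ha => hnot.2 ⟨c, hc, rfl, ha, hleft⟩)

end Coedges

section Bands

variable {V E Φ : Type*} {g : PlaneTriangulation V E Φ}

/-- The smallest level of a vertex of the face `F`. -/
noncomputable def minLevel (g : PlaneTriangulation V E Φ) (level : V → ℕ) (F : Φ) : ℕ :=
  sInf (level '' g.vert F)

theorem minLevel_le (level : V → ℕ) {F : Φ} {v : V} (hv : v ∈ g.vert F) :
    g.minLevel level F ≤ level v :=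
  Nat.sInf_le ⟨v, hv, rfl⟩

theorem le_minLevel_add_one [Finite E] [Nontrivial Φ] {level : V → ℕ} {X : Set E}
    (h : IsLevelling g.src g.tgt X level) {F : Φ} {v : V} (hv : v ∈ g.vert F) :
    level v ≤ g.minLevel level F + 1 := by
  have := Fintype.ofFinite E
  obtain ⟨u, hu, hmin⟩ := Nat.sInf_mem (s := level '' g.vert F) ⟨_, v, hv, rfl⟩
  rw [minLevel, ← hmin]
  obtain rfl | huv := eq_or_ne v u
  · exact Nat.le_succ _
  · obtain ⟨e, -, he⟩ := g.exists_mem_edgesAt hv hu huv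
    exact h.le_add_one he

/-- The index of the band containing `m` when a new band starts at each number congruent to `i`
modulo `k`. The shift `k - i` is only meaningful for `i ≤ k`. -/
def band (k i m : ℕ) : ℕ := (m + (k - i)) / k

theorem band_add_one {k i m : ℕ} (hi : i < k) (h : (m + 1) % k ≠ i) :
    band k i (m + 1) = band k i m := by
  rw [band, band, add_right_comm, Nat.succ_div, if_neg, add_zero]
  refine fun hdvd => h ?_
  have hmod : m + 1 ≡ i [MOD k] := by
    refine Nat.ModEq.add_right_cancel' (k - i) ?_
    rw [Nat.add_sub_cancel' hi.le]
    exact ((Nat.modEq_zero_iff_dvd).2 (by rwa [add_right_comm])).trans (by simp [Nat.ModEq])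
  rw [hmod, Nat.mod_eq_of_lt hi]

variable [Finite E] [Nontrivial Φ] {X : Set E} {k i : ℕ}

theorem band_minLevel_left_eq_right {level : V → ℕ} (h : IsLevelling g.src g.tgt X level)
    (hi : i < k) {e : E}
    (he : level (g.src e) = level (g.tgt e) → level (g.src e) % k ≠ i) :
    band k i (g.minLevel level (g.left e)) = band k i (g.minLevel level (g.right e)) := by
  have hsl := minLevel_le level (g.src_mem_vert_left e)
  have htl := minLevel_le level (g.tgt_mem_vert_left e)
  have hsr := minLevel_le level (g.src_mem_vert_right e)
  have htr := minLevel_le level (g.tgt_mem_vert_right e)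
  have hsl' := le_minLevel_add_one h (g.src_mem_vert_left e)
  have htl' := le_minLevel_add_one h (g.tgt_mem_vert_left e)
  have hsr' := le_minLevel_add_one h (g.src_mem_vert_right e)
  have htr' := le_minLevel_add_one h (g.tgt_mem_vert_right e)
  rcases lt_trichotomy (g.minLevel level (g.left e)) (g.minLevel level (g.right e)) with
    hlt | heq | hgt
  · have hsrc : level (g.src e) = g.minLevel level (g.left e) + 1 := by lia
    rw [show g.minLevel level (g.right e) = g.minLevel level (g.left e) + 1 by lia]
    exact (band_add_one hi (hsrc ▸ he (by lia))).symm
  · rw [heq]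
  · have hsrc : level (g.src e) = g.minLevel level (g.right e) + 1 := by lia
    rw [show g.minLevel level (g.left e) = g.minLevel level (g.right e) + 1 by lia]
    exact band_add_one hi (hsrc ▸ he (by lia))

variable {T : LevelTree g.src g.tgt X}

theorem minLevel_left_parentEdge_add_one {c : V} (hc : 0 < T.level c) :
    g.minLevel T.level (g.left (T.parentEdge c)) + 1 = T.level c := by
  have hs := minLevel_le T.level (g.src_mem_vert_left (T.parentEdge c))
  have ht := minLevel_le T.level (g.tgt_mem_vert_left (T.parentEdge c))
  have hs' := le_minLevel_add_one T.isLevelling (g.src_mem_vert_left (T.parentEdge c))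
  have ht' := le_minLevel_add_one T.isLevelling (g.tgt_mem_vert_left (T.parentEdge c))
  have hparent := T.level_parent_add_one hc
  have hattach := T.isLevelling.eq_of_conn (T.conn_attach hc)
  rcases Sym2.eq_iff.1 (T.ends_parentEdge hc) with ⟨hsrc, htgt⟩ | ⟨hsrc, htgt⟩ <;>
    rw [hsrc] at hs hs' <;> rw [htgt] at ht ht' <;> lia

-- Within one band a level determines an ancestor of `x`, and a band has `k` levels.
theorem ncard_rootPathEdges_le (hk : 0 < k)
    (hband : ∀ e ∉ X, band k i (g.minLevel T.level (g.left e)) =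
      band k i (g.minLevel T.level (g.right e))) (x : V) (F : Φ) :
    (rootPathEdges T x F).ncard ≤ k := by
  have hband_eq {F F'} (h : g.DualConn T.coedges F F') :
      band k i (g.minLevel T.level F) = band k i (g.minLevel T.level F') :=
    h.lift (r := fun F F' => band k i (g.minLevel T.level F) = band k i (g.minLevel T.level F'))
      ⟨fun _ => rfl, Eq.symm, Eq.trans⟩ fun e (he : e ∈ T.coedges) =>
        hband e fun heX => he (Or.inl heX)
  rw [← Finset.card_range k, ← Set.ncard_coe_finset]
  refine Set.ncard_le_ncard_of_injOn (fun t => (g.minLevel T.level (g.left t) + (k - i)) % k)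
    (fun t _ => by simpa using Nat.mod_lt _ hk) ?_ (Finset.finite_toSet _)
  rintro _ ⟨c, hc, rfl, hcx, hcF⟩ _ ⟨c', hc', rfl, hcx', hcF'⟩ hmod
  have hdiv := hband_eq (hcF.trans hcF'.symm)
  have hmin : g.minLevel T.level (g.left (T.parentEdge c)) + (k - i) =
      g.minLevel T.level (g.left (T.parentEdge c')) + (k - i) := by
    rw [← Nat.div_add_mod (_ + _) k, ← Nat.div_add_mod (g.minLevel T.level (g.left
      (T.parentEdge c')) + _) k]
    exact congrArg₂ (k * · + ·) hdiv hmod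
  have hlevel : T.level c = T.level c' := by
    rw [← minLevel_left_parentEdge_add_one hc, ← minLevel_left_parentEdge_add_one hc',
      Nat.add_right_cancel hmin]
  exact T.parentEdge_congr (hcx.conn_of_level_eq hcx' hlevel)

end Bands

section FundamentalCuts

variable {V E Φ : Type*} (g : PlaneTriangulation V E Φ)

/-- The edges of `Y` that no longer have connected sides once `e` is removed from the dual forest
`S`. -/
noncomputable def fundamentalCut (S : Set E) (Y : Finset E) (e : E) : Finset E :=
  {y ∈ Y | ¬ g.DualConn (S \ {e}) (g.left y) (g.right y)}

theorem fundamentalCut_anti {S S' : Set E} (h : S ⊆ S') (Y : Finset E) (e : E) :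
    g.fundamentalCut S' Y e ⊆ g.fundamentalCut S Y e :=
  Finset.monotone_filter_right _ fun _ _ hy hconn =>
    hy (hconn.mono (Set.sdiff_subset_sdiff_left h))

variable {g} in
theorem card_fundamentalCut_coedges_le [Finite E] [Nontrivial Φ] {X : Set E}
    {T : LevelTree g.src g.tgt X} {k i : ℕ} {Y : Finset E} {e : E} (hk : 1 ≤ k)
    (hY : ∀ y ∈ Y, y ∉ X)
    (hband : ∀ e ∉ X, band k i (g.minLevel T.level (g.left e)) =
      band k i (g.minLevel T.level (g.right e))) :
    (g.fundamentalCut T.coedges Y e).card ≤ 3 * k := by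
  have hcases : ∀ y ∈ g.fundamentalCut T.coedges Y e, y = e ∨ (e ∈ T.coedges ∧ y ∈ T.edges) := by
    intro y hy
    obtain ⟨hyY, hcut⟩ := Finset.mem_filter.1 hy
    by_contra! hne
    by_cases hyT : y ∈ T.edges
    · refine hcut ?_
      rw [Set.sdiff_singleton_eq_self fun he => hne.2 he hyT]
      exact dualConn_coedges hyT
    · exact hcut (.edge ⟨fun h => h.elim (hY y hyY) hyT, hne.1⟩)
  by_cases he : e ∈ T.coedges
  · have hsub : (g.fundamentalCut T.coedges Y e : Set E) ⊆ insert e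
        (rootPathEdges T (g.src e) (g.left e) ∪ rootPathEdges T (g.tgt e) (g.left e)) := by
      intro y hy
      refine (hcases y hy).imp_right fun ⟨_, hyT⟩ => ?_
      exact mem_rootPathEdges_of_not_dualConn he hyT (Finset.mem_filter.1 hy).2
    have hcard := Set.ncard_le_ncard hsub (Set.toFinite _)
    rw [Set.ncard_coe_finset] at hcard
    have hinsert := Set.ncard_insert_le e
      (rootPathEdges T (g.src e) (g.left e) ∪ rootPathEdges T (g.tgt e) (g.left e))
    have hunion := Set.ncard_union_le
      (rootPathEdges T (g.src e) (g.left e)) (rootPathEdges T (g.tgt e) (g.left e))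
    have hsrc := ncard_rootPathEdges_le hk hband (g.src e) (g.left e)
    have htgt := ncard_rootPathEdges_le hk hband (g.tgt e) (g.left e)
    lia
  · have hsub : g.fundamentalCut T.coedges Y e ⊆ {e} := fun y hy =>
      Finset.mem_singleton.2 ((hcases y hy).resolve_right fun h => he h.1)
    have hcard := (Finset.card_le_card hsub).trans_eq (Finset.card_singleton e)
    lia


variable [Fintype E] {R : Finset Φ} {e : E} {k : ℕ}

/-- The edges with both sides in `R`. -/
noncomputable def innerEdges (R : Finset Φ) : Finset E := {e | g.left e ∈ R ∧ g.right e ∈ R}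

variable {g} in
theorem mem_innerEdges : e ∈ g.innerEdges R ↔ g.left e ∈ R ∧ g.right e ∈ R := by
  simp [innerEdges]

variable (R) in
theorem card_innerEdges_le : (g.innerEdges R).card ≤ 3 * R.card := by
  have hsub : g.innerEdges R ⊆ R.biUnion g.edgesAt := fun e he =>
    Finset.mem_biUnion.2 ⟨g.left e, (mem_innerEdges.1 he).1, mem_edgesAt.2 (.inl rfl)⟩
  calc (g.innerEdges R).card ≤ (R.biUnion g.edgesAt).card := Finset.card_le_card hsub
    _ ≤ R.card * 3 := Finset.card_biUnion_le_card_mul _ _ _ fun F _ => g.card_edgesAt_le F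
    _ = 3 * R.card := mul_comm _ _

variable [Nontrivial Φ]

-- The residue `i` is one for which at most `3 * k` inner edges have their source on the levels
-- congruent to `i` modulo `k`; contracting the horizontal ones among them separates the bands.
theorem exists_levelTree_innerEdges (hk : 1 ≤ k) (hR : R.card ≤ k * k) :
    ∃ L : Finset E, L.card ≤ 3 * k ∧ ∃ (T : LevelTree g.src g.tgt ((g.innerEdges R : Set E)ᶜ ∪ L))
      (i : ℕ), ∀ e ∉ (g.innerEdges R : Set E)ᶜ ∪ L,
        band k i (g.minLevel T.level (g.left e)) = band k i (g.minLevel T.level (g.right e)) := by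
  obtain ⟨level, hlevel⟩ := exists_isLevelling g.src g.tgt (g.innerEdges R : Set E)ᶜ
  obtain ⟨i, hi, hcard⟩ := Finset.exists_card_fiber_le_of_card_le_mul (s := g.innerEdges R)
    (t := Finset.range k) (f := fun e => level (g.src e) % k) (n := 3 * k)
    ⟨0, Finset.mem_range.2 hk⟩
    (by have := g.card_innerEdges_le R; rw [Finset.card_range]; nlinarith)
  rw [Finset.mem_range] at hi
  let L := (g.innerEdges R).filter fun e =>
    level (g.src e) = level (g.tgt e) ∧ level (g.src e) % k = i
  have hL : IsLevelling g.src g.tgt ((g.innerEdges R : Set E)ᶜ ∪ L) level :=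
    hlevel.union fun e he => (Finset.mem_filter.1 he).2.1
  have hE : Nonempty E := by
    obtain ⟨F⟩ := Nontrivial.to_nonempty (α := Φ)
    obtain ⟨e, -⟩ := Finset.card_pos.1 ((g.card_edgesAt F).symm ▸ three_pos)
    exact ⟨e⟩
  obtain ⟨T, hT⟩ := hL.exists_levelTree
  refine ⟨L, (Finset.card_le_card ?_).trans hcard, T, i, fun e he => ?_⟩
  · exact Finset.monotone_filter_right _ fun _ _ => And.right
  · rw [hT]
    refine band_minLevel_left_eq_right hL hi fun heq hmod => he ?_
    by_cases heR : e ∈ g.innerEdges R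
    · exact .inr (Finset.mem_filter.2 ⟨heR, heq, hmod⟩)
    · exact .inl heR

theorem exists_dualForest (hk : 1 ≤ k) (hR : R.card ≤ k * k) :
    ∃ S : Set E, S ⊆ g.innerEdges R ∧ EdgeAcyclic g.left g.right S ∧
      (∀ y ∈ g.innerEdges R, g.DualConn S (g.left y) (g.right y)) ∧
      ∀ e, (g.fundamentalCut S (g.innerEdges R) e).card ≤ 6 * k := by
  obtain ⟨L, hL, T, i, hband⟩ := g.exists_levelTree_innerEdges hk hR
  have hco : T.coedges ⊆ g.innerEdges R := fun e he => by
    by_contra h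
    exact he (.inl (.inl h))
  obtain ⟨S, hTS, hSR, hS, hspan⟩ := (acyclic_coedges T).exists_spanning hco
  refine ⟨S, hSR, hS, hspan, fun e => ?_⟩
  have hsub : g.fundamentalCut S (g.innerEdges R) e ⊆
      L ∪ g.fundamentalCut T.coedges (g.innerEdges R \ L) e := by
    intro y hy
    obtain ⟨hyR, hcut⟩ := Finset.mem_filter.1 (g.fundamentalCut_anti hTS _ e hy)
    by_cases hyL : y ∈ L
    · exact Finset.mem_union_left _ hyL
    · exact Finset.mem_union_right _
        (Finset.mem_filter.2 ⟨Finset.mem_sdiff.2 ⟨hyR, hyL⟩, hcut⟩)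
  have hcut := card_fundamentalCut_coedges_le (Y := g.innerEdges R \ L) (e := e) hk
    (fun y hy => by simpa using hy) hband
  calc _ ≤ _ := Finset.card_le_card hsub
    _ ≤ L.card + _ := Finset.card_union_le _ _
    _ ≤ 6 * k := by lia

end FundamentalCuts

end PlaneTriangulation

/-! ### Balanced separators -/

theorem sum_biUnion_le_sum_sum {ι X : Type*} [DecidableEq X] (N : Finset ι) (B : ι → Finset X)
    (w : X → ℕ) : ∑ x ∈ N.biUnion B, w x ≤ ∑ i ∈ N, ∑ x ∈ B i, w x := by
  classical
  induction N using Finset.induction_on with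
  | empty => simp
  | insert i N hi ih =>
    rw [Finset.biUnion_insert, Finset.sum_insert hi]
    have := Finset.sum_union_inter (f := w) (s₁ := B i) (s₂ := N.biUnion B)
    lia

section BalancedEdge

open scoped Classical

variable {E X : Type*} {s t : E → X} {S : Set E} {R : Finset X} {e f : E} {v v' u x : X}

theorem EdgeConn.of_mk_eq (he : e ∈ S) (hends : s(s e, t e) = s(v, u)) : EdgeConn s t S v u := by
  rcases Sym2.eq_iff.1 hends with ⟨rfl, rfl⟩ | ⟨rfl, rfl⟩
  · exact .edge he
  · exact (EdgeConn.edge he).symm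

theorem EdgeAcyclic.not_conn_of_mk_eq (hS : EdgeAcyclic s t S) (he : e ∈ S)
    (hends : s(s e, t e) = s(v, u)) : ¬ EdgeConn s t (S \ {e}) v u := by
  rcases Sym2.eq_iff.1 hends with ⟨rfl, rfl⟩ | ⟨rfl, rfl⟩
  · exact hS e he
  · exact fun h => hS e he h.symm

theorem EdgeConn.sdiff_of_mk_eq (h : EdgeConn s t S x u) (hends : s(s e, t e) = s(v, v')) :
    EdgeConn s t (S \ {e}) x u ∨ (EdgeConn s t (S \ {e}) x v ∧ EdgeConn s t (S \ {e}) v' u) ∨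
      (EdgeConn s t (S \ {e}) x v' ∧ EdgeConn s t (S \ {e}) v u) := by
  have h' := (h.mono (Set.subset_insert_sdiff_singleton e S)).of_insert
  rcases Sym2.eq_iff.1 hends with ⟨rfl, rfl⟩ | ⟨rfl, rfl⟩
  · exact h'
  · exact h'.imp_right Or.symm

theorem EdgeConn.exists_first_edge (h : EdgeConn s t S v x) (hne : x ≠ v) :
    ∃ e ∈ S, ∃ u, s(s e, t e) = s(v, u) ∧ EdgeConn s t {f ∈ S | v ∉ s(s f, t f)} u x := by
  have hiff := h.iff_of_forall_edge (P := fun x => x = v ∨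
    ∃ e ∈ S, ∃ u, s(s e, t e) = s(v, u) ∧ EdgeConn s t {f ∈ S | v ∉ s(s f, t f)} u x) ?_
  · exact (hiff.1 (.inl rfl)).resolve_left hne
  intro f hf
  by_cases hv : v ∈ s(s f, t f)
  · rcases Sym2.mem_iff.1 hv with hv | hv
    · exact iff_of_true (.inl hv.symm) (.inr ⟨f, hf, _, by rw [hv], .refl _⟩)
    · exact iff_of_true (.inr ⟨f, hf, _, by rw [hv, Sym2.eq_swap], .refl _⟩) (.inl hv.symm)
  · have hedge : EdgeConn s t {f ∈ S | v ∉ s(s f, t f)} (s f) (t f) := .edge ⟨hf, hv⟩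
    obtain ⟨hs, ht⟩ := not_or.1 (Sym2.mem_iff.not.1 hv)
    simp only [Ne.symm hs, Ne.symm ht, false_or, hedge.congr_right]

/-- The vertices of `R` on the same side as `x` once the edge `e` is removed from the forest `S`. -/
noncomputable def branch (s t : E → X) (R : Finset X) (S : Set E) (e : E) (x : X) : Finset X :=
  {y ∈ R | EdgeConn s t (S \ {e}) x y}

theorem mem_branch : x ∈ branch s t R S e v ↔ x ∈ R ∧ EdgeConn s t (S \ {e}) v x :=
  Finset.mem_filter

theorem sdiff_branch (hS : EdgeAcyclic s t S) (hconn : ∀ x ∈ R, ∀ y ∈ R, EdgeConn s t S x y)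
    (he : e ∈ S) (hends : s(s e, t e) = s(v, u)) (hv : v ∈ R) :
    R \ branch s t R S e v = branch s t R S e u := by
  ext x
  simp only [Finset.mem_sdiff, mem_branch, not_and]
  refine ⟨fun ⟨hx, hvx⟩ => ⟨hx, ?_⟩, fun ⟨hx, hux⟩ => ⟨hx, fun _ hvx => ?_⟩⟩
  · rcases (hconn v hv x hx).sdiff_of_mk_eq hends with h | ⟨-, h⟩ | ⟨-, h⟩
    · exact (hvx hx h).elim
    · exact h
    · exact (hvx hx h).elim
  · exact hS.not_conn_of_mk_eq he hends (hvx.trans hux.symm)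

theorem sum_branch_add_sum_branch (hS : EdgeAcyclic s t S)
    (hconn : ∀ x ∈ R, ∀ y ∈ R, EdgeConn s t S x y) (he : e ∈ S) (hends : s(s e, t e) = s(v, u))
    (hv : v ∈ R) (w : X → ℕ) :
    ∑ x ∈ branch s t R S e v, w x + ∑ x ∈ branch s t R S e u, w x = ∑ x ∈ R, w x := by
  rw [← sdiff_branch hS hconn he hends hv, add_comm]
  exact Finset.sum_sdiff (Finset.filter_subset _ _)

theorem branch_ssubset_branch (hS : EdgeAcyclic s t S) (he : e ∈ S) (hf : f ∈ S) (hfe : f ≠ e)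
    (hends : s(s e, t e) = s(v', v)) (hfends : s(s f, t f) = s(v, u)) (hv : v ∈ R) :
    branch s t R S f u ⊂ branch s t R S e v := by
  have hvu : EdgeConn s t (S \ {e}) v u := .of_mk_eq ⟨hf, hfe⟩ hfends
  have huv : ¬ EdgeConn s t (S \ {f}) u v := fun h => hS.not_conn_of_mk_eq hf hfends h.symm
  have hsub_e : (S \ {f}) \ {e} ⊆ S \ {e} := Set.sdiff_subset_sdiff_left Set.sdiff_subset
  refine ⟨fun x hx => ?_, fun hsub =>
    huv (mem_branch.1 (hsub (mem_branch.2 ⟨hv, EdgeConn.refl v⟩))).2⟩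
  obtain ⟨hxR, hux⟩ := mem_branch.1 hx
  refine mem_branch.2 ⟨hxR, ?_⟩
  rcases hux.sdiff_of_mk_eq hends with h | ⟨h, -⟩ | ⟨h, -⟩
  · exact hvu.trans (h.mono hsub_e)
  · exact (hS.not_conn_of_mk_eq he hends (hvu.trans (h.mono hsub_e)).symm).elim
  · exact (huv (h.mono Set.sdiff_subset)).elim

theorem branch_subset_insert_biUnion (hS : EdgeAcyclic s t S) {N : Finset E}
    (hN : ∀ f ∈ S, f ≠ e → v ∈ s(s f, t f) → f ∈ N) :
    branch s t R S e v ⊆ insert v (N.biUnion fun f => R \ branch s t R S f v) := by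
  intro x hx
  obtain ⟨hxR, hvx⟩ := mem_branch.1 hx
  by_cases hxv : x = v
  · exact hxv ▸ Finset.mem_insert_self _ _
  obtain ⟨f, ⟨hf, hfe⟩, u, hfends, hux⟩ := hvx.exists_first_edge hxv
  have hvf : v ∈ s(s f, t f) := hfends ▸ Sym2.mem_mk_left v u
  refine Finset.mem_insert_of_mem (Finset.mem_biUnion.2 ⟨f, hN f hf hfe hvf, ?_⟩)
  refine Finset.mem_sdiff.2 ⟨hxR, fun hvx' => hS.not_conn_of_mk_eq hf hfends ?_⟩
  refine (mem_branch.1 hvx').2.trans (hux.mono ?_).symm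
  rintro d ⟨hd, hvd⟩
  exact ⟨hd.1, fun hdf : d = f => hvd (hdf ▸ hvf)⟩

variable [Fintype E] {w : X → ℕ}

-- The branch is covered by `v` and the branches behind the at most two further edges at `v`.
theorem exists_heavy_edge (hS : EdgeAcyclic s t S)
    (hdeg : ({f | v ∈ s(s f, t f)} : Finset E).card ≤ 3) (hends : s(s e, t e) = s(v', v))
    (hw : 4 * w v ≤ ∑ x ∈ R, w x)
    (hheavy : 3 * ∑ x ∈ R, w x < 4 * ∑ x ∈ branch s t R S e v, w x) :
    ∃ f ∈ S, f ≠ e ∧ v ∈ s(s f, t f) ∧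
      ∑ x ∈ R, w x < 4 * ∑ x ∈ R \ branch s t R S f v, w x := by
  by_contra! hlight
  set W := ∑ x ∈ R, w x
  let N : Finset E := {f ∈ ({f | v ∈ s(s f, t f)} : Finset E).erase e | f ∈ S}
  have hNcard : N.card ≤ 2 := by
    have hmem : e ∈ ({f | v ∈ s(s f, t f)} : Finset E) := by
      simp only [Finset.mem_filter_univ, hends, Sym2.mem_mk_right]
    have := Finset.card_filter_le (({f | v ∈ s(s f, t f)} : Finset E).erase e) (· ∈ S)
    rw [Finset.card_erase_of_mem hmem] at this
    lia
  have hcover := branch_subset_insert_biUnion (R := R) (e := e) (v := v) (N := N) hS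
    fun f hf hfe hvf => by
      simp only [N, Finset.mem_filter, Finset.mem_erase, Finset.mem_univ, hf, hfe, hvf, ne_eq,
        not_false_eq_true, and_self]
  have hsum : ∑ x ∈ branch s t R S e v, w x ≤
      w v + ∑ f ∈ N, ∑ x ∈ R \ branch s t R S f v, w x := by
    refine (Finset.sum_le_sum_of_subset hcover).trans ?_
    rw [Finset.insert_eq]
    have := Finset.sum_union_inter (f := w) (s₁ := {v})
      (s₂ := N.biUnion fun f => R \ branch s t R S f v)
    have := sum_biUnion_le_sum_sum N (fun f => R \ branch s t R S f v) w
    simp only [Finset.sum_singleton] at *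
    lia
  have hN : 4 * ∑ f ∈ N, ∑ x ∈ R \ branch s t R S f v, w x ≤ N.card * W := by
    rw [Finset.mul_sum]
    refine Finset.sum_le_card_nsmul _ _ _ fun f hf => ?_
    simp only [N, Finset.mem_filter, Finset.mem_erase, Finset.mem_univ, true_and] at hf
    exact hlight f hf.2 hf.1.1 hf.1.2
  nlinarith

/-- The edges in `S` form a spanning tree of `R` with all degrees at most three, counted in the
whole multigraph. -/
structure IsSubcubicTree (s t : E → X) (R : Finset X) (S : Set E) : Prop where
  acyclic : EdgeAcyclic s t S
  ends_mem : ∀ e ∈ S, s e ∈ R ∧ t e ∈ R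
  conn : ∀ x ∈ R, ∀ y ∈ R, EdgeConn s t S x y
  card_le : ∀ v ∈ R, ({f | v ∈ s(s f, t f)} : Finset E).card ≤ 3

namespace IsSubcubicTree

theorem nonempty (hS : IsSubcubicTree s t R S) (hpos : 0 < ∑ x ∈ R, w x)
    (hw : ∀ x ∈ R, 4 * w x ≤ ∑ x ∈ R, w x) : S.Nonempty := by
  rw [Set.nonempty_iff_ne_empty]
  rintro rfl
  obtain ⟨x, hx, -⟩ := Finset.exists_ne_zero_of_sum_ne_zero hpos.ne'
  have hR : R = {x} := Finset.eq_singleton_iff_unique_mem.2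
    ⟨hx, fun y hy => (hS.conn y hy x hx).eq_of_empty⟩
  have := hw x hx
  rw [hR, Finset.sum_singleton] at this hpos
  lia

theorem exists_balanced_edge_of_heavy (hS : IsSubcubicTree s t R S)
    (hw : ∀ x ∈ R, 4 * w x ≤ ∑ x ∈ R, w x) (n : ℕ) :
    ∀ e ∈ S, ∀ v v', s(s e, t e) = s(v', v) → (branch s t R S e v).card = n →
      3 * ∑ x ∈ R, w x < 4 * ∑ x ∈ branch s t R S e v, w x →
      ∃ f ∈ S, ∑ x ∈ R, w x ≤ 4 * ∑ x ∈ branch s t R S f (s f), w x ∧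
        ∑ x ∈ R, w x ≤ 4 * ∑ x ∈ branch s t R S f (t f), w x := by
  induction n using Nat.strong_induction_on with | _ n ih
  rintro e he v v' hends rfl hheavy
  have hv : v ∈ R := by
    rcases Sym2.eq_iff.1 hends with ⟨-, rfl⟩ | ⟨rfl, -⟩
    exacts [(hS.ends_mem e he).2, (hS.ends_mem e he).1]
  obtain ⟨f, hf, hfe, ⟨u, hfends⟩, hfar⟩ :=
    exists_heavy_edge hS.acyclic (hS.card_le v hv) hends (hw v hv) hheavy
  rw [sdiff_branch hS.acyclic hS.conn hf hfends hv] at hfar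
  have hsum := sum_branch_add_sum_branch hS.acyclic hS.conn hf hfends hv w
  by_cases hnear : ∑ x ∈ R, w x ≤ 4 * ∑ x ∈ branch s t R S f v, w x
  · rcases Sym2.eq_iff.1 hfends with ⟨rfl, rfl⟩ | ⟨rfl, rfl⟩
    exacts [⟨f, hf, hnear, hfar.le⟩, ⟨f, hf, hfar.le, hnear⟩]
  · have hlt := Finset.card_lt_card
      (branch_ssubset_branch hS.acyclic he hf hfe hends hfends hv)
    exact ih _ hlt f hf u v hfends rfl (by lia)

theorem exists_balanced_edge (hS : IsSubcubicTree s t R S) (hpos : 0 < ∑ x ∈ R, w x)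
    (hw : ∀ x ∈ R, 4 * w x ≤ ∑ x ∈ R, w x) :
    ∃ e ∈ S, ∑ x ∈ R, w x ≤ 4 * ∑ x ∈ branch s t R S e (s e), w x ∧
      ∑ x ∈ R, w x ≤ 4 * ∑ x ∈ branch s t R S e (t e), w x := by
  obtain ⟨e, he⟩ := hS.nonempty hpos hw
  have hsum := sum_branch_add_sum_branch hS.acyclic hS.conn he rfl (hS.ends_mem e he).1 w
  rcases le_or_gt (∑ x ∈ R, w x) (4 * ∑ x ∈ branch s t R S e (s e), w x) with hs | hs
  · rcases le_or_gt (∑ x ∈ R, w x) (4 * ∑ x ∈ branch s t R S e (t e), w x) with ht | ht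
    · exact ⟨e, he, hs, ht⟩
    · exact hS.exists_balanced_edge_of_heavy hw _ e he (s e) (t e) Sym2.eq_swap rfl (by lia)
  · exact hS.exists_balanced_edge_of_heavy hw _ e he (t e) (s e) rfl rfl (by lia)

end IsSubcubicTree

end BalancedEdge

namespace PlaneTriangulation

open scoped Classical

variable {V E Φ : Type*} [Fintype E] (g : PlaneTriangulation V E Φ)

/-- The faces in `R` are connected to each other through edges with both sides in `R`. -/
def IsDualConnected (R : Finset Φ) : Prop :=
  ∀ F ∈ R, ∀ F' ∈ R, g.DualConn (g.innerEdges R) F F'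

theorem isDualConnected_branch {R : Finset Φ} {S : Set E} (hSR : S ⊆ g.innerEdges R) (e : E)
    (F : Φ) : g.IsDualConnected (branch g.left g.right R S e F) := by
  intro G hG G' hG'
  have hGG' := (mem_branch.1 hG).2.symm.trans (mem_branch.1 hG').2
  refine ((hGG'.iff_of_forall_edge (P := fun G' => G' ∈ branch g.left g.right R S e F ∧
    g.DualConn (g.innerEdges (branch g.left g.right R S e F)) G G') fun f hf => ?_).1
      ⟨hG, .refl G⟩).2
  have hfR := mem_innerEdges.1 (hSR hf.1)
  have hmem : g.left f ∈ branch g.left g.right R S e F ↔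
      g.right f ∈ branch g.left g.right R S e F := by
    simp only [mem_branch, hfR, true_and]
    exact (EdgeConn.edge hf).congr_right
  rw [hmem]
  refine and_congr_right fun hr => (EdgeConn.edge ?_).congr_right
  exact mem_innerEdges.2 ⟨hmem.2 hr, hr⟩

/-- `R` is split into nonempty dual-connected parts `R₁` and `R₂` sharing at most `n` edges. -/
structure IsSeparation (R R₁ R₂ : Finset Φ) (n : ℕ) : Prop where
  disjoint : Disjoint R₁ R₂
  union_eq : R₁ ∪ R₂ = R
  nonempty_left : R₁.Nonempty
  nonempty_right : R₂.Nonempty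
  conn_left : g.IsDualConnected R₁
  conn_right : g.IsDualConnected R₂
  card_le : (g.innerEdges R \ (g.innerEdges R₁ ∪ g.innerEdges R₂)).card ≤ n

variable {g} in
theorem IsSeparation.symm {R R₁ R₂ : Finset Φ} {n : ℕ} (h : g.IsSeparation R R₁ R₂ n) :
    g.IsSeparation R R₂ R₁ n where
  disjoint := h.disjoint.symm
  union_eq := by rw [Finset.union_comm, h.union_eq]
  nonempty_left := h.nonempty_right
  nonempty_right := h.nonempty_left
  conn_left := h.conn_right
  conn_right := h.conn_left
  card_le := by rw [Finset.union_comm]; exact h.card_le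

theorem isSeparation_branch {R : Finset Φ} {S : Set E} {e : E} {n : ℕ}
    (hS : EdgeAcyclic g.left g.right S) (hSR : S ⊆ g.innerEdges R)
    (hconn : ∀ F ∈ R, ∀ F' ∈ R, g.DualConn S F F') (he : e ∈ S)
    (hcut : (g.fundamentalCut S (g.innerEdges R) e).card ≤ n) :
    g.IsSeparation R (branch g.left g.right R S e (g.left e))
      (branch g.left g.right R S e (g.right e)) n := by
  have heR := mem_innerEdges.1 (hSR he)
  have hsdiff := sdiff_branch hS hconn he rfl heR.1
  refine ⟨hsdiff ▸ Finset.disjoint_sdiff,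
    hsdiff ▸ Finset.union_sdiff_of_subset (Finset.filter_subset _ _),
    ⟨_, mem_branch.2 ⟨heR.1, .refl _⟩⟩, ⟨_, mem_branch.2 ⟨heR.2, .refl _⟩⟩,
    g.isDualConnected_branch hSR e _, g.isDualConnected_branch hSR e _,
    (Finset.card_le_card fun y hy => ?_).trans hcut⟩
  simp only [Finset.mem_sdiff, Finset.mem_union, not_or, mem_innerEdges] at hy
  obtain ⟨hyR, hy₁, hy₂⟩ := hy
  refine Finset.mem_filter.2 ⟨mem_innerEdges.2 hyR, fun hconn => ?_⟩
  by_cases hl : g.left y ∈ branch g.left g.right R S e (g.left e)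
  · exact hy₁ ⟨hl, mem_branch.2 ⟨hyR.2, (mem_branch.1 hl).2.trans hconn⟩⟩
  · have hl' := hsdiff ▸ Finset.mem_sdiff.2 ⟨hyR.1, hl⟩
    exact hy₂ ⟨hl', mem_branch.2 ⟨hyR.2, (mem_branch.1 hl').2.trans hconn⟩⟩

theorem exists_balanced_separation [Nontrivial Φ] {R : Finset Φ} (hR : g.IsDualConnected R) {k : ℕ}
    (hk : 1 ≤ k) (hcard : R.card ≤ k * k) {w : Φ → ℕ} (hpos : 0 < ∑ F ∈ R, w F)
    (hw : ∀ F ∈ R, 4 * w F ≤ ∑ F ∈ R, w F) :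
    ∃ R₁ R₂ : Finset Φ, g.IsSeparation R R₁ R₂ (6 * k) ∧
      ∑ F ∈ R, w F ≤ 4 * ∑ F ∈ R₁, w F ∧ ∑ F ∈ R, w F ≤ 4 * ∑ F ∈ R₂, w F := by
  obtain ⟨S, hSR, hS, hspan, hcut⟩ := g.exists_dualForest hk hcard
  have htree : IsSubcubicTree g.left g.right R S :=
    { acyclic := hS
      ends_mem := fun e he => mem_innerEdges.1 (hSR he)
      conn := fun F hF F' hF' => (hR F hF F' hF').of_edges hspan
      card_le := fun F _ => by
        refine le_trans (Finset.card_le_card fun e he => ?_) (g.card_edgesAt_le F)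
        simpa [mem_edgesAt, eq_comm] using he }
  obtain ⟨e, he, hleft, hright⟩ := htree.exists_balanced_edge hpos hw
  exact ⟨_, _, g.isSeparation_branch hS hSR htree.conn he (hcut e), hleft, hright⟩

end PlaneTriangulation

/-! ### Divisions into regions with short boundary and few holes -/

namespace PlaneTriangulation

open scoped Classical

section Boundary

variable {V E Φ : Type*} [Fintype E] (g : PlaneTriangulation V E Φ)

/-- The edges with exactly one side in `R`. -/
noncomputable def boundaryEdges (R : Finset Φ) : Finset E := {e | ¬ (g.left e ∈ R ↔ g.right e ∈ R)}

/-- The side of a boundary edge `e` of `R` that lies outside `R`. -/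
noncomputable def outerFace (R : Finset Φ) (e : E) : Φ :=
  if g.left e ∈ R then g.right e else g.left e

variable {g} {R R₁ R₂ : Finset Φ} {e : E} {F : Φ} {n : ℕ}

theorem mem_boundaryEdges : e ∈ g.boundaryEdges R ↔ ¬ (g.left e ∈ R ↔ g.right e ∈ R) := by
  simp [boundaryEdges]

theorem eq_outerFace (he : e ∈ g.boundaryEdges R) (heF : e ∈ g.edgesAt F) (hF : F ∉ R) :
    F = g.outerFace R e := by
  rw [mem_boundaryEdges] at he
  rw [outerFace]
  rcases mem_edgesAt.1 heF with rfl | rfl <;> split_ifs <;> tauto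

-- A boundary edge of `R` has one side in `R`, so it is counted at most once.
theorem sum_card_inter_edgesAt_eq {T : Finset E} {B : Finset Φ} (hT : T ⊆ g.boundaryEdges R)
    (hB : B ⊆ R) : ∑ F ∈ B, (T ∩ g.edgesAt F).card =
      {e ∈ T | g.left e ∈ B ∨ g.right e ∈ B}.card := by
  rw [← Finset.card_biUnion]
  · congr 1
    ext e
    simp only [Finset.mem_biUnion, Finset.mem_inter, mem_edgesAt, Finset.mem_filter]
    constructor
    · rintro ⟨F, hF, heT, rfl | rfl⟩
      exacts [⟨heT, .inl hF⟩, ⟨heT, .inr hF⟩]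
    · rintro ⟨heT, he | he⟩
      exacts [⟨_, he, heT, .inl rfl⟩, ⟨_, he, heT, .inr rfl⟩]
  · intro F hF F' hF' hne
    refine Finset.disjoint_left.2 fun e he he' => ?_
    obtain ⟨heT, heF⟩ := Finset.mem_inter.1 he
    have heR := mem_boundaryEdges.1 (hT heT)
    have hFR := hB hF
    have hFR' := hB hF'
    rcases mem_edgesAt.1 heF with rfl | rfl <;>
      rcases mem_edgesAt.1 (Finset.mem_inter.1 he').2 with rfl | rfl <;> tauto

theorem innerEdges_mono (h : R₁ ⊆ R₂) : (g.innerEdges R₁ : Set E) ⊆ g.innerEdges R₂ := by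
  intro e he
  obtain ⟨hl, hr⟩ := mem_innerEdges.1 he
  exact mem_innerEdges.2 ⟨h hl, h hr⟩

theorem card_boundaryEdges_left_le (h : g.IsSeparation R R₁ R₂ n) : (g.boundaryEdges R₁).card ≤
    {e ∈ g.boundaryEdges R | g.left e ∈ R₁ ∨ g.right e ∈ R₁}.card + n := by
  refine ((Finset.card_le_card fun e he => ?_).trans (Finset.card_union_le _ _)).trans
    (Nat.add_le_add_left h.card_le _)
  have hdisj {F} : F ∈ R₁ → F ∉ R₂ := fun hF => Finset.disjoint_left.1 h.disjoint hF
  have hl := @hdisj (g.left e)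
  have hr := @hdisj (g.right e)
  simp only [Finset.mem_union, Finset.mem_sdiff, Finset.mem_filter, mem_boundaryEdges,
    mem_innerEdges, ← h.union_eq] at he ⊢
  tauto

end Boundary

section Holes

variable {V E Φ : Type*} [Fintype E] [Fintype Φ] (g : PlaneTriangulation V E Φ)

/-- A representative face for each dual component of the complement of `R`. -/
noncomputable def holes (R : Finset Φ) : Finset Φ :=
  Rᶜ.image (EdgeConn.rep g.left g.right (g.innerEdges Rᶜ))

variable {g} {R R₁ R₂ : Finset Φ} {F : Φ} {k n : ℕ}

theorem exists_mem_holes (hF : F ∉ R) :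
    ∃ G ∈ g.holes R, g.DualConn (g.innerEdges Rᶜ) F G :=
  ⟨_, Finset.mem_image_of_mem _ (Finset.mem_compl.2 hF), (EdgeConn.rep_conn F).symm⟩

theorem card_holes_le {Q : Finset Φ}
    (hQ : ∀ F ∉ R, ∃ G ∈ Q, g.DualConn (g.innerEdges Rᶜ) F G) : (g.holes R).card ≤ Q.card := by
  refine (Finset.card_le_card fun G hG => ?_).trans
    (Finset.card_image_le (f := EdgeConn.rep g.left g.right (g.innerEdges Rᶜ)))
  obtain ⟨F, hF, rfl⟩ := Finset.mem_image.1 hG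
  obtain ⟨G, hG, hFG⟩ := hQ F (Finset.mem_compl.1 hF)
  exact Finset.mem_image.2 ⟨G, hG, (EdgeConn.rep_eq hFG).symm⟩

theorem notMem_of_dualConn (hF : F ∉ R) {G : Φ} (h : g.DualConn (g.innerEdges Rᶜ) F G) : G ∉ R := by
  refine (h.iff_of_forall_edge (P := (· ∉ R)) fun e he => ?_).1 hF
  have := mem_innerEdges.1 he
  simp only [Finset.mem_compl] at this
  exact iff_of_true this.1 this.2

theorem eq_of_mem_holes {G G' : Φ} (hG : G ∈ g.holes R) (hG' : G' ∈ g.holes R)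
    (h : g.DualConn (g.innerEdges Rᶜ) G G') : G = G' := by
  obtain ⟨F, -, rfl⟩ := Finset.mem_image.1 hG
  obtain ⟨F', -, rfl⟩ := Finset.mem_image.1 hG'
  exact EdgeConn.rep_eq (((EdgeConn.rep_conn F).symm.trans h).trans (EdgeConn.rep_conn F'))

theorem exists_boundaryEdge_dualConn (hR : R.Nonempty) (hF : F ∉ R) :
    ∃ e ∈ g.boundaryEdges R, g.DualConn (g.innerEdges Rᶜ) F (g.outerFace R e) := by
  by_contra! hcon
  obtain ⟨G, hG⟩ := hR
  have hstep {e : E} {A B : Φ} (hA : e ∈ g.edgesAt A) (hB : e ∈ g.edgesAt B)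
      (hFA : g.DualConn (g.innerEdges Rᶜ) F A) : g.DualConn (g.innerEdges Rᶜ) F B := by
    have hAR := notMem_of_dualConn hF hFA
    have heR : e ∉ g.boundaryEdges R := fun he => hcon e he (eq_outerFace he hA hAR ▸ hFA)
    rw [mem_boundaryEdges, not_not] at heR
    rw [mem_edgesAt] at hA hB
    have hl : g.left e ∉ R := by rcases hA with rfl | rfl <;> tauto
    have hconn : g.DualConn (g.innerEdges Rᶜ) (g.left e) (g.right e) :=
      .edge (mem_innerEdges.2 (by simp only [Finset.mem_compl]; tauto))
    rcases hA with rfl | rfl <;> rcases hB with rfl | rfl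
    exacts [hFA, hFA.trans hconn, hFA.trans hconn.symm, hFA]
  refine notMem_of_dualConn hF (((g.dualConn_univ F G).iff_of_forall_edge
    (P := g.DualConn (g.innerEdges Rᶜ) F) fun e _ => ?_).1 (.refl F)) hG
  have hl : e ∈ g.edgesAt (g.left e) := mem_edgesAt.2 (.inl rfl)
  have hr : e ∈ g.edgesAt (g.right e) := mem_edgesAt.2 (.inr rfl)
  exact ⟨hstep hl hr, hstep hr hl⟩

-- One boundary edge is selected for each hole.
theorem exists_gates (hR : R.Nonempty) : ∃ T ⊆ g.boundaryEdges R, T.card = (g.holes R).card ∧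
    ∀ F ∉ R, ∃ e ∈ T, g.DualConn (g.innerEdges Rᶜ) F (g.outerFace R e) := by
  choose gate hgate hconn using fun F (hF : F ∉ R) => exists_boundaryEdge_dualConn (g := g) hR hF
  have hholes {G} (hG : G ∈ g.holes R) : G ∉ R := by
    obtain ⟨F, hF, rfl⟩ := Finset.mem_image.1 hG
    exact notMem_of_dualConn (Finset.mem_compl.1 hF) (EdgeConn.rep_conn F).symm
  let gateOf (G : g.holes R) : E := gate G.1 (hholes G.2)
  have hinj : Function.Injective gateOf := by
    rintro ⟨G, hG⟩ ⟨G', hG'⟩ heq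
    have hGG' : g.DualConn (g.innerEdges Rᶜ) G G' :=
      (hconn G (hholes hG)).trans ((congrArg (g.outerFace R) heq).symm ▸
        (hconn G' (hholes hG')).symm)
    exact Subtype.ext (eq_of_mem_holes hG hG' hGG')
  refine ⟨Finset.univ.image gateOf, ?_, ?_, fun F hF => ?_⟩
  · rw [Finset.image_subset_iff]
    exact fun G _ => hgate G.1 (hholes G.2)
  · rw [Finset.card_image_of_injective _ hinj, Finset.card_univ, Fintype.card_coe]
  · obtain ⟨G, hG, hFG⟩ := exists_mem_holes (g := g) hF
    exact ⟨gateOf ⟨G, hG⟩, Finset.mem_image_of_mem _ (Finset.mem_univ _),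
      hFG.trans (hconn G (hholes hG))⟩

-- The holes of `R₁` are those of `R` with a gate into `R₁`; all the others are joined by `R₂`.
theorem card_holes_left_le (h : g.IsSeparation R R₁ R₂ n) {T : Finset E}
    (hT : T ⊆ g.boundaryEdges R)
    (hgate : ∀ F ∉ R, ∃ e ∈ T, g.DualConn (g.innerEdges Rᶜ) F (g.outerFace R e)) :
    (g.holes R₁).card ≤ {e ∈ T | g.left e ∈ R₁ ∨ g.right e ∈ R₁}.card + 1 := by
  obtain ⟨G, hG⟩ := h.nonempty_right
  have hR {F} : F ∈ R ↔ F ∈ R₁ ∨ F ∈ R₂ := by rw [← h.union_eq, Finset.mem_union]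
  have hRmono : (g.innerEdges Rᶜ : Set E) ⊆ g.innerEdges R₁ᶜ :=
    innerEdges_mono (Finset.compl_subset_compl.2 fun F hF => hR.2 (.inl hF))
  have hR₂mono : (g.innerEdges R₂ : Set E) ⊆ g.innerEdges R₁ᶜ :=
    innerEdges_mono (Finset.subset_compl_iff_disjoint_right.2 h.disjoint.symm)
  refine (card_holes_le (Q := insert G ({e ∈ T | g.left e ∈ R₁ ∨ g.right e ∈ R₁}.image
    (g.outerFace R))) fun F hF => ?_).trans ((Finset.card_insert_le _ _).trans
      (Nat.add_le_add_right Finset.card_image_le 1))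
  by_cases hFR : F ∈ R
  · exact ⟨G, Finset.mem_insert_self _ _,
      (h.conn_right F ((hR.1 hFR).resolve_left hF) G hG).mono hR₂mono⟩
  obtain ⟨e, heT, hFe⟩ := hgate F hFR
  by_cases he : g.left e ∈ R₁ ∨ g.right e ∈ R₁
  · exact ⟨_, Finset.mem_insert_of_mem (Finset.mem_image_of_mem _
      (Finset.mem_filter.2 ⟨heT, he⟩)), hFe.mono hRmono⟩
  refine ⟨G, Finset.mem_insert_self _ _, (hFe.mono hRmono).trans ?_⟩
  have hconn : g.DualConn (g.innerEdges R₁ᶜ) (g.left e) (g.right e) :=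
    .edge (mem_innerEdges.2 (by simpa only [Finset.mem_compl, not_or] using he))
  have heR := mem_boundaryEdges.1 (hT heT)
  by_cases hl : g.left e ∈ R
  · rw [outerFace, if_pos hl]
    exact hconn.symm.trans ((h.conn_right _ ((hR.1 hl).resolve_left (not_or.1 he).1) G hG).mono
      hR₂mono)
  · have hr : g.right e ∈ R := by tauto
    rw [outerFace, if_neg hl]
    exact hconn.trans ((h.conn_right _ ((hR.1 hr).resolve_left (not_or.1 he).2) G hG).mono hR₂mono)

variable (g) in
/-- The quantity the division keeps below a multiple of `k` in each region: the length of the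
boundary plus `k` for each hole. -/
noncomputable def complexity (k : ℕ) (R : Finset Φ) : ℕ :=
  (g.boundaryEdges R).card + k * (g.holes R).card

theorem complexity_univ : g.complexity k Finset.univ = 0 := by
  simp [complexity, boundaryEdges, holes]

-- Each boundary edge charges one to its inner face, each gate of a hole charges `k`.
theorem exists_weight (hR : R.Nonempty) (hk : 1 ≤ k) :
    ∃ w : Φ → ℕ, (∀ F, w F ≤ 6 * k) ∧ ∑ F ∈ R, w F = g.complexity k R ∧
      ∀ R₁ R₂ n, g.IsSeparation R R₁ R₂ n → g.complexity k R₁ ≤ ∑ F ∈ R₁, w F + n + k := by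
  obtain ⟨T, hT, hTcard, hgate⟩ := exists_gates (g := g) hR
  let w (F : Φ) : ℕ := (g.boundaryEdges R ∩ g.edgesAt F).card + k * (T ∩ g.edgesAt F).card
  have hsum {B : Finset Φ} (hB : B ⊆ R) : ∑ F ∈ B, w F =
      {e ∈ g.boundaryEdges R | g.left e ∈ B ∨ g.right e ∈ B}.card +
        k * {e ∈ T | g.left e ∈ B ∨ g.right e ∈ B}.card := by
    rw [Finset.sum_add_distrib, ← Finset.mul_sum, sum_card_inter_edgesAt_eq subset_rfl hB,
      sum_card_inter_edgesAt_eq hT hB]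
  refine ⟨w, fun F => ?_, ?_, fun R₁ R₂ n h => ?_⟩
  · have hle (A : Finset E) : (A ∩ g.edgesAt F).card ≤ 3 :=
      (Finset.card_le_card Finset.inter_subset_right).trans (g.card_edgesAt_le F)
    calc w F ≤ 3 + k * 3 := Nat.add_le_add (hle _) (Nat.mul_le_mul_left k (hle _))
      _ ≤ 6 * k := by lia
  · have hmem : ∀ e ∈ g.boundaryEdges R, g.left e ∈ R ∨ g.right e ∈ R := fun e he => by
      have := mem_boundaryEdges.1 he
      tauto
    rw [hsum subset_rfl, Finset.filter_true_of_mem hmem,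
      Finset.filter_true_of_mem fun e he => hmem e (hT he), hTcard, complexity]
  · rw [hsum (h.union_eq ▸ Finset.subset_union_left), complexity]
    have hholes := Nat.mul_le_mul_left k (card_holes_left_le h hT hgate)
    have hboundary := card_boundaryEdges_left_le h
    rw [mul_add, mul_one] at hholes
    lia

end Holes

section Division

variable {V E Φ : Type*} [Fintype E] [Fintype Φ] (g : PlaneTriangulation V E Φ)

/-- `R` may serve as a piece of a division with parameter `r = k²`: it has at most `k²` faces, and
the bound on its complexity allows at most `100 k` boundary edges and at most `100` holes. -/
structure IsGoodRegion (k : ℕ) (R : Finset Φ) : Prop where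
  card_le : R.card ≤ k * k
  complexity_le : g.complexity k R ≤ 100 * k

variable {g} {R R₁ R₂ : Finset Φ} {k : ℕ}

theorem exists_finpartition_parts_eq_union {X : Type*} {A B C : Finset X} (P : Finpartition A)
    (Q : Finpartition B) (hAB : Disjoint A B) (hC : A ∪ B = C) :
    ∃ D : Finpartition C, D.parts = P.parts ∪ Q.parts := by
  refine ⟨⟨P.parts ∪ Q.parts, ?_, ?_, ?_⟩, rfl⟩
  · rw [Finset.supIndep_iff_pairwiseDisjoint, Finset.coe_union, Set.pairwiseDisjoint_union]
    exact ⟨P.disjoint, Q.disjoint, fun a ha b hb _ => hAB.mono (P.le ha) (Q.le hb)⟩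
  · rw [Finset.sup_union, P.sup_parts, Q.sup_parts]
    exact hC
  · simp only [Finset.mem_union, P.bot_notMem, Q.bot_notMem, or_self, not_false_eq_true]

/-- The bound on the number of pieces into which a region `R` is divided, in terms of the scaled
side length `√|R| / k`. The negative term pays for the boundary created by a separation. -/
noncomputable def divisionBound (g : PlaneTriangulation V E Φ) (k : ℕ) (R : Finset Φ) : ℝ :=
  18 * (√R.card / k) ^ 2 - 7 * (√R.card / k) + g.complexity k R / k / 18

theorem sq_sqrt_natCast_div (n k : ℕ) : (√(n : ℝ) / k) ^ 2 = (n : ℝ) / k ^ 2 := by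
  rw [div_pow, Real.sq_sqrt (Nat.cast_nonneg _)]

theorem natCast_le_divisionBound (hk : 1 ≤ k) (hR : k * k ≤ 4 * R.card) {m : ℕ}
    (hm : m * (18 * k) ≤ 18 * k + g.complexity k R) : (m : ℝ) ≤ g.divisionBound k R := by
  have hk₀ : (0 : ℝ) < k := by exact_mod_cast hk
  have hside : 1 / 2 ≤ √(R.card : ℝ) / k := by
    rw [le_div_iff₀ hk₀]
    refine Real.le_sqrt_of_sq_le ?_
    have : (k : ℝ) * k ≤ 4 * R.card := by exact_mod_cast hR
    nlinarith
  have hm' : (m : ℝ) ≤ 1 + g.complexity k R / k / 18 := by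
    have : (m : ℝ) * (18 * k) ≤ 18 * k + g.complexity k R := by exact_mod_cast hm
    field_simp
    linarith
  unfold divisionBound
  nlinarith

-- A balanced separation satisfies `a, b ≥ s / 2`, so `a + b` exceeds `s` by a constant factor.
theorem add_le_of_sq_add_sq_eq {a b s x y z : ℝ} (hs : 1 ≤ s) (ha : 0 ≤ a) (hb : 0 ≤ b)
    (h : a ^ 2 + b ^ 2 = s ^ 2) (hsa : s ^ 2 ≤ 4 * a ^ 2) (hsb : s ^ 2 ≤ 4 * b ^ 2)
    (hx : y + z ≤ x + 20 * s) :
    (18 * a ^ 2 - 7 * a + y / 18) + (18 * b ^ 2 - 7 * b + z / 18) ≤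
      18 * s ^ 2 - 7 * s + x / 18 := by
  have ha' : s / 2 ≤ a := by nlinarith
  have hb' : s / 2 ≤ b := by nlinarith
  have : 1.2 * s ≤ a + b := by
    by_contra! hc
    nlinarith [mul_nonneg (sub_nonneg.2 ha') (sub_nonneg.2 hb'), mul_nonneg ha hb]
  nlinarith

theorem divisionBound_add_le (hk : 2 ≤ k) (hR : k * k ≤ R.card)
    (h : g.IsSeparation R R₁ R₂ (6 * ⌈√(R.card : ℝ)⌉₊)) (h₁ : R.card ≤ 4 * R₁.card)
    (h₂ : R.card ≤ 4 * R₂.card) :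
    g.divisionBound k R₁ + g.divisionBound k R₂ ≤ g.divisionBound k R := by
  have hk₀ : (0 : ℝ) < k := by exact_mod_cast (by lia : 0 < k)
  have hkR : (k : ℝ) ≤ √(R.card : ℝ) := by
    refine Real.le_sqrt_of_sq_le ?_
    rw [pow_two]
    exact_mod_cast hR
  have hcard : (R.card : ℝ) = R₁.card + R₂.card := by
    rw [← h.union_eq, Finset.card_union_of_disjoint h.disjoint, Nat.cast_add]
  have hcomplexity : g.complexity k R₁ + g.complexity k R₂ ≤
      g.complexity k R + 12 * ⌈√(R.card : ℝ)⌉₊ + 2 * k := by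
    obtain ⟨w, -, hsum, hsep⟩ := exists_weight (g := g) (k := k)
      (h.union_eq ▸ h.nonempty_left.inl) (by lia)
    have hc₁ := hsep R₁ R₂ _ h
    have hc₂ := hsep R₂ R₁ _ h.symm
    have hwsum := Finset.sum_union (f := w) h.disjoint
    rw [h.union_eq] at hwsum
    lia
  refine add_le_of_sq_add_sq_eq ((one_le_div hk₀).2 hkR) (by positivity) (by positivity) ?_ ?_ ?_ ?_
  · rw [sq_sqrt_natCast_div, sq_sqrt_natCast_div, sq_sqrt_natCast_div, hcard, add_div]
  · simp only [sq_sqrt_natCast_div, ← mul_div_assoc]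
    gcongr
    exact_mod_cast h₁
  · simp only [sq_sqrt_natCast_div, ← mul_div_assoc]
    gcongr
    exact_mod_cast h₂
  · have hceil := Nat.ceil_lt_add_one (Real.sqrt_nonneg (R.card : ℝ))
    have hk₁ : (2 : ℝ) ≤ k := by exact_mod_cast hk
    have : (g.complexity k R₁ : ℝ) + g.complexity k R₂ ≤
      g.complexity k R + 12 * ⌈√(R.card : ℝ)⌉₊ + 2 * k := by exact_mod_cast hcomplexity
    field_simp
    linarith

variable [Nontrivial Φ]

theorem exists_finpartition_of_card_le (hk : 1 ≤ k) (n : ℕ) : ∀ R : Finset Φ, R.card = n →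
    g.IsDualConnected R → R.Nonempty → R.card ≤ k * k → ∃ P : Finpartition R,
      (∀ C ∈ P.parts, g.IsGoodRegion k C) ∧
        P.parts.card * (18 * k) ≤ max (18 * k) (g.complexity k R - 14 * k) := by
  induction n using Nat.strong_induction_on with | _ n ih
  rintro R rfl hconn hne hcard
  by_cases hsmall : g.complexity k R ≤ 100 * k
  · exact ⟨.indiscrete hne.ne_empty, by simpa using ⟨hcard, hsmall⟩, by simp⟩
  obtain ⟨w, hw, hsum, hsep⟩ := exists_weight (g := g) hne hk
  obtain ⟨R₁, R₂, h, hw₁, hw₂⟩ := g.exists_balanced_separation hconn hk hcard (w := w)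
    (by lia) fun F _ => by have := hw F; lia
  have hc₁ := hsep R₁ R₂ _ h
  have hc₂ := hsep R₂ R₁ _ h.symm
  have hRcard := Finset.card_union_of_disjoint h.disjoint
  have hwsum := Finset.sum_union (f := w) h.disjoint
  rw [h.union_eq] at hRcard hwsum
  have hpos₁ := h.nonempty_left.card_pos
  have hpos₂ := h.nonempty_right.card_pos
  obtain ⟨P₁, hP₁, hcard₁⟩ := ih _ (by lia) R₁ rfl h.conn_left h.nonempty_left (by lia)
  obtain ⟨P₂, hP₂, hcard₂⟩ := ih _ (by lia) R₂ rfl h.conn_right h.nonempty_right (by lia)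
  obtain ⟨P, hP⟩ := exists_finpartition_parts_eq_union P₁ P₂ h.disjoint h.union_eq
  refine ⟨P, fun C hC => ?_, ?_⟩
  · rw [hP, Finset.mem_union] at hC
    exact hC.elim (hP₁ C) (hP₂ C)
  have hle₁ : P₁.parts.card * (18 * k) ≤ ∑ F ∈ R₁, w F - 7 * k :=
    hcard₁.trans (max_le (by lia) (by lia))
  have hle₂ : P₂.parts.card * (18 * k) ≤ ∑ F ∈ R₂, w F - 7 * k :=
    hcard₂.trans (max_le (by lia) (by lia))
  calc P.parts.card * (18 * k) ≤ (P₁.parts.card + P₂.parts.card) * (18 * k) :=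
        Nat.mul_le_mul_right _ (hP ▸ Finset.card_union_le _ _)
    _ = P₁.parts.card * (18 * k) + P₂.parts.card * (18 * k) := add_mul _ _ _
    _ ≤ max (18 * k) (g.complexity k R - 14 * k) := le_max_of_le_right (by lia)

theorem exists_finpartition_of_le_card (hk : 2 ≤ k) (n : ℕ) : ∀ R : Finset Φ, R.card = n →
    g.IsDualConnected R → R.Nonempty → k * k ≤ 4 * R.card → ∃ P : Finpartition R,
      (∀ C ∈ P.parts, g.IsGoodRegion k C) ∧ (P.parts.card : ℝ) ≤ g.divisionBound k R := by
  induction n using Nat.strong_induction_on with | _ n ih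
  rintro R rfl hconn hne hcard
  by_cases hsmall : R.card ≤ k * k
  · obtain ⟨P, hP, hPcard⟩ :=
      exists_finpartition_of_card_le (by lia) _ R rfl hconn hne hsmall
    exact ⟨P, hP, natCast_le_divisionBound (by lia) hcard
      (hPcard.trans (max_le (by lia) (by lia)))⟩
  have hR : 4 ≤ R.card := by nlinarith
  have hsqrt : R.card ≤ ⌈√(R.card : ℝ)⌉₊ * ⌈√(R.card : ℝ)⌉₊ := by
    rw [← Nat.cast_le (α := ℝ), Nat.cast_mul]
    calc (R.card : ℝ) = √R.card * √R.card := (Real.mul_self_sqrt (Nat.cast_nonneg _)).symm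
      _ ≤ _ := mul_self_le_mul_self (Real.sqrt_nonneg _) (Nat.le_ceil _)
  obtain ⟨R₁, R₂, h, h₁, h₂⟩ := g.exists_balanced_separation hconn (by nlinarith) hsqrt
    (w := fun _ => 1) (by simp; lia) fun F _ => by simpa using hR
  simp only [Finset.sum_const, smul_eq_mul, mul_one] at h₁ h₂
  have hRcard := Finset.card_union_of_disjoint h.disjoint
  rw [h.union_eq] at hRcard
  obtain ⟨P₁, hP₁, hcard₁⟩ := ih _ (by lia) R₁ rfl h.conn_left h.nonempty_left (by lia)
  obtain ⟨P₂, hP₂, hcard₂⟩ := ih _ (by lia) R₂ rfl h.conn_right h.nonempty_right (by lia)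
  obtain ⟨P, hP⟩ := exists_finpartition_parts_eq_union P₁ P₂ h.disjoint h.union_eq
  refine ⟨P, fun C hC => ?_, ?_⟩
  · rw [hP, Finset.mem_union] at hC
    exact hC.elim (hP₁ C) (hP₂ C)
  calc (P.parts.card : ℝ) ≤ P₁.parts.card + P₂.parts.card := by
        rw [hP]
        exact_mod_cast Finset.card_union_le _ _
    _ ≤ g.divisionBound k R₁ + g.divisionBound k R₂ := add_le_add hcard₁ hcard₂
    _ ≤ g.divisionBound k R := divisionBound_add_le hk (by lia) h h₁ h₂

end Division

theorem isDualConnected_univ {V E Φ : Type*} [Fintype E] [Fintype Φ]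
    (g : PlaneTriangulation V E Φ) : g.IsDualConnected Finset.univ :=
  fun F _ F' _ => (g.dualConn_univ F F').mono fun _ _ =>
    mem_innerEdges.2 ⟨Finset.mem_univ _, Finset.mem_univ _⟩

theorem exists_division {V E Φ : Type*} [Fintype V] [Fintype E] [Fintype Φ] [Nonempty Φ]
    (g : PlaneTriangulation V E Φ) {k : ℕ} (hk : 2 ≤ k) :
    ∃ P : Finpartition (Finset.univ : Finset Φ), (∀ C ∈ P.parts, g.IsGoodRegion k C) ∧
      (P.parts.card : ℝ) ≤ 36 * Fintype.card V / k ^ 2 + 1 := by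
  by_cases hsmall : Fintype.card Φ ≤ k * k
  · refine ⟨.indiscrete Finset.univ_nonempty.ne_empty, ?_, ?_⟩
    · simpa using ⟨hsmall, by simp [complexity_univ]⟩
    · simpa using by positivity
  have : Nontrivial Φ := Fintype.one_lt_card_iff_nontrivial.1 (by nlinarith)
  obtain ⟨P, hP, hcard⟩ := exists_finpartition_of_le_card hk _ Finset.univ rfl
    g.isDualConnected_univ Finset.univ_nonempty (by rw [Finset.card_univ]; lia)
  refine ⟨P, hP, hcard.trans ?_⟩
  have hfaces : (Fintype.card Φ : ℝ) ≤ 2 * Fintype.card V := by exact_mod_cast g.card_faces_le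
  have hside : 0 ≤ √(Fintype.card Φ : ℝ) / k := by positivity
  have hmain : 18 * ((Fintype.card Φ : ℝ) / k ^ 2) ≤ 36 * Fintype.card V / k ^ 2 := by
    rw [← mul_div_assoc]
    gcongr ?_ / _
    linarith
  rw [divisionBound, complexity_univ, sq_sqrt_natCast_div, Finset.card_univ]
  simp only [Nat.cast_zero, zero_div, add_zero]
  linarith

end PlaneTriangulation

/-! ### Divisions of plane multigraphs -/

namespace PlaneMultigraph

open scoped Classical

section Pieces

variable {V E : Type*} (g : PlaneMultigraph V E)

/-- The vertices incident with an edge in `A`. -/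
def nodes (A : Set E) : Set V := {v | ∃ e ∈ A, e ∈ g.star v}

/-- A piece of a division with parameter `k`: an edge set with `O(k²)` nodes, `O(k)` of them shared
with the other edges, and `O(1)` holes. -/
structure IsGoodPiece (k : ℕ) (A : Set E) : Prop where
  ncard_nodes_le : (g.nodes A).ncard ≤ 3 * (k * k)
  ncard_boundary_le : (g.nodes A ∩ g.nodes Aᶜ).ncard ≤ 200 * k
  ncard_holes_le : (g.components A \ g.components Set.univ).ncard ≤ 100

variable {g} [Finite E]

theorem pos_mem_closure_left {e : E} {v : V} (he : e ∈ g.star v) :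
    g.pos v ∈ closure (g.left e : Set ℂ) := by
  rcases he with rfl | rfl
  · exact (isSide_left e).pos_src_mem_closure
  · exact (isSide_left e).pos_tgt_mem_closure

variable [Finite V] (g)

/-- The combinatorial data of a simple plane graph each of whose faces has at most three vertices on
its boundary. -/
noncomputable def toTriangulation (hsimple : Function.Injective fun e => s(g.src e, g.tgt e))
    (hface : ∀ F : g.Face, {v | g.pos v ∈ closure (F : Set ℂ)}.ncard ≤ 3) :
    PlaneTriangulation V E g.Face where
  src := g.src
  tgt := g.tgt
  left := g.left
  right := g.right
  src_ne_tgt := src_ne_tgt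
  eq_of_ends_eq _ _ h := hsimple h
  vert F := (Set.toFinite {v | g.pos v ∈ closure (F : Set ℂ)}).toFinset
  card_vert_le F := (Set.ncard_eq_toFinset_card _).symm.trans_le (hface F)
  src_mem_vert_left e := by simpa using (isSide_left e).pos_src_mem_closure
  src_mem_vert_right e := by simpa using (isSide_right e).pos_src_mem_closure
  tgt_mem_vert_left e := by simpa using (isSide_left e).pos_tgt_mem_closure
  tgt_mem_vert_right e := by simpa using (isSide_right e).pos_tgt_mem_closure
  dualConn_compl_insert_iff _ _ ht := dualConn_compl_insert_iff ht
  dualConn_univ := dualConn_univ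

theorem ncard_nodes_left_le (C : Finset g.Face)
    (hface : ∀ F : g.Face, {v | g.pos v ∈ closure (F : Set ℂ)}.ncard ≤ 3) :
    (g.nodes {e | g.left e ∈ C}).ncard ≤ C.card * 3 := by
  let vert (F : g.Face) : Finset V := (Set.toFinite {v | g.pos v ∈ closure (F : Set ℂ)}).toFinset
  have hsub : g.nodes {e | g.left e ∈ C} ⊆ C.biUnion vert := by
    rintro v ⟨e, he, hev⟩
    simpa [vert] using ⟨_, he, pos_mem_closure_left hev⟩
  calc (g.nodes {e | g.left e ∈ C}).ncard ≤ (C.biUnion vert).card := by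
        rw [← Set.ncard_coe_finset]
        exact Set.ncard_le_ncard hsub
    _ ≤ C.card * 3 := Finset.card_biUnion_le_card_mul _ _ _ fun F _ =>
        (Set.ncard_eq_toFinset_card _).symm.trans_le (hface F)

end Pieces

section GoodPieces

variable {V E : Type*} [Finite V] [Fintype E] {g : PlaneMultigraph V E}
  {hsimple : Function.Injective fun e => s(g.src e, g.tgt e)}
  {hface : ∀ F : g.Face, {v | g.pos v ∈ closure (F : Set ℂ)}.ncard ≤ 3} {C : Finset g.Face} {k : ℕ}

-- Turning around a boundary node from an edge of the piece to another one crosses `∂C`.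
theorem exists_boundaryEdge_mem_star {v : V} (hC : v ∈ g.nodes {e | g.left e ∈ C})
    (hC' : v ∈ g.nodes {e | g.left e ∈ C}ᶜ) :
    ∃ e ∈ (g.toTriangulation hsimple hface).boundaryEdges C, e ∈ g.star v := by
  obtain ⟨e, he, hev⟩ := hC
  obtain ⟨e', he', hev'⟩ := hC'
  by_contra! hno
  have hconn : g.DualConn (g.star v) (g.left e) (g.left e') :=
    dualConn_star (pos_mem_closure_left hev) (pos_mem_closure_left hev')
  refine he' ((hconn.iff_of_forall_edge (P := (· ∈ C)) fun f hf => ?_).1 he)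
  by_contra hcross
  exact hno f (PlaneTriangulation.mem_boundaryEdges.2 hcross) hf

theorem ncard_nodes_inter_nodes_compl_le :
    (g.nodes {e | g.left e ∈ C} ∩ g.nodes {e | g.left e ∈ C}ᶜ).ncard ≤
      2 * ((g.toTriangulation hsimple hface).boundaryEdges C).card := by
  set B := (g.toTriangulation hsimple hface).boundaryEdges C
  have hsub : g.nodes {e | g.left e ∈ C} ∩ g.nodes {e | g.left e ∈ C}ᶜ ⊆
      (B.image g.src ∪ B.image g.tgt : Finset V) := by
    rintro v ⟨hC, hC'⟩
    obtain ⟨e, he, rfl | rfl⟩ :=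
      exists_boundaryEdge_mem_star (hsimple := hsimple) (hface := hface) hC hC'
    · exact Finset.mem_union_left _ (Finset.mem_image_of_mem _ he)
    · exact Finset.mem_union_right _ (Finset.mem_image_of_mem _ he)
  calc _ ≤ (B.image g.src ∪ B.image g.tgt).card := by
        rw [← Set.ncard_coe_finset]
        exact Set.ncard_le_ncard hsub
    _ ≤ B.card + B.card := (Finset.card_union_le _ _).trans
        (add_le_add Finset.card_image_le Finset.card_image_le)
    _ = 2 * B.card := (two_mul _).symm

theorem isGoodPiece_of_isGoodRegion [Fintype g.Face] (hk : 0 < k)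
    (hC : (g.toTriangulation hsimple hface).IsGoodRegion k C) :
    g.IsGoodPiece k {e | g.left e ∈ C} := by
  set c := g.toTriangulation hsimple hface
  have hcomplexity : (c.boundaryEdges C).card + k * (c.holes C).card ≤ 100 * k := hC.complexity_le
  refine ⟨(g.ncard_nodes_left_le C hface).trans (by have := hC.card_le; lia),
    ncard_nodes_inter_nodes_compl_le.trans (by lia : 2 * (c.boundaryEdges C).card ≤ 200 * k), ?_⟩
  have hholes : (c.holes C).card ≤ 100 :=
    Nat.le_of_mul_le_mul_left (by lia : k * (c.holes C).card ≤ k * 100) hk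
  refine (ncard_components_sdiff_le (C := {F | F ∈ C}) fun F hF => ?_).trans hholes
  obtain ⟨G, hG, hFG⟩ := PlaneTriangulation.exists_mem_holes (g := c) hF
  refine ⟨G, hG, hFG.mono fun e he => ?_⟩
  obtain ⟨hl, hr⟩ := PlaneTriangulation.mem_innerEdges.1 (Finset.mem_coe.1 he)
  exact ⟨Finset.mem_compl.1 hl, Finset.mem_compl.1 hr⟩

end GoodPieces

theorem exists_division {V E : Type*} [Fintype V] [Finite E] (g : PlaneMultigraph V E)
    (hsimple : Function.Injective fun e => s(g.src e, g.tgt e))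
    (hface : ∀ F : g.Face, {v | g.pos v ∈ closure (F : Set ℂ)}.ncard ≤ 3) {k : ℕ} (hk : 2 ≤ k) :
    ∃ (m : ℕ) (c : E → Fin m), (m : ℝ) ≤ 36 * Fintype.card V / k ^ 2 + 1 ∧
      ∀ i, g.IsGoodPiece k (c ⁻¹' {i}) := by
  have := Fintype.ofFinite E
  have := Fintype.ofFinite g.Face
  obtain ⟨P, hP, hcard⟩ := (g.toTriangulation hsimple hface).exists_division hk
  let piece (e : E) : P.parts := ⟨P.part (g.left e), P.part_mem.2 (Finset.mem_univ _)⟩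
  refine ⟨P.parts.card, P.parts.equivFin ∘ piece, hcard, fun i => ?_⟩
  obtain ⟨⟨C, hC⟩, rfl⟩ := P.parts.equivFin.surjective i
  have hpiece : P.parts.equivFin ∘ piece ⁻¹' {P.parts.equivFin ⟨C, hC⟩} = {e | g.left e ∈ C} := by
    ext e
    simp [piece, P.part_eq_iff_mem hC]
  rw [hpiece]
  exact isGoodPiece_of_isGoodRegion (by lia) (hP C hC)

end PlaneMultigraph

/-! ### Divisions of plane embeddings -/

theorem connectedComponentIn_eq_pathComponentIn {X : Type*} [TopologicalSpace X]
    [LocallyPathConnectedSpace X] {O : Set X} (hO : IsOpen O) {x : X} (hx : x ∈ O) :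
    connectedComponentIn O x = pathComponentIn O x := by
  refine Set.Subset.antisymm (fun y hy => ?_) ?_
  · have hpath : IsPathConnected (connectedComponentIn O x) :=
      hO.connectedComponentIn.isConnected_iff_isPathConnected.1
        (isConnected_connectedComponentIn_iff.2 hx)
    exact (hpath.joinedIn x (mem_connectedComponentIn hx) y hy).mono
      (connectedComponentIn_subset _ _)
  · have hconn := (isPathConnected_pathComponentIn hx).isConnected.isPreconnected
    exact hconn.subset_connectedComponentIn (JoinedIn.refl hx) pathComponentIn_subset

theorem card_le_ncard_of_forall_mem {X : Type*} [Finite X] {s : Finset X} {t : Set X}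
    (h : ∀ x ∈ s, x ∈ t) : s.card ≤ t.ncard := by
  rw [← Set.ncard_coe_finset]
  exact Set.ncard_le_ncard h

theorem exists_natCast_between_sqrt {r : ℝ} (hr : 1 ≤ r) :
    ∃ k : ℕ, 2 ≤ k ∧ √r ≤ k ∧ (k : ℝ) ≤ 3 * √r := by
  have hsqrt : 1 ≤ √r := Real.one_le_sqrt.2 hr
  have hceil := Nat.ceil_lt_add_one (Real.sqrt_nonneg r)
  have hpos : 0 < ⌈√r⌉₊ := Nat.ceil_pos.2 (by linarith)
  refine ⟨⌈√r⌉₊ + 1, by lia, ?_, ?_⟩ <;> push_cast <;> linarith [Nat.le_ceil (√r)]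

/-- The identification of the plane `ℝ × ℝ` of the embeddings with the plane `ℂ` of the
multigraphs. -/
noncomputable def planeHomeomorph : ℝ × ℝ ≃ₜ ℂ := Complex.equivRealProdCLM.symm.toHomeomorph

namespace PlaneEmbedding

open Set

open scoped Classical

variable {V : Type} {A : V → V → Prop} (emb : PlaneEmbedding A)

theorem image_arc_swap {u v : V} (h : A u v) :
    emb.arc v u '' Icc 0 1 = emb.arc u v '' Icc 0 1 := by
  have hsymm : emb.arc v u = emb.arc u v ∘ fun t => 1 - t := funext (emb.arc_symm u v h)
  rw [hsymm, image_comp, image_const_sub_Icc, sub_self, sub_zero]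

variable (hA : Std.Symm A)

theorem rel_out (e : Sym2.fromRel hA) : A e.1.out.1 e.1.out.2 := by
  rw [← Sym2.fromRel_prop (sym := hA), Sym2.mk, e.1.out_eq]
  exact e.2

/-- The plane multigraph in `ℂ` with one edge for each bundled pair of opposite directed edges. -/
noncomputable def toPlaneMultigraph : PlaneMultigraph V (Sym2.fromRel hA) where
  pos := planeHomeomorph ∘ emb.pos
  src e := e.1.out.1
  tgt e := e.1.out.2
  arc e := planeHomeomorph ∘ emb.arc e.1.out.1 e.1.out.2
  pos_injective := planeHomeomorph.injective.comp emb.pos_inj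
  continuousOn_arc e :=
    planeHomeomorph.continuous.comp_continuousOn (emb.arc_cont _ _ (rel_out hA e))
  injOn_arc e := planeHomeomorph.injective.comp_injOn (emb.arc_inj _ _ (rel_out hA e))
  arc_zero e := congrArg planeHomeomorph (emb.arc_start _ _ (rel_out hA e))
  arc_one e := congrArg planeHomeomorph (emb.arc_end _ _ (rel_out hA e))
  eq_of_pos_mem e v h := by
    rw [image_comp, Function.comp_apply, planeHomeomorph.injective.mem_set_image] at h
    exact emb.arc_avoid _ _ (rel_out hA e) v h
  exists_eq_pos e e' hne z hz hz' := by
    rw [image_comp] at hz hz'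
    obtain ⟨y, hy, rfl⟩ := hz
    rw [planeHomeomorph.injective.mem_set_image] at hz'
    have hends : ({e.1.out.1, e.1.out.2} : Set V) ≠ {e'.1.out.1, e'.1.out.2} := fun h => hne <| by
      rw [Set.pair_eq_pair_iff, ← Sym2.eq_iff, Sym2.mk, Sym2.mk, e.1.out_eq, e'.1.out_eq] at h
      exact Subtype.ext h
    obtain ⟨h, h'⟩ := emb.arc_meet _ _ _ _ (rel_out hA e) (rel_out hA e') hends ⟨hy, hz'⟩
    rcases h with rfl | rfl
    · exact ⟨_, rfl, .inl rfl, by simpa [emb.pos_inj.eq_iff] using h'⟩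
    · exact ⟨_, rfl, .inr rfl, by simpa [emb.pos_inj.eq_iff] using h'⟩

/-- The directed edges represented by the undirected edges in `B`. -/
def darts (B : Set (Sym2.fromRel hA)) : Set (V × V) := {x | ∃ e ∈ B, s(x.1, x.2) = e}

variable {hA} {B : Set (Sym2.fromRel hA)}

theorem rel_of_mem_darts {x : V × V} (hx : x ∈ darts hA B) : A x.1 x.2 := by
  obtain ⟨e, -, he⟩ := hx
  exact (Sym2.fromRel_prop (sym := hA)).1 (he ▸ e.2)

theorem darts_univ : darts hA univ = {x | A x.1 x.2} := by
  ext x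
  exact ⟨rel_of_mem_darts, fun hx => ⟨⟨s(x.1, x.2), hx⟩, mem_univ _, rfl⟩⟩

theorem curve_toPlaneMultigraph {e : Sym2.fromRel hA} {u v : V} (h : s(u, v) = e) :
    (emb.toPlaneMultigraph hA).curve e = planeHomeomorph '' (emb.arc u v '' Icc 0 1) := by
  have hcurve : (emb.toPlaneMultigraph hA).curve e =
      planeHomeomorph '' (emb.arc e.1.out.1 e.1.out.2 '' Icc 0 1) := by
    rw [← image_comp]
    rfl
  have hout : s(e.1.out.1, e.1.out.2) = s(u, v) := e.1.out_eq.trans h.symm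
  rw [hcurve]
  rcases Sym2.eq_iff.1 hout with ⟨hu, hv⟩ | ⟨hv, hu⟩
  · rw [hu, hv]
  · rw [← emb.image_arc_swap (rel_out hA e), hu, hv]

theorem drawing_toPlaneMultigraph :
    (emb.toPlaneMultigraph hA).drawing B = planeHomeomorph '' emb.drawing (darts hA B) := by
  ext z
  simp only [PlaneMultigraph.mem_drawing, drawing, image_iUnion, mem_iUnion]
  constructor
  · rintro ⟨e, he, hz⟩
    have hout : s(e.1.out.1, e.1.out.2) = e := e.1.out_eq
    exact ⟨e.1.out, ⟨e, he, hout⟩, emb.curve_toPlaneMultigraph hout ▸ hz⟩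
  · rintro ⟨x, ⟨e, he, hx⟩, hz⟩
    exact ⟨e, he, emb.curve_toPlaneMultigraph hx ▸ hz⟩

theorem image_facesOfEdges_darts [Finite V] :
    image planeHomeomorph '' facesOfEdges emb (darts hA B) =
      (emb.toPlaneMultigraph hA).components B := by
  set g := emb.toPlaneMultigraph hA
  have hcomponent {x : ℝ × ℝ} (hx : x ∉ emb.drawing (darts hA B)) :
      planeHomeomorph '' connectedComponentIn (emb.drawing (darts hA B))ᶜ x =
        pathComponentIn (g.drawing B)ᶜ (planeHomeomorph x) := by
    rw [planeHomeomorph.image_connectedComponentIn hx, image_compl_eq planeHomeomorph.bijective,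
      ← emb.drawing_toPlaneMultigraph, connectedComponentIn_eq_pathComponentIn
        (g.isOpen_compl_drawing B)]
    rwa [mem_compl_iff, emb.drawing_toPlaneMultigraph, planeHomeomorph.injective.mem_set_image]
  ext Z
  constructor
  · rintro ⟨_, ⟨x, hx, rfl⟩, rfl⟩
    refine ⟨planeHomeomorph x, ?_, hcomponent hx⟩
    rwa [emb.drawing_toPlaneMultigraph, planeHomeomorph.injective.mem_set_image]
  · rintro ⟨z, hz, rfl⟩
    obtain ⟨x, rfl⟩ := planeHomeomorph.surjective z
    rw [emb.drawing_toPlaneMultigraph, planeHomeomorph.injective.mem_set_image] at hz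
    exact ⟨_, ⟨x, hz, rfl⟩, hcomponent hz⟩

theorem ncard_pos_mem_closure_face_le [Finite V] {n : ℕ}
    (hface : ∀ F, emb.IsFace F → {v | emb.pos v ∈ closure F}.ncard ≤ n)
    (F : (emb.toPlaneMultigraph hA).Face) :
    {v | (emb.toPlaneMultigraph hA).pos v ∈ closure (F : Set ℂ)}.ncard ≤ n := by
  have hF : (F : Set ℂ) ∈ image planeHomeomorph '' facesOfEdges emb (darts hA univ) :=
    emb.image_facesOfEdges_darts ▸ F.2
  obtain ⟨F', hF', hFF'⟩ := hF
  rw [darts_univ] at hF'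
  have hclosure (v : V) :
      (emb.toPlaneMultigraph hA).pos v ∈ closure (F : Set ℂ) ↔ emb.pos v ∈ closure F' := by
    rw [← hFF', ← planeHomeomorph.image_closure]
    exact planeHomeomorph.injective.mem_set_image
  simpa only [hclosure] using hface F' hF'

section Pieces

variable [Fintype V]

/-- The piece of a division consisting of the directed edges represented in `B`. -/
noncomputable def piece (B : Set (Sym2.fromRel hA)) : Finset (V × V) := (darts hA B).toFinset

theorem mem_piece {x : V × V} : x ∈ piece B ↔ x ∈ darts hA B := mem_toFinset

theorem ncard_holesOf_piece : (holesOf emb (piece B)).ncard =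
    ((emb.toPlaneMultigraph hA).components B \
      (emb.toPlaneMultigraph hA).components univ).ncard := by
  have hinj : Function.Injective (image planeHomeomorph) :=
    planeHomeomorph.injective.image_injective
  rw [holesOf, piece, coe_toFinset, ← darts_univ, ← ncard_image_of_injective _ hinj,
    image_sdiff hinj, emb.image_facesOfEdges_darts, emb.image_facesOfEdges_darts]

theorem mem_nodes_of_mem_nodesOf [DecidableEq V] {v : V} (hv : v ∈ nodesOf (piece B)) :
    v ∈ (emb.toPlaneMultigraph hA).nodes B := by
  obtain ⟨x, ⟨e, he, hxe⟩, hvx⟩ : ∃ x ∈ darts hA B, v = x.1 ∨ v = x.2 := by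
    rw [nodesOf, Finset.mem_union, Finset.mem_image, Finset.mem_image] at hv
    rcases hv with ⟨x, hx, rfl⟩ | ⟨x, hx, rfl⟩
    · exact ⟨x, mem_piece.1 hx, .inl rfl⟩
    · exact ⟨x, mem_piece.1 hx, .inr rfl⟩
  have hout : s(e.1.out.1, e.1.out.2) = s(x.1, x.2) := e.1.out_eq.trans hxe.symm
  have hmem : v ∈ s(e.1.out.1, e.1.out.2) := by rwa [hout, Sym2.mem_iff]
  exact ⟨e, he, (Sym2.mem_iff.1 hmem).imp Eq.symm Eq.symm⟩

variable {m : ℕ} {c : Sym2.fromRel hA → Fin m}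

/-- The pieces of the division whose classes of undirected edges are the fibres of `c`. -/
noncomputable def pieces (c : Sym2.fromRel hA → Fin m) : Finset (Finset (V × V)) :=
  Finset.univ.image fun i => piece (c ⁻¹' {i})

theorem mem_pieces {p : Finset (V × V)} : p ∈ pieces c ↔ ∃ i, piece (c ⁻¹' {i}) = p := by
  simp [pieces]

theorem card_pieces_le : (pieces c).card ≤ m :=
  Finset.card_image_le.trans_eq (Finset.card_fin m)

theorem existsUnique_mem_pieces {x : V × V} (hx : A x.1 x.2) : ∃! p, p ∈ pieces c ∧ x ∈ p := by
  let e : Sym2.fromRel hA := ⟨s(x.1, x.2), hx⟩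
  refine ⟨piece (c ⁻¹' {c e}), ⟨mem_pieces.2 ⟨_, rfl⟩, mem_piece.2 ⟨e, rfl, rfl⟩⟩, ?_⟩
  rintro p ⟨hp, hxp⟩
  obtain ⟨i, rfl⟩ := mem_pieces.1 hp
  obtain ⟨e', rfl, he'⟩ := mem_piece.1 hxp
  rw [show e = e' from Subtype.ext he']

theorem mem_nodes_inter_of_mem_boundaryOf [DecidableEq V] {i : Fin m} {v : V}
    (hv : v ∈ boundaryOf (pieces c) (piece (c ⁻¹' {i}))) :
    v ∈ (emb.toPlaneMultigraph hA).nodes (c ⁻¹' {i}) ∩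
      (emb.toPlaneMultigraph hA).nodes (c ⁻¹' {i})ᶜ := by
  obtain ⟨hv, q, hq, hne, hvq⟩ := Finset.mem_filter.1 hv
  obtain ⟨j, rfl⟩ := mem_pieces.1 hq
  obtain ⟨e, rfl, he⟩ := emb.mem_nodes_of_mem_nodesOf hvq
  exact ⟨emb.mem_nodes_of_mem_nodesOf hv, e, fun hi => hne (by rw [show c e = i from hi]), he⟩

end Pieces

theorem exists_division [Fintype V] [DecidableEq V] (hA : Std.Symm A)
    (hface : ∀ F, emb.IsFace F → {v | emb.pos v ∈ closure F}.ncard ≤ 3) {r : ℝ} (hr : 1 ≤ r) :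
    ∃ P : Finset (Finset (V × V)),
      (∀ p ∈ P, ∀ e ∈ p, A e.1 e.2) ∧
      (∀ p ∈ P, ∀ e : V × V, e ∈ p → (e.2, e.1) ∈ p) ∧
      (∀ e : V × V, A e.1 e.2 → ∃! p, p ∈ P ∧ e ∈ p) ∧
      (P.card : ℝ) ≤ 36 * (Fintype.card V / r) + 1 ∧
      ∀ p ∈ P, ((nodesOf p).card : ℝ) ≤ 27 * r ∧ ((boundaryOf P p).card : ℝ) ≤ 600 * √r ∧
        (holesOf emb p).ncard ≤ 100 := by
  obtain ⟨k, hk, hrk, hkr⟩ := exists_natCast_between_sqrt hr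
  have hsimple : Function.Injective fun e => s((emb.toPlaneMultigraph hA).src e,
      (emb.toPlaneMultigraph hA).tgt e) := fun e e' h =>
    Subtype.ext (e.1.out_eq.symm.trans (h.trans e'.1.out_eq))
  obtain ⟨m, c, hm, hc⟩ := (emb.toPlaneMultigraph hA).exists_division hsimple
    (emb.ncard_pos_mem_closure_face_le hface) hk
  have hsq : √r * √r = r := Real.mul_self_sqrt (by linarith)
  refine ⟨pieces c, ?_, ?_, fun x => existsUnique_mem_pieces, ?_, ?_⟩
  · rintro p hp x hx
    obtain ⟨i, rfl⟩ := mem_pieces.1 hp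
    exact rel_of_mem_darts (mem_piece.1 hx)
  · rintro p hp x hx
    obtain ⟨i, rfl⟩ := mem_pieces.1 hp
    obtain ⟨e, he, hxe⟩ := mem_piece.1 hx
    exact mem_piece.2 ⟨e, he, Sym2.eq_swap.trans hxe⟩
  · calc ((pieces c).card : ℝ) ≤ m := by exact_mod_cast card_pieces_le
      _ ≤ 36 * Fintype.card V / k ^ 2 + 1 := hm
      _ ≤ 36 * Fintype.card V / r + 1 := by
        gcongr
        nlinarith
      _ = 36 * (Fintype.card V / r) + 1 := by rw [mul_div_assoc]
  · rintro p hp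
    obtain ⟨i, rfl⟩ := mem_pieces.1 hp
    refine ⟨?_, ?_, emb.ncard_holesOf_piece.trans_le (hc i).ncard_holes_le⟩
    · have hnodes : ((nodesOf (piece (c ⁻¹' {i}))).card : ℝ) ≤ 3 * (k * k) := by
        exact_mod_cast (card_le_ncard_of_forall_mem
          fun v => emb.mem_nodes_of_mem_nodesOf).trans (hc i).ncard_nodes_le
      nlinarith
    · have hboundary : ((boundaryOf (pieces c) (piece (c ⁻¹' {i}))).card : ℝ) ≤ 200 * k := by
        exact_mod_cast (card_le_ncard_of_forall_mem
          fun v => emb.mem_nodes_inter_of_mem_boundaryOf).trans (hc i).ncard_boundary_le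
      linarith

end PlaneEmbedding

/-- There exists a universal constant `c` such that for
every real `r ≥ 1` and every `n`-node simple bidirected plane graph `G` in
which every face contains at most three nodes, `G` admits a division into at
most `c·(n/r + 1)` pieces (an edge-disjoint partition of `G` into bidirected
plane subgraphs) such that each piece has at most `c·r` nodes, at most
`c·√r` boundary nodes, and at most `c` holes. -/
theorem stmt14 :
    ∃ c : ℕ, 0 < c ∧
      ∀ (r : ℝ), 1 ≤ r →
      ∀ (n : ℕ) (G : WDigraph (Fin n)), G.Bidirected →
      ∀ emb : PlaneEmbedding G.Edge,
      (∀ F, emb.IsFace F → {v : Fin n | emb.pos v ∈ closure F}.ncard ≤ 3) →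
      ∃ P : Finset (Finset (Fin n × Fin n)),
        (∀ p ∈ P, ∀ e ∈ p, G.Edge e.1 e.2) ∧
        (∀ p ∈ P, ∀ e : Fin n × Fin n, e ∈ p → (e.2, e.1) ∈ p) ∧
        (∀ e : Fin n × Fin n, G.Edge e.1 e.2 → ∃! p, p ∈ P ∧ e ∈ p) ∧
        ((P.card : ℝ) ≤ c * ((n : ℝ) / r + 1)) ∧
        (∀ p ∈ P,
          ((nodesOf p).card : ℝ) ≤ c * r ∧
          ((boundaryOf P p).card : ℝ) ≤ c * Real.sqrt r ∧
          (holesOf emb p).ncard ≤ c) := by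
  refine ⟨600, by norm_num, fun r hr n G hG emb hface => ?_⟩
  obtain ⟨P, hedge, hswap, hunique, hcard, hpiece⟩ := emb.exists_division ⟨hG⟩ hface hr
  have hnr : 0 ≤ (n : ℝ) / r := by positivity
  refine ⟨P, hedge, hswap, hunique, ?_, fun p hp => ?_⟩
  · rw [Fintype.card_fin] at hcard
    push_cast
    linarith
  · obtain ⟨hnodes, hboundary, hholes⟩ := hpiece p hp
    exact ⟨by push_cast; linarith, by exact_mod_cast hboundary, by lia⟩
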